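/- Let S = ℝ^d with the Euclidean distance and let ρ be an exchangeable probability measure on (ℝ^d)^∞ with directing random measure p̃ and prior π (the law of p̃). Assume that for some δ > 0, some p ∈ [1,+∞) ∩ (d/2,+∞), and some r ∈ (2,3) satisfying p/d > 2 − 3/r and (2p+δ)(3/r − 1) > p, one has ∫ ( ∫_{ℝ^d} |x|^{2p+δ} 𝔭(dx) )^{3/r − 1} π(d𝔭) < +∞. Then, with b_n := (n/Log₂(n))^{1/(2p)}, p̂_n := ẽ_n, and Y_p(𝔭) := { (√2·K(p,d)/(1 − 2^{−(p − d/2)})) [ 1 + (2^p/(1 − 2^{−δ/2})) ( ∫_{ℝ^d} |x|^{2p+δ} 𝔭(dx) )^{1/2} ] }^{1/p} with K(p,d) := 2^{2p} d^{p/2} (2^p + 1)(2^p − 1)^{−2}: (i) ρ( limsup_{n→∞} b_n · d^{(p)}_{[[S]_p]}( π(ξ^(n)), δ_{ẽ_n} ) ≤ Y_p(p̃) ) = 1; and (ii) for every m ∈ ℕ, ρ( limsup_{n→∞} b_n · d^{(p)}_{[[S]_p]}( q_m(ξ^(n)), ẽ_n^∞ ∘ ẽ_{n,m}^{−1} ) ≤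 Y_p(p̃) ) = 1. -/

import Mathlib

open MeasureTheory ProbabilityTheory
open scoped ENNReal

noncomputable section

/-- `Log₂(x) = 1` for `x < e^e` and `Log₂(x) = log log x` for `x ≥ e^e`. -/
noncomputable def Log2 (x : ℝ) : ℝ :=
  if x < Real.exp (Real.exp 1) then 1 else Real.log (Real.log x)

/-- The Euclidean distance on `ℝ^d`. -/
noncomputable def eucDist {d : ℕ} (x y : Fin d → ℝ) : ℝ :=
  Real.sqrt (∑ i, (x i - y i) ^ 2)

/-- The Euclidean norm on `ℝ^d`. -/
noncomputable def eucNorm {d : ℕ} (x : Fin d → ℝ) : ℝ :=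
  Real.sqrt (∑ i, x i ^ 2)

/-- The `p`-Wasserstein-type distance associated with a cost function `c`. -/
noncomputable def wassW {X : Type*} [MeasurableSpace X] (c : X → X → ℝ) (p : ℝ)
    (μ ν : Measure X) : ℝ :=
  sInf {r : ℝ | ∃ γ : Measure (X × X), γ.map Prod.fst = μ ∧ γ.map Prod.snd = ν ∧
    r = (∫ z, c z.1 z.2 ^ p ∂γ) ^ (1 / p)}

/-- The empirical measure of the first `n` coordinates of a vector `v`. -/
noncomputable def empOf {d : ℕ} (n : ℕ) (v : Fin n → (Fin d → ℝ)) : Measure (Fin d → ℝ) :=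
  (n : ℝ≥0∞)⁻¹ • ∑ i, Measure.dirac (v i)

/-- The empirical measure `ẽ_{n,m}(ω) = (1/m) Σ_{i=1}^m δ_{ω_{i+n}}`. -/
noncomputable def empShift {d : ℕ} (n m : ℕ) (ω : ℕ → (Fin d → ℝ)) : Measure (Fin d → ℝ) :=
  (m : ℝ≥0∞)⁻¹ • ∑ i ∈ Finset.range m, Measure.dirac (ω (i + n))

/-- The constant `K(p,d) = 2^{2p} d^{p/2} (2^p + 1)(2^p - 1)^{-2}`. -/
noncomputable def Kpd (p : ℝ) (d : ℕ) : ℝ :=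
  (2 : ℝ) ^ (2 * p) * (d : ℝ) ^ (p / 2) * ((2 : ℝ) ^ p + 1) / ((2 : ℝ) ^ p - 1) ^ 2

/-- The constant `Y_p(𝔭)` of the nonparametric theorem. -/
noncomputable def YpNP (p δ : ℝ) (d : ℕ) (𝔭 : Measure (Fin d → ℝ)) : ℝ :=
  (Real.sqrt 2 * Kpd p d / (1 - 2 ^ (-(p - (d : ℝ) / 2)))
    * (1 + 2 ^ p / (1 - 2 ^ (-δ / 2))
      * ((∫⁻ x, ENNReal.ofReal (eucNorm x ^ (2 * p + δ)) ∂𝔭).toReal) ^ ((1 : ℝ) / 2)))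
    ^ (1 / p)

namespace BNM

theorem ratio_aux (a b : ℝ≥0∞) (hb : b ≠ ⊤) : min a b / (a * b) * b = min a b / a := by
  by_cases hb0 : b = 0
  · simp [hb0]
  by_cases ha0 : a = 0
  · simp [ha0]
  rw [ENNReal.div_eq_inv_mul, ENNReal.div_eq_inv_mul, ENNReal.mul_inv (Or.inl ha0) (Or.inr hb0)]
  calc a⁻¹ * b⁻¹ * min a b * b = a⁻¹ * min a b * (b⁻¹ * b) := by ring
    _ = _ := by rw [ENNReal.inv_mul_cancel hb0 hb, mul_one]

theorem ratio_sum (a b : ℝ≥0∞) (ha : a ≠ ⊤) (ha0 : a ≠ 0) : min a b / a + (a - b) / a = 1 := by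
  rw [← ENNReal.add_div]
  have : min a b + (a - b) = a := by
    rcases le_total a b with h | h
    · simp [min_eq_left h, tsub_eq_zero_of_le h]
    · rw [min_eq_right h, add_tsub_cancel_of_le h]
  rw [this, ENNReal.div_self ha0 ha]

variable {T E ι : Type*} [MeasurableSpace T] [MeasurableSpace E] [MeasurableSpace ι]
  [Countable ι] [MeasurableSingletonClass ι]

theorem ae_lab_ne_zero (lab : E → ι) (hlab : Measurable lab) (μ : Measure E) :
    ∀ᵐ x ∂μ, μ (lab ⁻¹' {lab x}) ≠ 0 := by
  have : ∀ i : ι, ∀ᵐ x ∂μ, lab x = i → μ (lab ⁻¹' {i}) ≠ 0 := by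
    intro i
    by_cases h : μ (lab ⁻¹' {i}) = 0
    · have : ∀ᵐ x ∂μ, x ∉ lab ⁻¹' {i} := measure_eq_zero_iff_ae_notMem.1 h
      filter_upwards [this] with x hx hxi
      exact absurd hxi hx
    · exact Filter.Eventually.of_forall fun x _ => h
  rw [← ae_all_iff] at this
  filter_upwards [this] with x hx
  exact hx _ rfl

open scoped Classical in
theorem marg_aux (lab : E → ι) (hlab : Measurable lab) (μ ν : Measure E) [IsFiniteMeasure μ]
    [IsFiniteMeasure ν] (x : E) :
    ∫⁻ y, (if lab x = lab y then min (μ (lab ⁻¹' {lab x})) (ν (lab ⁻¹' {lab x})) /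
      (μ (lab ⁻¹' {lab x}) * ν (lab ⁻¹' {lab x})) else 0) ∂ν
      = min (μ (lab ⁻¹' {lab x})) (ν (lab ⁻¹' {lab x})) / μ (lab ⁻¹' {lab x}) := by
  have h : ∀ y, (if lab x = lab y then min (μ (lab ⁻¹' {lab x})) (ν (lab ⁻¹' {lab x})) /
      (μ (lab ⁻¹' {lab x}) * ν (lab ⁻¹' {lab x})) else 0) =
      (lab ⁻¹' {lab x}).indicator (fun _ => min (μ (lab ⁻¹' {lab x})) (ν (lab ⁻¹' {lab x})) /
      (μ (lab ⁻¹' {lab x}) * ν (lab ⁻¹' {lab x}))) y := by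
    intro y
    simp only [Set.indicator, Set.mem_preimage, Set.mem_singleton_iff, eq_comm]
  simp_rw [h]
  rw [lintegral_indicator (hlab (measurableSet_singleton _)), setLIntegral_const]
  exact ratio_aux _ _ (measure_ne_top _ _)

open scoped Classical in
theorem step_coupling (lab : E → ι) (hlab : Measurable lab) (κ η : Kernel T E)
    [IsFiniteKernel κ] [IsFiniteKernel η] :
    ∃ (γ : Kernel T (E × E)) (κ' η' : Kernel T E), IsFiniteKernel κ' ∧ IsFiniteKernel η' ∧
      (∀ t, κ t = (γ t).map Prod.fst + κ' t) ∧ (∀ t, η t = (γ t).map Prod.snd + η' t) ∧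
      (∀ t, ∀ᵐ z ∂γ t, lab z.1 = lab z.2) ∧
      (∀ t i, κ' t (lab ⁻¹' {i}) = κ t (lab ⁻¹' {i}) - η t (lab ⁻¹' {i})) ∧
      (∀ t i, η' t (lab ⁻¹' {i}) = η t (lab ⁻¹' {i}) - κ t (lab ⁻¹' {i})) := by
  have hcell : ∀ i, MeasurableSet (lab ⁻¹' {i}) := fun i => hlab (measurableSet_singleton i)
  have hm : ∀ (ζ : Kernel T E), Measurable (fun p : T × E => ζ p.1 (lab ⁻¹' {lab p.2})) := by
    intro ζ
    have h1 : Measurable (fun p : T × ι => ζ p.1 (lab ⁻¹' {p.2})) :=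
      measurable_from_prod_countable_left fun i => ζ.measurable_coe (hcell i)
    exact h1.comp (measurable_fst.prodMk (hlab.comp measurable_snd))
  set f : T → E → ℝ≥0∞ := fun t x => (κ t (lab ⁻¹' {lab x}) - η t (lab ⁻¹' {lab x})) /
    κ t (lab ⁻¹' {lab x}) with hf
  set g : T → E → ℝ≥0∞ := fun t x => (η t (lab ⁻¹' {lab x}) - κ t (lab ⁻¹' {lab x})) /
    η t (lab ⁻¹' {lab x}) with hg
  set D : T → E × E → ℝ≥0∞ := fun t z => if lab z.1 = lab z.2 then
    min (κ t (lab ⁻¹' {lab z.1})) (η t (lab ⁻¹' {lab z.1})) /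
      (κ t (lab ⁻¹' {lab z.1}) * η t (lab ⁻¹' {lab z.1})) else 0 with hD
  have hfm : Measurable (Function.uncurry f) := ((hm κ).sub (hm η)).div (hm κ)
  have hgm : Measurable (Function.uncurry g) := ((hm η).sub (hm κ)).div (hm η)
  have hDm : Measurable (Function.uncurry D) := by
    have e : Measurable (fun p : T × (E × E) => (p.1, p.2.1)) :=
      measurable_fst.prodMk (measurable_fst.comp measurable_snd)
    refine Measurable.ite ?_ ((((hm κ).comp e).min ((hm η).comp e)).div
      (((hm κ).comp e).mul ((hm η).comp e))) measurable_const
    exact measurableSet_eq_fun (hlab.comp (measurable_fst.comp measurable_snd))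
      (hlab.comp (measurable_snd.comp measurable_snd))
  have hf1 : ∀ t x, f t x ≤ 1 := fun t x =>
    ENNReal.div_le_of_le_mul (by rw [one_mul]; exact tsub_le_self)
  have hg1 : ∀ t x, g t x ≤ 1 := fun t x =>
    ENNReal.div_le_of_le_mul (by rw [one_mul]; exact tsub_le_self)
  have hDt : ∀ t, Measurable (D t) := fun t => hDm.of_uncurry_left
  refine ⟨(κ ×ₖ η).withDensity D, κ.withDensity f, η.withDensity g,
    Kernel.isFiniteKernel_withDensity_of_bounded κ ENNReal.one_ne_top hf1,
    Kernel.isFiniteKernel_withDensity_of_bounded η ENNReal.one_ne_top hg1, ?_, ?_, ?_, ?_, ?_⟩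
  · intro t
    ext B hB
    rw [Measure.add_apply, Measure.map_apply measurable_fst hB,
      Kernel.withDensity_apply' _ hDm, Kernel.withDensity_apply' _ hfm, Kernel.prod_apply,
      ← lintegral_indicator (measurable_fst hB), lintegral_prod _
        ((hDt t).indicator (measurable_fst hB)).aemeasurable]
    have : ∀ x, ∫⁻ y, (Prod.fst ⁻¹' B).indicator (D t) (x, y) ∂(η t) =
        B.indicator (fun x => min (κ t (lab ⁻¹' {lab x})) (η t (lab ⁻¹' {lab x})) /
          κ t (lab ⁻¹' {lab x})) x := by
      intro x
      by_cases hx : x ∈ B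
      · rw [Set.indicator_of_mem hx, ← marg_aux lab hlab]
        refine lintegral_congr fun y => ?_
        rw [Set.indicator_of_mem (by simpa using hx)]
      · rw [Set.indicator_of_notMem hx]
        rw [← lintegral_zero (μ := η t)]
        refine lintegral_congr fun y => ?_
        rw [Set.indicator_of_notMem (by simpa using hx)]
    simp_rw [this]
    rw [lintegral_indicator hB, ← lintegral_add_right _ hfm.of_uncurry_left]
    rw [← setLIntegral_one]
    refine setLIntegral_congr_fun_ae hB ?_
    filter_upwards [ae_lab_ne_zero lab hlab (κ t)] with x hx _
    exact (ratio_sum _ _ (measure_ne_top _ _) hx).symm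
  · intro t
    ext B hB
    rw [Measure.add_apply, Measure.map_apply measurable_snd hB,
      Kernel.withDensity_apply' _ hDm, Kernel.withDensity_apply' _ hgm, Kernel.prod_apply,
      ← lintegral_indicator (measurable_snd hB), lintegral_prod_symm _
        ((hDt t).indicator (measurable_snd hB)).aemeasurable]
    have : ∀ y, ∫⁻ x, (Prod.snd ⁻¹' B).indicator (D t) (x, y) ∂(κ t) =
        B.indicator (fun y => min (η t (lab ⁻¹' {lab y})) (κ t (lab ⁻¹' {lab y})) /
          η t (lab ⁻¹' {lab y})) y := by
      intro y
      by_cases hx : y ∈ B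
      · rw [Set.indicator_of_mem hx, ← marg_aux lab hlab]
        refine lintegral_congr fun x => ?_
        rw [Set.indicator_of_mem (by simpa using hx)]
        simp only [hD]
        by_cases h : lab x = lab y
        · rw [if_pos h, if_pos h.symm, h, min_comm, mul_comm]
        · rw [if_neg h, if_neg (Ne.symm h)]
      · rw [Set.indicator_of_notMem hx]
        rw [← lintegral_zero (μ := κ t)]
        refine lintegral_congr fun y => ?_
        rw [Set.indicator_of_notMem (by simpa using hx)]
    simp_rw [this]
    rw [lintegral_indicator hB, ← lintegral_add_right _ hgm.of_uncurry_left]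
    rw [← setLIntegral_one]
    refine setLIntegral_congr_fun_ae hB ?_
    filter_upwards [ae_lab_ne_zero lab hlab (η t)] with x hx _
    exact (ratio_sum _ _ (measure_ne_top _ _) hx).symm
  · intro t
    rw [Kernel.withDensity_apply _ hDm, ae_withDensity_iff (hDt t)]
    refine Filter.Eventually.of_forall fun z hz => ?_
    by_contra h
    exact hz (if_neg h)
  · intro t i
    rw [Kernel.withDensity_apply' _ hfm]
    have : ∫⁻ x in lab ⁻¹' {i}, f t x ∂κ t = ∫⁻ x in lab ⁻¹' {i},
        (κ t (lab ⁻¹' {i}) - η t (lab ⁻¹' {i})) / κ t (lab ⁻¹' {i}) ∂κ t := by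
      refine setLIntegral_congr_fun (hcell i) fun x hx => ?_
      have hx' : lab x = i := hx
      simp only [hf, hx']
    rw [this, setLIntegral_const]
    by_cases h0 : κ t (lab ⁻¹' {i}) = 0
    · simp [h0]
    · exact ENNReal.div_mul_cancel h0 (measure_ne_top _ _)
  · intro t i
    rw [Kernel.withDensity_apply' _ hgm]
    have : ∫⁻ x in lab ⁻¹' {i}, g t x ∂η t = ∫⁻ x in lab ⁻¹' {i},
        (η t (lab ⁻¹' {i}) - κ t (lab ⁻¹' {i})) / η t (lab ⁻¹' {i}) ∂η t := by
      refine setLIntegral_congr_fun (hcell i) fun x hx => ?_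
      have hx' : lab x = i := hx
      simp only [hg, hx']
    rw [this, setLIntegral_const]
    by_cases h0 : η t (lab ⁻¹' {i}) = 0
    · simp [h0]
    · exact ENNReal.div_mul_cancel h0 (measure_ne_top _ _)

/-- the weighted discrepancy over the cells of `lab` -/
def disc (lab : E → ι) (w : ι → ℝ≥0∞) (μ ν : Measure E) : ℝ≥0∞ :=
  ∑' i, w i * ((μ (lab ⁻¹' {i}) - ν (lab ⁻¹' {i})) + (ν (lab ⁻¹' {i}) - μ (lab ⁻¹' {i})))

theorem lintegral_lab (lab : E → ι) (hlab : Measurable lab) (w : ι → ℝ≥0∞) (μ : Measure E) :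
    ∫⁻ x, w (lab x) ∂μ = ∑' i, w i * μ (lab ⁻¹' {i}) := by
  rw [← lintegral_map (μ := μ) (f := w) (Measurable.of_discrete) hlab, lintegral_countable']
  refine tsum_congr fun i => ?_
  rw [Measure.map_apply hlab (measurableSet_singleton i)]

theorem multi_coupling (lab : ℕ → E → ι) (hlab : ∀ l, Measurable (lab l)) (w : ι → ℝ≥0∞)
    (href : ∀ l x y, lab (l + 1) x = lab (l + 1) y → lab l x = lab l y)
    (W : E → ℝ≥0∞) (hW : ∀ l x, W x = w (lab l x))
    (c : E × E → ℝ≥0∞) (D : ℕ → ℝ≥0∞)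
    (hc : ∀ l x y, lab l x = lab l y → c (x, y) ≤ D l * W y) (L : ℕ) :
    ∀ (κ η : Kernel T E) [IsFiniteKernel κ] [IsFiniteKernel η],
    ∃ (γ : Kernel T (E × E)) (κ' η' : Kernel T E), IsFiniteKernel κ' ∧ IsFiniteKernel η' ∧
      (∀ t, κ t = (γ t).map Prod.fst + κ' t) ∧ (∀ t, η t = (γ t).map Prod.snd + η' t) ∧
      (∀ t i, κ' t (lab 0 ⁻¹' {i}) = κ t (lab 0 ⁻¹' {i}) - η t (lab 0 ⁻¹' {i})) ∧
      (∀ t i, η' t (lab 0 ⁻¹' {i}) = η t (lab 0 ⁻¹' {i}) - κ t (lab 0 ⁻¹' {i})) ∧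
      (∀ t, ∫⁻ z, c z ∂γ t ≤ ∑ l ∈ Finset.range L, D l * disc (lab (l + 1)) w (κ t) (η t) +
        D L * ∫⁻ y, W y ∂η t) := by
  have hWm : Measurable W := by
    have : W = fun x => w (lab 0 x) := funext (hW 0)
    rw [this]; exact (Measurable.of_discrete (f := w)).comp (hlab 0)
  have hcost : ∀ (l : ℕ) (γ : Measure (E × E)) (η η' : Measure E),
      η = γ.map Prod.snd + η' → (∀ᵐ z ∂γ, lab l z.1 = lab l z.2) →
      ∫⁻ z, c z ∂γ ≤ D l * ∫⁻ y, W y ∂η := by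
    intro l γ η η' h1 h2
    calc ∫⁻ z, c z ∂γ ≤ ∫⁻ z, D l * W z.2 ∂γ := by
          refine lintegral_mono_ae ?_
          filter_upwards [h2] with z hz
          exact hc l z.1 z.2 hz
      _ = D l * ∫⁻ y, W y ∂(γ.map Prod.snd) := by
          rw [lintegral_const_mul _ (by fun_prop : Measurable fun z : E × E => W z.2), lintegral_map hWm measurable_snd]
      _ ≤ _ := by
          gcongr
          rw [h1]; exact Measure.le_add_right le_rfl
  induction L with
  | zero =>
    intro κ η _ _
    obtain ⟨γ, κ', η', i1, i2, h1, h2, h3, h4, h5⟩ := step_coupling (lab 0) (hlab 0) κ η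
    refine ⟨γ, κ', η', i1, i2, h1, h2, h4, h5, fun t => ?_⟩
    simpa using hcost 0 _ _ _ (h2 t) (h3 t)
  | succ L ih =>
    intro κ η _ _
    obtain ⟨γ, κ₁, η₁, i1, i2, h1, h2, h3, h4, h5⟩ := step_coupling (lab (L + 1)) (hlab _) κ η
    obtain ⟨γ', κ', η', i1', i2', h1', h2', h4', h5', h6'⟩ := ih κ₁ η₁
    have hrefl : ∀ l, l ≤ L + 1 → ∀ x y, lab (L + 1) x = lab (L + 1) y → lab l x = lab l y := by
      intro l hl x y hxy
      have := Nat.decreasingInduction' (P := fun l => lab l x = lab l y) (m := l) (n := L + 1)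
        (fun k _ _ h => href k x y h) hl hxy
      exact this
    -- equal matched masses
    have hmass : ∀ l, l ≤ L + 1 → ∀ t i, ∃ a : ℝ≥0∞, a ≠ ⊤ ∧
        κ t (lab l ⁻¹' {i}) = a + κ₁ t (lab l ⁻¹' {i}) ∧
        η t (lab l ⁻¹' {i}) = a + η₁ t (lab l ⁻¹' {i}) := by
      intro l hl t i
      have hcl : MeasurableSet (lab l ⁻¹' {i}) := hlab l (measurableSet_singleton i)
      have e1 : κ t (lab l ⁻¹' {i}) = γ t (Prod.fst ⁻¹' (lab l ⁻¹' {i})) + κ₁ t (lab l ⁻¹' {i}) := by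
        conv_lhs => rw [h1 t]
        rw [Measure.add_apply, Measure.map_apply measurable_fst hcl]
      have e2 : η t (lab l ⁻¹' {i}) = γ t (Prod.snd ⁻¹' (lab l ⁻¹' {i})) + η₁ t (lab l ⁻¹' {i}) := by
        conv_lhs => rw [h2 t]
        rw [Measure.add_apply, Measure.map_apply measurable_snd hcl]
      have e3 : γ t (Prod.fst ⁻¹' (lab l ⁻¹' {i})) = γ t (Prod.snd ⁻¹' (lab l ⁻¹' {i})) := by
        refine measure_congr ?_
        filter_upwards [h3 t] with z hz
        have := hrefl l hl _ _ hz
        change (lab l z.1 = i) = (lab l z.2 = i)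
        rw [this]
      refine ⟨γ t (Prod.fst ⁻¹' (lab l ⁻¹' {i})), ?_, e1, e3 ▸ e2⟩
      have : γ t (Prod.fst ⁻¹' (lab l ⁻¹' {i})) ≤ κ t (lab l ⁻¹' {i}) := by
        rw [e1]; exact le_self_add
      exact ne_top_of_le_ne_top (measure_ne_top _ _) this
    have hsub : ∀ l, l ≤ L + 1 → ∀ t i,
        κ₁ t (lab l ⁻¹' {i}) - η₁ t (lab l ⁻¹' {i}) = κ t (lab l ⁻¹' {i}) - η t (lab l ⁻¹' {i}) ∧
        η₁ t (lab l ⁻¹' {i}) - κ₁ t (lab l ⁻¹' {i}) = η t (lab l ⁻¹' {i}) - κ t (lab l ⁻¹' {i}) := by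
      intro l hl t i
      obtain ⟨a, ha, e1, e2⟩ := hmass l hl t i
      rw [e1, e2, ENNReal.add_sub_add_eq_sub_left ha, ENNReal.add_sub_add_eq_sub_left ha]
      exact ⟨rfl, rfl⟩
    have hdisc : ∀ l, l ≤ L + 1 → ∀ t, disc (lab l) w (κ₁ t) (η₁ t) = disc (lab l) w (κ t) (η t) := by
      intro l hl t
      unfold disc
      refine tsum_congr fun i => ?_
      rw [(hsub l hl t i).1, (hsub l hl t i).2]
    refine ⟨γ + γ', κ', η', i1', i2', ?_, ?_, ?_, ?_, ?_⟩
    · intro t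
      rw [FunLike.coe_add, Pi.add_apply, Measure.map_add _ _ measurable_fst, add_assoc, ← h1' t]
      exact h1 t
    · intro t
      rw [FunLike.coe_add, Pi.add_apply, Measure.map_add _ _ measurable_snd, add_assoc, ← h2' t]
      exact h2 t
    · intro t i
      rw [h4', (hsub 0 (by omega) t i).1]
    · intro t i
      rw [h5', (hsub 0 (by omega) t i).2]
    · intro t
      rw [FunLike.coe_add, Pi.add_apply, lintegral_add_measure]
      have e1 := hcost (L + 1) _ _ _ (h2 t) (h3 t)
      have e2 := h6' t
      have e3 : ∫⁻ y, W y ∂η₁ t ≤ disc (lab (L + 1)) w (κ t) (η t) := by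
        rw [lintegral_congr (hW (L + 1)), lintegral_lab _ (hlab _)]
        unfold disc
        refine ENNReal.tsum_le_tsum fun i => ?_
        rw [h5]
        gcongr
        exact le_add_self
      rw [Finset.sum_range_succ]
      calc _ ≤ D (L + 1) * ∫⁻ y, W y ∂η t + (∑ l ∈ Finset.range L,
            D l * disc (lab (l + 1)) w (κ₁ t) (η₁ t) + D L * ∫⁻ y, W y ∂η₁ t) := add_le_add e1 e2
        _ ≤ D (L + 1) * ∫⁻ y, W y ∂η t + (∑ l ∈ Finset.range L,
            D l * disc (lab (l + 1)) w (κ t) (η t) + D L * disc (lab (L + 1)) w (κ t) (η t)) := by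
            refine add_le_add le_rfl (add_le_add (Finset.sum_le_sum fun l hl => ?_) ?_)
            · rw [hdisc (l + 1) (by simp at hl; omega)]
            · gcongr
        _ = _ := add_comm _ _

theorem full_coupling (lab : ℕ → E → ι) (hlab : ∀ l, Measurable (lab l)) (w : ι → ℝ≥0∞)
    (href : ∀ l x y, lab (l + 1) x = lab (l + 1) y → lab l x = lab l y)
    (W : E → ℝ≥0∞) (hW : ∀ l x, W x = w (lab l x))
    (c : E × E → ℝ≥0∞) (D : ℕ → ℝ≥0∞)
    (hc : ∀ l x y, lab l x = lab l y → c (x, y) ≤ D l * W y)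
    (A : ℝ≥0∞) (hA : ∀ x y, c (x, y) ≤ A * (W x + W y)) (L : ℕ)
    (κ η : Kernel T E) [IsMarkovKernel κ] [IsMarkovKernel η] :
    ∃ γ : Kernel T (E × E), (∀ t, (γ t).map Prod.fst = κ t) ∧ (∀ t, (γ t).map Prod.snd = η t) ∧
      (∀ t, ∫⁻ z, c z ∂γ t ≤ A * disc (lab 0) w (κ t) (η t) +
        ∑' l, D l * disc (lab (l + 1)) w (κ t) (η t) + D L * ∫⁻ y, W y ∂η t) := by
  have hWm : Measurable W := by
    have : W = fun x => w (lab 0 x) := funext (hW 0)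
    rw [this]; exact (Measurable.of_discrete (f := w)).comp (hlab 0)
  obtain ⟨γ, κ₁, η₁, i1, i2, h1, h2, h4, h5, h6⟩ :=
    multi_coupling (T := T) lab hlab w href W hW c D hc L κ η
  obtain ⟨γ', κ', η', i1', i2', h1', h2', h3', h4', h5'⟩ :=
    step_coupling (fun _ : E => ()) measurable_const κ₁ η₁
  have huniv : ∀ t, κ₁ t Set.univ = η₁ t Set.univ := by
    intro t
    have hg : (γ t).map Prod.fst Set.univ = (γ t).map Prod.snd Set.univ := by
      rw [Measure.map_apply measurable_fst MeasurableSet.univ,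
        Measure.map_apply measurable_snd MeasurableSet.univ]; rfl
    have e1 : κ t Set.univ = (γ t).map Prod.fst Set.univ + κ₁ t Set.univ := by
      conv_lhs => rw [h1 t]
      rfl
    have e2 : η t Set.univ = (γ t).map Prod.snd Set.univ + η₁ t Set.univ := by
      conv_lhs => rw [h2 t]
      rfl
    rw [measure_univ] at e1 e2
    have hne : (γ t).map Prod.fst Set.univ ≠ ⊤ := by
      refine ne_top_of_le_ne_top ENNReal.one_ne_top (b := 1) ?_
      rw [e1]; exact le_self_add
    rw [← hg, e1] at e2
    exact (ENNReal.add_right_inj hne).1 e2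
  have hz1 : ∀ t, κ' t = 0 := by
    intro t
    rw [← Measure.measure_univ_eq_zero]
    have := h4' t ()
    have hu : (fun _ : E => ()) ⁻¹' {()} = Set.univ := by ext; simp
    rw [hu] at this
    rw [this, huniv, tsub_self]
  have hz2 : ∀ t, η' t = 0 := by
    intro t
    rw [← Measure.measure_univ_eq_zero]
    have := h5' t ()
    have hu : (fun _ : E => ()) ⁻¹' {()} = Set.univ := by ext; simp
    rw [hu] at this
    rw [this, huniv, tsub_self]
  have m1 : ∀ t, κ₁ t = (γ' t).map Prod.fst := fun t => by
    conv_lhs => rw [h1' t, hz1, add_zero]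
  have m2 : ∀ t, η₁ t = (γ' t).map Prod.snd := fun t => by
    conv_lhs => rw [h2' t, hz2, add_zero]
  refine ⟨γ + γ', ?_, ?_, ?_⟩
  · intro t
    rw [FunLike.coe_add, Pi.add_apply, Measure.map_add _ _ measurable_fst, ← m1]
    exact (h1 t).symm
  · intro t
    rw [FunLike.coe_add, Pi.add_apply, Measure.map_add _ _ measurable_snd, ← m2]
    exact (h2 t).symm
  · intro t
    rw [FunLike.coe_add, Pi.add_apply, lintegral_add_measure]
    have e1 : ∫⁻ z, c z ∂γ' t ≤ A * disc (lab 0) w (κ t) (η t) := by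
      calc ∫⁻ z, c z ∂γ' t ≤ ∫⁻ z, A * (W z.1 + W z.2) ∂γ' t :=
            lintegral_mono fun z => hA z.1 z.2
        _ = A * (∫⁻ x, W x ∂κ₁ t + ∫⁻ y, W y ∂η₁ t) := by
            rw [lintegral_const_mul _ (by fun_prop : Measurable fun z : E × E => W z.1 + W z.2),
              lintegral_add_left (by fun_prop : Measurable fun z : E × E => W z.1), m1, m2,
              lintegral_map hWm measurable_fst, lintegral_map hWm measurable_snd]
        _ ≤ _ := by
            gcongr
            rw [lintegral_congr (hW 0), lintegral_lab _ (hlab _), lintegral_congr (hW 0),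
              lintegral_lab _ (hlab _), ← ENNReal.tsum_add]
            unfold disc
            refine le_of_eq (tsum_congr fun i => ?_)
            rw [h4, h5, mul_add]
    calc _ ≤ (∑ l ∈ Finset.range L, D l * disc (lab (l + 1)) w (κ t) (η t) +
          D L * ∫⁻ y, W y ∂η t) + A * disc (lab 0) w (κ t) (η t) := add_le_add (h6 t) e1
      _ ≤ (∑' l, D l * disc (lab (l + 1)) w (κ t) (η t) +
          D L * ∫⁻ y, W y ∂η t) + A * disc (lab 0) w (κ t) (η t) := by
          gcongr
          exact ENNReal.sum_le_tsum _
      _ = _ := by ring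

end BNM

namespace BNM

variable {d : ℕ}

theorem eucNorm_eq (x : Fin d → ℝ) : eucNorm x = ‖(WithLp.toLp 2 x : EuclideanSpace ℝ (Fin d))‖ := by
  rw [EuclideanSpace.norm_eq]; simp [eucNorm]

theorem eucDist_eq (x y : Fin d → ℝ) : eucDist x y =
    ‖(WithLp.toLp 2 x : EuclideanSpace ℝ (Fin d)) - WithLp.toLp 2 y‖ := by
  rw [EuclideanSpace.norm_eq]; simp [eucDist]

theorem eucNorm_nonneg (x : Fin d → ℝ) : 0 ≤ eucNorm x := Real.sqrt_nonneg _
theorem eucDist_nonneg (x y : Fin d → ℝ) : 0 ≤ eucDist x y := Real.sqrt_nonneg _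

theorem eucDist_le (x y : Fin d → ℝ) : eucDist x y ≤ eucNorm x + eucNorm y := by
  rw [eucDist_eq, eucNorm_eq, eucNorm_eq]; exact norm_sub_le _ _

theorem measurable_eucNorm : Measurable (eucNorm (d := d)) := by
  unfold eucNorm; fun_prop

theorem measurable_eucDist : Measurable (fun z : (Fin d → ℝ) × (Fin d → ℝ) => eucDist z.1 z.2) := by
  unfold eucDist; fun_prop

theorem abs_le_eucNorm (x : Fin d → ℝ) (i : Fin d) : |x i| ≤ eucNorm x := by
  unfold eucNorm
  rw [← Real.sqrt_sq_eq_abs]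
  exact Real.sqrt_le_sqrt (Finset.single_le_sum (f := fun i => x i ^ 2) (fun i _ => sq_nonneg _)
    (Finset.mem_univ i))

/-- dyadic shell index -/
def shell (x : Fin d → ℝ) : ℕ := Nat.clog 2 ⌈eucNorm x⌉₊

theorem measurable_shell : Measurable (shell (d := d)) :=
  (Measurable.of_discrete (f := Nat.clog 2)).comp (Nat.measurable_ceil.comp measurable_eucNorm)

theorem le_shell (x : Fin d → ℝ) : eucNorm x ≤ 2 ^ shell x := by
  have h1 : ⌈eucNorm x⌉₊ ≤ 2 ^ shell x := Nat.le_pow_clog (by norm_num) _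
  calc eucNorm x ≤ (⌈eucNorm x⌉₊ : ℝ) := Nat.le_ceil _
    _ ≤ ((2 ^ shell x : ℕ) : ℝ) := by exact_mod_cast h1
    _ = _ := by push_cast; rfl

theorem shell_lt (x : Fin d → ℝ) (k : ℕ) (h : shell x = k + 1) : 2 ^ k < eucNorm x := by
  have h1 : k < Nat.clog 2 ⌈eucNorm x⌉₊ := by unfold shell at h; omega
  rw [Nat.lt_clog_iff_pow_lt (by norm_num), Nat.lt_ceil] at h1
  exact_mod_cast h1

/-- the label type -/
abbrev Lab (d : ℕ) := ℕ × (Fin d → ℤ)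

def lab (l : ℕ) (x : Fin d → ℝ) : Lab d := (shell x, fun i => ⌊2 ^ l * x i / 2 ^ shell x⌋)

theorem measurable_lab (l : ℕ) : Measurable (lab (d := d) l) := by
  unfold lab
  refine measurable_shell.prodMk (measurable_pi_lambda _ fun i => Int.measurable_floor.comp ?_)
  have : Measurable fun x : Fin d → ℝ => (2 : ℝ) ^ shell x :=
    (Measurable.of_discrete (f := fun k : ℕ => (2 : ℝ) ^ k)).comp measurable_shell
  fun_prop

theorem floor_half (a b : ℝ) (h : ⌊2 * a⌋ = ⌊2 * b⌋) : ⌊a⌋ = ⌊b⌋ := by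
  have key : ∀ a : ℝ, 2 * ⌊a⌋ ≤ ⌊2 * a⌋ ∧ ⌊2 * a⌋ < 2 * ⌊a⌋ + 2 := by
    intro a
    constructor
    · rw [Int.le_floor]; push_cast; linarith [Int.floor_le a]
    · rw [Int.floor_lt]; push_cast; linarith [Int.lt_floor_add_one a]
  have h1 := key a; have h2 := key b
  omega

theorem lab_ref (l : ℕ) (x y : Fin d → ℝ) (h : lab (l + 1) x = lab (l + 1) y) : lab l x = lab l y := by
  simp only [lab, Prod.mk.injEq] at h ⊢
  refine ⟨h.1, funext fun i => floor_half _ _ ?_⟩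
  have := congrFun h.2 i
  rw [← mul_div_assoc, ← mul_assoc, ← mul_div_assoc, ← mul_assoc]
  rwa [pow_succ'] at this

def wt (p : ℝ) (k : ℕ) : ℝ := (2 : ℝ) ^ (p * k)
def lw (p : ℝ) (i : Lab d) : ℝ≥0∞ := ENNReal.ofReal (wt p i.1)
def cW (p : ℝ) (x : Fin d → ℝ) : ℝ≥0∞ := ENNReal.ofReal (wt p (shell x))
def cost (p : ℝ) (z : (Fin d → ℝ) × (Fin d → ℝ)) : ℝ≥0∞ := ENNReal.ofReal (eucDist z.1 z.2 ^ p)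
def Dr (p : ℝ) (d : ℕ) (l : ℕ) : ℝ := (d : ℝ) ^ (p / 2) * (2 : ℝ) ^ (-(p * l))
def Dl (p : ℝ) (d : ℕ) (l : ℕ) : ℝ≥0∞ := ENNReal.ofReal (Dr p d l)

theorem wt_eq (p : ℝ) (k : ℕ) : wt p k = ((2 : ℝ) ^ k) ^ p := by
  rw [wt, ← Real.rpow_natCast, ← Real.rpow_mul (by norm_num), mul_comm]

theorem wt_pos (p : ℝ) (k : ℕ) : 0 < wt p k := Real.rpow_pos_of_pos (by norm_num) _

theorem dist_of_lab (l : ℕ) (x y : Fin d → ℝ) (h : lab l x = lab l y) :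
    eucDist x y ≤ Real.sqrt d * (2 ^ shell y / 2 ^ l) := by
  simp only [lab, Prod.mk.injEq] at h
  obtain ⟨h1, h2⟩ := h
  rw [h1] at h2
  set s : ℝ := 2 ^ shell y / 2 ^ l with hs
  have hs0 : 0 < s := by positivity
  have hi : ∀ i, (x i - y i) ^ 2 ≤ s ^ 2 := by
    intro i
    have h3 := Int.abs_sub_lt_one_of_floor_eq_floor (congrFun h2 i)
    have h4 : 2 ^ l * x i / 2 ^ shell y - 2 ^ l * y i / 2 ^ shell y = (x i - y i) / s := by
      rw [hs]; field_simp
    rw [h4, abs_div, abs_of_pos hs0, div_lt_one hs0] at h3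
    rw [← sq_abs (x i - y i)]
    exact pow_le_pow_left₀ (abs_nonneg _) h3.le 2
  unfold eucDist
  calc Real.sqrt (∑ i, (x i - y i) ^ 2) ≤ Real.sqrt (∑ i : Fin d, s ^ 2) :=
        Real.sqrt_le_sqrt (Finset.sum_le_sum fun i _ => hi i)
    _ = _ := by
        rw [Finset.sum_const, Finset.card_univ, Fintype.card_fin, nsmul_eq_mul,
          Real.sqrt_mul (by positivity), Real.sqrt_sq hs0.le]

theorem cost_lab (p : ℝ) (hp : 0 ≤ p) (l : ℕ) (x y : Fin d → ℝ) (h : lab l x = lab l y) :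
    cost p (x, y) ≤ Dl p d l * cW p y := by
  unfold cost Dl cW
  rw [← ENNReal.ofReal_mul (by unfold Dr; positivity)]
  refine ENNReal.ofReal_le_ofReal ?_
  calc eucDist x y ^ p ≤ (Real.sqrt d * (2 ^ shell y / 2 ^ l)) ^ p :=
        Real.rpow_le_rpow (eucDist_nonneg _ _) (dist_of_lab l x y h) hp
    _ = _ := by
        rw [Real.mul_rpow (by positivity) (by positivity), Real.div_rpow (by positivity)
          (by positivity), ← wt_eq, ← wt_eq, Dr, Real.sqrt_eq_rpow, ← Real.rpow_mul (by positivity),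
          Real.rpow_neg (by norm_num), ← wt]
        rw [show 1 / 2 * p = p / 2 by ring]
        field_simp

theorem add_rpow_le_two (a b : ℝ) (ha : 0 ≤ a) (hb : 0 ≤ b) (p : ℝ) (hp : 1 ≤ p) :
    (a + b) ^ p ≤ 2 ^ (p - 1) * (a ^ p + b ^ p) := by
  have := NNReal.rpow_add_le_mul_rpow_add_rpow ⟨a, ha⟩ ⟨b, hb⟩ hp
  exact_mod_cast this

theorem cost_A (p : ℝ) (hp : 1 ≤ p) (x y : Fin d → ℝ) :
    cost p (x, y) ≤ ENNReal.ofReal (2 ^ (p - 1)) * (cW p x + cW p y) := by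
  unfold cost cW
  rw [← ENNReal.ofReal_add (wt_pos _ _).le (wt_pos _ _).le, ← ENNReal.ofReal_mul (by positivity)]
  refine ENNReal.ofReal_le_ofReal ?_
  have h0 := eucNorm_nonneg x
  have h0' := eucNorm_nonneg y
  calc eucDist x y ^ p ≤ (eucNorm x + eucNorm y) ^ p :=
        Real.rpow_le_rpow (eucDist_nonneg _ _) (eucDist_le x y) (by linarith)
    _ ≤ (2 ^ shell x + 2 ^ shell y) ^ p :=
        Real.rpow_le_rpow (by positivity) (add_le_add (le_shell x) (le_shell y)) (by linarith)
    _ ≤ 2 ^ (p - 1) * (((2:ℝ) ^ shell x) ^ p + ((2:ℝ) ^ shell y) ^ p) :=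
        add_rpow_le_two _ _ (by positivity) (by positivity) p hp
    _ = _ := by rw [wt_eq, wt_eq]

/-- cells at level `l` in shell `k` -/
def cells (d l k : ℕ) : Finset (Lab d) :=
  (Fintype.piFinset fun _ : Fin d => Finset.Icc (-(2 : ℤ) ^ l) (2 ^ l)).map
    ⟨fun z => (k, z), fun a b h => by simpa using h⟩

theorem lab_mem_cells (l : ℕ) (x : Fin d → ℝ) : lab l x ∈ cells d l (shell x) := by
  simp only [cells, lab, Finset.mem_map, Fintype.mem_piFinset, Finset.mem_Icc]
  refine ⟨_, fun i => ?_, rfl⟩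
  have h1 : |x i| ≤ 2 ^ shell x := (abs_le_eucNorm x i).trans (le_shell x)
  have h2 := abs_le.1 h1
  have hpos : (0 : ℝ) < 2 ^ shell x := by positivity
  have hl : (0 : ℝ) < 2 ^ l := by positivity
  constructor
  · rw [Int.le_floor, le_div_iff₀ hpos]
    push_cast
    nlinarith [h2.1]
  · have : (⌊2 ^ l * x i / 2 ^ shell x⌋ : ℝ) ≤ ((2 ^ l : ℤ) : ℝ) := by
      refine (Int.floor_le _).trans ?_
      rw [div_le_iff₀ hpos]; push_cast; nlinarith [h2.2]
    exact_mod_cast this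

theorem card_cells (d l k : ℕ) : (cells d l k).card ≤ (3 * 2 ^ l) ^ d := by
  simp only [cells, Finset.card_map, Fintype.card_piFinset, Int.card_Icc, Finset.prod_const,
    Finset.card_univ, Fintype.card_fin]
  refine Nat.pow_le_pow_left ?_ d
  have : (1 : ℤ) ≤ 2 ^ l := one_le_pow₀ (by norm_num)
  have h2 : (2 ^ l + 1 - -2 ^ l : ℤ).toNat = 2 * 2 ^ l + 1 := by
    have : (2 ^ l + 1 - -2 ^ l : ℤ) = ((2 * 2 ^ l + 1 : ℕ) : ℤ) := by push_cast; ring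
    rw [this]; rfl
  rw [h2]
  have : 1 ≤ 2 ^ l := Nat.one_le_two_pow
  omega

/-- the cell with label `i` -/
def cell (l : ℕ) (i : Lab d) : Set (Fin d → ℝ) := lab l ⁻¹' {i}

theorem measurableSet_cell (l : ℕ) (i : Lab d) : MeasurableSet (cell l i) :=
  measurable_lab l (measurableSet_singleton i)

def sh (d k : ℕ) : Set (Fin d → ℝ) := shell ⁻¹' {k}

theorem measurableSet_sh (k : ℕ) : MeasurableSet (sh d k) :=
  measurable_shell (measurableSet_singleton k)

theorem cell_subset_sh (l k : ℕ) (i : Lab d) (hi : i ∈ cells d l k) : cell l i ⊆ sh d k := by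
  intro x hx
  have hx' : lab l x = i := hx
  simp only [cells, Finset.mem_map] at hi
  obtain ⟨z, _, rfl⟩ := hi
  exact congrArg Prod.fst hx'

theorem cell_empty (l k : ℕ) (z : Fin d → ℤ) (hi : (k, z) ∉ cells d l k) : cell l (k, z) = ∅ := by
  rw [Set.eq_empty_iff_forall_notMem]
  intro x hx
  have hx' : lab l x = (k, z) := hx
  have := lab_mem_cells l x
  rw [hx'] at this
  have e : shell x = k := congrArg Prod.fst hx'
  rw [e] at this
  exact hi this

theorem sum_cells (l k : ℕ) (μ : Measure (Fin d → ℝ)) :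
    ∑ i ∈ cells d l k, μ (cell l i) ≤ μ (sh d k) := by
  rw [← measure_biUnion_finset]
  · exact measure_mono (Set.iUnion₂_subset fun i hi => cell_subset_sh l k i hi)
  · intro i _ j _ hij
    refine Set.disjoint_left.2 fun x hx hy => hij ?_
    exact (show lab l x = i from hx).symm.trans hy
  · exact fun i _ => measurableSet_cell l i

/-- absolute difference of masses -/
def mdiff (μ ν : Measure (Fin d → ℝ)) (B : Set (Fin d → ℝ)) : ℝ≥0∞ := (μ B - ν B) + (ν B - μ B)

def Del (l k : ℕ) (μ ν : Measure (Fin d → ℝ)) : ℝ≥0∞ := ∑ i ∈ cells d l k, mdiff μ ν (cell l i)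

theorem disc_eq (p : ℝ) (l : ℕ) (μ ν : Measure (Fin d → ℝ)) :
    disc (lab l) (lw p) μ ν = ∑' k, ENNReal.ofReal (wt p k) * Del l k μ ν := by
  unfold disc
  rw [ENNReal.tsum_prod']
  refine tsum_congr fun k => ?_
  simp only [lw]
  rw [ENNReal.tsum_mul_left]
  congr 1
  unfold Del cells
  rw [Finset.sum_map]
  refine (tsum_eq_sum fun z hz => ?_)
  have : cell l (k, z) = ∅ := by
    refine cell_empty l k z fun h => hz ?_
    simp only [cells, Finset.mem_map] at h
    obtain ⟨a, ha, e⟩ := h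
    have e' : a = z := congrArg Prod.snd e
    rwa [e'] at ha
  rw [← cell, this]
  simp

/-- level coefficient -/
def coef (p : ℝ) (d : ℕ) : ℕ → ℝ
  | 0 => 2 ^ (p - 1)
  | l + 1 => Dr p d l

theorem coef_nonneg (p : ℝ) (d l : ℕ) : 0 ≤ coef p d l := by
  cases l <;> simp only [coef, Dr] <;> positivity

def Phi (p : ℝ) (μ ν : Measure (Fin d → ℝ)) : ℝ≥0∞ :=
  ∑' l, ∑' k, ENNReal.ofReal (coef p d l * wt p k) * Del l k μ ν

theorem Phi_eq (p : ℝ) (μ ν : Measure (Fin d → ℝ)) :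
    Phi p μ ν = ENNReal.ofReal (2 ^ (p - 1)) * disc (lab 0) (lw p) μ ν +
      ∑' l, Dl p d l * disc (lab (l + 1)) (lw p) μ ν := by
  have h : ∀ l, ∑' k, ENNReal.ofReal (coef p d l * wt p k) * Del l k μ ν =
      ENNReal.ofReal (coef p d l) * disc (lab l) (lw p) μ ν := by
    intro l
    rw [disc_eq, ← ENNReal.tsum_mul_left]
    refine tsum_congr fun k => ?_
    rw [ENNReal.ofReal_mul (coef_nonneg _ _ _), mul_assoc]
  unfold Phi
  simp_rw [h]
  rw [tsum_eq_zero_add' ENNReal.summable]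
  rfl

theorem measurable_cost (p : ℝ) : Measurable (cost (d := d) p) := by
  unfold cost
  exact ENNReal.measurable_ofReal.comp (measurable_eucDist.pow_const p)

theorem measurable_cW (p : ℝ) : Measurable (cW (d := d) p) := by
  unfold cW
  exact (Measurable.of_discrete (f := fun k => ENNReal.ofReal (wt p k))).comp measurable_shell

theorem concrete_coupling {T : Type*} [MeasurableSpace T] (p : ℝ) (hp : 1 ≤ p) (L : ℕ)
    (κ η : Kernel T (Fin d → ℝ)) [IsMarkovKernel κ] [IsMarkovKernel η] :
    ∃ γ : Kernel T ((Fin d → ℝ) × (Fin d → ℝ)), (∀ t, (γ t).map Prod.fst = κ t) ∧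
      (∀ t, (γ t).map Prod.snd = η t) ∧
      (∀ t, ∫⁻ z, cost p z ∂γ t ≤ Phi p (κ t) (η t) + Dl p d L * ∫⁻ y, cW p y ∂η t) := by
  obtain ⟨γ, h1, h2, h3⟩ := full_coupling (T := T) (lab (d := d)) measurable_lab (lw p) lab_ref (cW p)
    (fun l x => rfl) (cost p) (Dl p d) (cost_lab p (by linarith)) _ (cost_A p hp) L κ η
  exact ⟨γ, h1, h2, fun t => by rw [Phi_eq]; exact h3 t⟩

theorem measurable_mdiff {T : Type*} [MeasurableSpace T] {f g : T → Measure (Fin d → ℝ)}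
    (hf : Measurable f) (hg : Measurable g) {B : Set (Fin d → ℝ)} (hB : MeasurableSet B) :
    Measurable fun t => mdiff (f t) (g t) B := by
  have h1 : Measurable fun t => f t B := (Measure.measurable_coe hB).comp hf
  have h2 : Measurable fun t => g t B := (Measure.measurable_coe hB).comp hg
  exact (h1.sub h2).add (h2.sub h1)

theorem measurable_Del {T : Type*} [MeasurableSpace T] {f g : T → Measure (Fin d → ℝ)}
    (hf : Measurable f) (hg : Measurable g) (l k : ℕ) :
    Measurable fun t => Del l k (f t) (g t) := by
  unfold Del
  exact Finset.measurable_sum _ fun i _ => measurable_mdiff hf hg (measurableSet_cell l i)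

theorem measurable_Phi {T : Type*} [MeasurableSpace T] (p : ℝ) {f g : T → Measure (Fin d → ℝ)}
    (hf : Measurable f) (hg : Measurable g) :
    Measurable fun t => Phi p (f t) (g t) := by
  unfold Phi
  exact Measurable.tsum fun l => Measurable.tsum fun k =>
    (measurable_Del hf hg l k).const_mul _

theorem mdiff_eq (μ ν : Measure (Fin d → ℝ)) [IsFiniteMeasure μ] [IsFiniteMeasure ν]
    (B : Set (Fin d → ℝ)) : mdiff μ ν B = ENNReal.ofReal |ν.real B - μ.real B| := by
  have h1 : μ B = ENNReal.ofReal (μ.real B) := (ofReal_measureReal).symm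
  have h2 : ν B = ENNReal.ofReal (ν.real B) := (ofReal_measureReal).symm
  unfold mdiff
  rw [h1, h2, ← ENNReal.ofReal_sub _ measureReal_nonneg, ← ENNReal.ofReal_sub _ measureReal_nonneg]
  rcases le_total (μ.real B) (ν.real B) with h | h
  · rw [ENNReal.ofReal_of_nonpos (by linarith : μ.real B - ν.real B ≤ 0), zero_add,
      abs_of_nonneg (by linarith)]
  · rw [ENNReal.ofReal_of_nonpos (by linarith : ν.real B - μ.real B ≤ 0), add_zero,
      abs_of_nonpos (by linarith)]
    congr 1; ring

end BNM

namespace BNM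

section Prob

variable {E : Type*} [MeasurableSpace E]

/-- first `n` coordinates -/
def pre (n : ℕ) (ω : ℕ → E) : Fin n → E := fun i => ω i

theorem measurable_pre (n : ℕ) : Measurable (pre (E := E) n) := by unfold pre; fun_prop

variable (E) in
/-- filtration of the first `n` coordinates -/
def Filt : Filtration ℕ (inferInstance : MeasurableSpace (ℕ → E)) where
  seq n := MeasurableSpace.comap (pre n) inferInstance
  mono' := by
    intro m n hmn
    have : pre (E := E) m = (fun v : Fin n → E => fun i : Fin m => v ⟨i, by omega⟩) ∘ pre n := rfl
    change MeasurableSpace.comap _ _ ≤ MeasurableSpace.comap _ _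
    rw [this, ← MeasurableSpace.comap_comp]
    exact MeasurableSpace.comap_mono (Measurable.comap_le (by fun_prop))
  le' n := (measurable_pre n).comap_le

variable (𝔭 : Measure E) [IsProbabilityMeasure 𝔭]

abbrev Pinf : Measure (ℕ → E) := Measure.infinitePi (fun _ : ℕ => 𝔭)

theorem indep_pre (n : ℕ) : IndepFun (fun ω : ℕ → E => ω n) (pre n) (Pinf 𝔭) := by
  have h := (iIndepFun_infinitePi (P := fun _ : ℕ => 𝔭) (X := fun _ (x : E) => x)
    (fun _ => measurable_id)).indepFun_finset {n} (Finset.range n) (by simp)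
    (fun i => measurable_pi_apply i)
  exact h.comp (φ := fun v : ({n} : Finset ℕ) → E => v ⟨n, by simp⟩)
    (ψ := fun v : (Finset.range n) → E => fun i : Fin n => v ⟨i, by simp⟩) (by fun_prop) (by fun_prop)

def Mprod (g : E → ℝ) (n : ℕ) (ω : ℕ → E) : ℝ := ∏ i ∈ Finset.range n, g (ω i)

variable {𝔭} {g : E → ℝ} {K : ℝ}

theorem Mprod_meas_filt (hg : Measurable g) (n : ℕ) : Measurable[Filt E n] (Mprod g n) := by
  have : Mprod g n = (fun v : Fin n → E => ∏ i, g (v i)) ∘ pre n := by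
    ext ω; simp [Mprod, pre, Finset.prod_range]
  rw [this]
  have h : Measurable fun v : Fin n → E => ∏ i, g (v i) := by fun_prop
  exact h.comp (comap_measurable _)

theorem Mprod_meas (hg : Measurable g) (n : ℕ) : Measurable (Mprod g n) :=
  (Mprod_meas_filt hg n).mono ((Filt E).le n) le_rfl

theorem Mprod_int (hg : Measurable g) (hK : ∀ x, |g x| ≤ K) (n : ℕ) : Integrable (Mprod g n) (Pinf 𝔭) := by
  refine Integrable.of_bound (Mprod_meas hg n).aestronglyMeasurable (K ^ n)
    (Filter.Eventually.of_forall fun ω => ?_)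
  rw [Mprod, Real.norm_eq_abs, Finset.abs_prod]
  refine (Finset.prod_le_prod (fun _ _ => abs_nonneg _) (fun i _ => hK (ω i))).trans ?_
  simp

theorem integral_coord (hg : Measurable g) (n : ℕ) : ∫ ω, g (ω n) ∂(Pinf 𝔭) = ∫ x, g x ∂𝔭 := by
  have h := integral_map (μ := Pinf 𝔭) (φ := fun ω : ℕ → E => ω n)
    (measurable_pi_apply n).aemeasurable (f := g) hg.aestronglyMeasurable
  rw [← h, Measure.infinitePi_map_eval]

theorem Mprod_integral (hg : Measurable g) (n : ℕ) :
    ∫ ω, Mprod g n ω ∂(Pinf 𝔭) = (∫ x, g x ∂𝔭) ^ n := by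
  induction n with
  | zero => simp [Mprod]
  | succ n ih =>
    have h : IndepFun (fun ω : ℕ → E => g (ω n)) (Mprod g n) (Pinf 𝔭) := by
      have h1 := (indep_pre 𝔭 n).comp (φ := g) (ψ := fun v : Fin n → E => ∏ i, g (v i)) hg (by fun_prop)
      have e : Mprod g n = (fun v : Fin n → E => ∏ i, g (v i)) ∘ pre n := by
        ext ω; simp [Mprod, pre, Finset.prod_range]
      rw [e]; exact h1
    have h2 := h.integral_fun_mul_eq_mul_integral (hg.comp (measurable_pi_apply n)).aestronglyMeasurable
      (Mprod_meas hg n).aestronglyMeasurable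
    have : ∀ ω, Mprod g (n + 1) ω = g (ω n) * Mprod g n ω := fun ω => by
      rw [Mprod, Finset.prod_range_succ, mul_comm]; rfl
    simp_rw [this]
    rw [h2, ih, integral_coord hg, pow_succ, mul_comm]

theorem Mprod_sub (hg : Measurable g) (hK : ∀ x, |g x| ≤ K) (hg0 : ∀ x, 0 ≤ g x)
    (hg1 : 1 ≤ ∫ x, g x ∂𝔭) : Submartingale (Mprod g) (Filt E) (Pinf 𝔭) := by
  refine submartingale_nat (fun n => (Mprod_meas_filt hg n).stronglyMeasurable)
    (Mprod_int hg hK) fun n => ?_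
  have e : Mprod g (n + 1) = Mprod g n * fun ω => g (ω n) := by
    ext ω; rw [Mprod, Finset.prod_range_succ]; rfl
  have hgi : Integrable (fun ω : ℕ → E => g (ω n)) (Pinf 𝔭) :=
    Integrable.of_bound (hg.comp (measurable_pi_apply n)).aestronglyMeasurable K
      (Filter.Eventually.of_forall fun ω => hK _)
  have h1 : (Pinf 𝔭)[Mprod g (n + 1) | Filt E n] =ᵐ[Pinf 𝔭]
      Mprod g n * (Pinf 𝔭)[fun ω => g (ω n) | Filt E n] := by
    rw [e]
    refine condExp_mul_of_stronglyMeasurable_left (Mprod_meas_filt hg n).stronglyMeasurable ?_ hgi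
    rw [← e]; exact Mprod_int hg hK _
  have h2 : (Pinf 𝔭)[fun ω => g (ω n) | Filt E n] =ᵐ[Pinf 𝔭] fun _ => ∫ ω, g (ω n) ∂(Pinf 𝔭) := by
    refine condExp_indep_eq (m₁ := MeasurableSpace.comap (fun ω : ℕ → E => ω n) inferInstance)
      (measurable_pi_apply n).comap_le ((Filt E).le n) ?_ ?_
    · exact (hg.comp (comap_measurable _)).stronglyMeasurable
    · exact (IndepFun_iff_Indep _ _ _).1 (indep_pre 𝔭 n)
  filter_upwards [h1, h2] with ω h1 h2
  rw [h1, Pi.mul_apply, h2, integral_coord hg]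
  exact le_mul_of_one_le_right (Finset.prod_nonneg fun i _ => hg0 _) hg1

def Sn (𝔭 : Measure E) (f : E → ℝ) (n : ℕ) (ω : ℕ → E) : ℝ :=
  ∑ i ∈ Finset.range n, (f (ω i) - ∫ x, f x ∂𝔭)

variable {f : E → ℝ} {A : Set E}

theorem mgf_bound (hf : Measurable f) (hf1 : ∀ x, |f x| ≤ 1) (hA : MeasurableSet A)
    (hfA : ∀ x, x ∉ A → f x = 0) {t : ℝ} (ht0 : 0 ≤ t) (ht1 : t ≤ 1) :
    ∫ x, Real.exp (t * (f x - ∫ x, f x ∂𝔭)) ∂𝔭 ≤ Real.exp (3 / 4 * 𝔭.real A * t ^ 2) := by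
  have hfi : Integrable f 𝔭 := Integrable.of_bound hf.aestronglyMeasurable 1
    (Filter.Eventually.of_forall hf1)
  set m := ∫ x, f x ∂𝔭
  have hpt : ∀ x, Real.exp (t * f x) ≤ 1 + t * f x + A.indicator (fun _ => 3 / 4 * t ^ 2) x := by
    intro x
    by_cases hx : x ∈ A
    · rw [Set.indicator_of_mem hx]
      have hb : |t * f x| ≤ 1 := by
        rw [abs_mul, abs_of_nonneg ht0]
        exact mul_le_one₀ ht1 (abs_nonneg _) (hf1 x)
      have := (abs_le.1 (Real.exp_bound hb (n := 2) (by norm_num))).2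
      simp [Finset.sum_range_succ, Nat.factorial] at this
      have h3 : (t * f x) ^ 2 ≤ t ^ 2 := by
        rw [mul_pow]
        have : f x ^ 2 ≤ 1 := by rw [← sq_abs]; exact pow_le_one₀ (abs_nonneg _) (hf1 x)
        nlinarith [sq_nonneg t]
      rw [← abs_mul, sq_abs] at this
      linarith
    · rw [Set.indicator_of_notMem hx, hfA x hx]; simp
  have hi2 : Integrable (A.indicator (fun _ => 3 / 4 * t ^ 2) : E → ℝ) 𝔭 :=
    (integrable_const _).indicator hA
  have hexp : ∫ x, Real.exp (t * f x) ∂𝔭 ≤ 1 + t * m + 3 / 4 * t ^ 2 * 𝔭.real A := by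
    calc _ ≤ ∫ x, (1 + t * f x + A.indicator (fun _ => 3 / 4 * t ^ 2) x) ∂𝔭 := by
          refine integral_mono_of_nonneg (Filter.Eventually.of_forall fun x => (Real.exp_pos _).le)
            (((integrable_const _).add (hfi.const_mul t)).add hi2) (Filter.Eventually.of_forall hpt)
      _ = _ := by
          have hi3 : Integrable (fun x => 1 + t * f x) 𝔭 := (integrable_const _).add (hfi.const_mul t)
          rw [integral_add hi3 hi2,
            integral_add (integrable_const _) (hfi.const_mul t), integral_const_mul,
            integral_indicator hA]
          simp
          ring
  have : ∀ x, Real.exp (t * (f x - m)) = Real.exp (-(t * m)) * Real.exp (t * f x) := by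
    intro x; rw [← Real.exp_add]; congr 1; ring
  simp_rw [this]
  rw [integral_const_mul]
  calc _ ≤ Real.exp (-(t * m)) * (1 + t * m + 3 / 4 * t ^ 2 * 𝔭.real A) := by gcongr
    _ ≤ Real.exp (-(t * m)) * Real.exp (t * m + 3 / 4 * t ^ 2 * 𝔭.real A) := by
        gcongr
        have := Real.add_one_le_exp (t * m + 3 / 4 * t ^ 2 * 𝔭.real A)
        linarith
    _ = _ := by rw [← Real.exp_add]; congr 1; ring

theorem one_le_mgf (hf : Measurable f) (hf1 : ∀ x, |f x| ≤ 1) (t : ℝ) (ht0 : 0 ≤ t):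
    1 ≤ ∫ x, Real.exp (t * (f x - ∫ x, f x ∂𝔭)) ∂𝔭 := by
  have hfi : Integrable f 𝔭 := Integrable.of_bound hf.aestronglyMeasurable 1
    (Filter.Eventually.of_forall hf1)
  set m := ∫ x, f x ∂𝔭 with hm
  have hfi' : Integrable (fun x => t * (f x - m)) 𝔭 := (hfi.sub (integrable_const m)).const_mul t
  have : ∫ x, (t * (f x - m) + 1) ∂𝔭 = 1 := by
    rw [integral_add hfi' (integrable_const _), integral_const_mul,
      integral_sub hfi (integrable_const m), ← hm]
    simp
  rw [← this]
  refine integral_mono (hfi'.add (integrable_const _)) ?_ fun x => Real.add_one_le_exp _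
  refine Integrable.of_bound (by fun_prop) (Real.exp (t * (1 - m))) (Filter.Eventually.of_forall fun x => ?_)
  rw [Real.norm_eq_abs, abs_of_pos (Real.exp_pos _)]
  have := (abs_le.1 (hf1 x)).2
  gcongr

theorem max_one (hf : Measurable f) (hf1 : ∀ x, |f x| ≤ 1) (hA : MeasurableSet A)
    (hfA : ∀ x, x ∉ A → f x = 0) {t : ℝ} (ht0 : 0 ≤ t) (ht1 : t ≤ 1) (N : ℕ) (a : ℝ) :
    Pinf 𝔭 {ω | ∃ n ≤ N, a ≤ Sn 𝔭 f n ω} ≤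
      ENNReal.ofReal (Real.exp (3 / 4 * N * 𝔭.real A * t ^ 2 - t * a)) := by
  set m := ∫ x, f x ∂𝔭 with hm
  set g : E → ℝ := fun x => Real.exp (t * (f x - m)) with hg
  have hgm : Measurable g := by fun_prop
  have hg0 : ∀ x, 0 ≤ g x := fun x => (Real.exp_pos _).le
  have hgK : ∀ x, |g x| ≤ Real.exp (t * (1 - m)) := by
    intro x
    rw [abs_of_nonneg (hg0 x)]
    have := (abs_le.1 (hf1 x)).2
    simp only [hg]
    gcongr
  have hsub := Mprod_sub (𝔭 := 𝔭) hgm hgK hg0 (one_le_mgf hf hf1 t ht0)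
  have hM : ∀ n ω, Mprod g n ω = Real.exp (t * Sn 𝔭 f n ω) := by
    intro n ω
    rw [Mprod, Sn, Finset.mul_sum, Real.exp_sum]
  set ε : NNReal := ⟨Real.exp (t * a), (Real.exp_pos _).le⟩ with hε
  have hmax := maximal_ineq hsub (fun n ω => Finset.prod_nonneg fun i _ => hg0 _) (ε := ε) N
  have hset : {ω | ∃ n ≤ N, a ≤ Sn 𝔭 f n ω} ⊆ {ω | (ε : ℝ) ≤ (Finset.range (N + 1)).sup'
      Finset.nonempty_range_add_one fun k => Mprod g k ω} := by
    rintro ω ⟨n, hn, hna⟩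
    simp only [Set.mem_ofPred_eq, Finset.le_sup'_iff]
    refine ⟨n, by simp; omega, ?_⟩
    rw [hM]
    exact Real.exp_le_exp.2 (by gcongr)
  have hε0 : (ε : ℝ≥0∞) ≠ 0 := by
    rw [Ne, ENNReal.coe_eq_zero]
    exact ne_of_gt (Real.exp_pos (t * a))
  have hfin : ENNReal.ofReal (∫ ω in {ω | (ε : ℝ) ≤ (Finset.range (N + 1)).sup'
      Finset.nonempty_range_add_one fun k => Mprod g k ω}, Mprod g N ω ∂(Pinf 𝔭)) ≤
      ENNReal.ofReal (Real.exp (3 / 4 * N * 𝔭.real A * t ^ 2)) := by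
    refine ENNReal.ofReal_le_ofReal ?_
    calc _ ≤ ∫ ω, Mprod g N ω ∂(Pinf 𝔭) :=
          setIntegral_le_integral (Mprod_int hgm hgK N)
            (Filter.Eventually.of_forall fun ω => Finset.prod_nonneg fun i _ => hg0 _)
      _ = (∫ x, g x ∂𝔭) ^ N := Mprod_integral hgm N
      _ ≤ (Real.exp (3 / 4 * 𝔭.real A * t ^ 2)) ^ N :=
          pow_le_pow_left₀ (integral_nonneg hg0) (mgf_bound hf hf1 hA hfA ht0 ht1) N
      _ = _ := by rw [← Real.exp_nat_mul]; congr 1; ring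
  have h3 := (mul_le_mul_right (measure_mono (μ := Pinf 𝔭) hset) (ε : ℝ≥0∞)).trans (hmax.trans hfin)
  rw [mul_comm, ← ENNReal.le_div_iff_mul_le (Or.inl hε0) (Or.inl ENNReal.coe_ne_top)] at h3
  refine h3.trans (le_of_eq ?_)
  have : (ε : ℝ≥0∞) = ENNReal.ofReal (Real.exp (t * a)) := by
    rw [ENNReal.ofReal, ENNReal.coe_inj]; ext; rw [Real.coe_toNNReal _ (Real.exp_pos _).le]; rfl
  rw [this, ← ENNReal.ofReal_div_of_pos (Real.exp_pos _), ← Real.exp_sub]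

theorem max_two (hf : Measurable f) (hf1 : ∀ x, |f x| ≤ 1) (hA : MeasurableSet A)
    (hfA : ∀ x, x ∉ A → f x = 0) {t : ℝ} (ht0 : 0 ≤ t) (ht1 : t ≤ 1) (N : ℕ) (a : ℝ) :
    Pinf 𝔭 {ω | ∃ n ≤ N, a ≤ |Sn 𝔭 f n ω|} ≤
      2 * ENNReal.ofReal (Real.exp (3 / 4 * N * 𝔭.real A * t ^ 2 - t * a)) := by
  have h1 := max_one (𝔭 := 𝔭) hf hf1 hA hfA ht0 ht1 N a
  have h2 := max_one (𝔭 := 𝔭) (f := fun x => - f x) hf.neg (by simpa using hf1) hA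
    (fun x hx => by simp [hfA x hx]) ht0 ht1 N a
  have hneg : ∀ n ω, Sn 𝔭 (fun x => - f x) n ω = - Sn 𝔭 f n ω := by
    intro n ω
    simp only [Sn, integral_neg, ← Finset.sum_neg_distrib]
    refine Finset.sum_congr rfl fun i _ => by ring
  have hset : {ω | ∃ n ≤ N, a ≤ |Sn 𝔭 f n ω|} ⊆ {ω | ∃ n ≤ N, a ≤ Sn 𝔭 f n ω} ∪
      {ω | ∃ n ≤ N, a ≤ Sn 𝔭 (fun x => - f x) n ω} := by
    rintro ω ⟨n, hn, h⟩
    rcases le_abs.1 h with h | h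
    · exact Or.inl ⟨n, hn, h⟩
    · exact Or.inr ⟨n, hn, by rw [hneg]; exact h⟩
  calc _ ≤ _ := measure_mono hset
    _ ≤ _ := measure_union_le _ _
    _ ≤ _ := add_le_add h1 h2
    _ = _ := by rw [two_mul]

end Prob

end BNM

namespace BNM

theorem one_le_Log2 (x : ℝ) : 1 ≤ Log2 x := by
  unfold Log2
  split_ifs with h
  · exact le_rfl
  · push Not at h
    rw [Real.le_log_iff_exp_le]
    · rw [Real.le_log_iff_exp_le (lt_of_lt_of_le (Real.exp_pos _) h)]; exact h
    · refine Real.log_pos (lt_of_lt_of_le ?_ h)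
      exact Real.one_lt_exp_iff.2 (Real.exp_pos _)

theorem Log2_pos (x : ℝ) : 0 < Log2 x := lt_of_lt_of_le one_pos (one_le_Log2 x)

theorem Log2_mono {x y : ℝ} (h : x ≤ y) : Log2 x ≤ Log2 y := by
  by_cases hx : x < Real.exp (Real.exp 1)
  · have : Log2 x = 1 := if_pos hx
    rw [this]; exact one_le_Log2 y
  · have hy : ¬ y < Real.exp (Real.exp 1) := fun h' => hx (lt_of_le_of_lt h h')
    unfold Log2
    rw [if_neg hx, if_neg hy]
    push Not at hx
    have hx0 := lt_of_lt_of_le (Real.exp_pos _) hx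
    have : 0 < Real.log x := Real.log_pos (lt_of_lt_of_le (Real.one_lt_exp_iff.2 (Real.exp_pos _)) hx)
    exact Real.log_le_log this (Real.log_le_log hx0 h)

theorem Log2_le_rpow {τ : ℝ} (hτ : 0 < τ) {x : ℝ} (hx : 1 ≤ x) : Log2 x ≤ (1 + 1 / τ) * x ^ τ := by
  have h1 : 1 ≤ x ^ τ := Real.one_le_rpow hx hτ.le
  have h2 := Real.log_le_rpow_div (by linarith : 0 ≤ x) hτ
  have h3 : 0 ≤ Real.log x := Real.log_nonneg hx
  have h4 : Log2 x ≤ 1 + Real.log x := by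
    unfold Log2
    split_ifs with h
    · linarith
    · have := Real.log_le_self h3
      linarith
  have h5 : x ^ τ / τ = 1 / τ * x ^ τ := by ring
  nlinarith

abbrev LL (j : ℕ) : ℝ := Log2 ((2 : ℝ) ^ j)

theorem summable_LL {c : ℝ} (hc : 1 < c) : Summable fun j : ℕ => Real.exp (-c * LL j) := by
  have h2 : 0 < Real.log 2 := Real.log_pos (by norm_num)
  have hs : Summable fun j : ℕ => (Real.log 2) ^ (-c) * (j : ℝ) ^ (-c) :=
    (Real.summable_nat_rpow.2 (by linarith)).mul_left _
  refine Summable.of_norm_bounded_eventually_nat hs ?_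
  have ht : Filter.Tendsto (fun j : ℕ => (2 : ℝ) ^ j) Filter.atTop Filter.atTop :=
    tendsto_pow_atTop_atTop_of_one_lt (by norm_num)
  filter_upwards [ht.eventually_ge_atTop (Real.exp (Real.exp 1)), Filter.eventually_ge_atTop 1]
    with j hj hj1
  have hj0 : (0 : ℝ) < j := by exact_mod_cast hj1
  have : LL j = Real.log (j * Real.log 2) := by
    rw [LL, Log2, if_neg (not_lt.2 hj), Real.log_pow]
  rw [Real.norm_eq_abs, abs_of_pos (Real.exp_pos _), this, ← Real.mul_rpow h2.le hj0.le,
    Real.rpow_def_of_pos (by positivity), mul_comm (-c), mul_comm (j : ℝ)]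

theorem block (n : ℕ) (hn : 1 ≤ n) : ∃ j : ℕ, j = Nat.log 2 n ∧ 2 ^ j ≤ n ∧ n ≤ 2 ^ (j + 1) ∧
    (2 : ℝ) ^ j * LL j ≤ n * Log2 n := by
  refine ⟨_, rfl, Nat.pow_log_le_self 2 (by omega), (Nat.lt_pow_succ_log_self (by norm_num) n).le, ?_⟩
  have h : ((2 : ℝ) ^ Nat.log 2 n) ≤ n := by exact_mod_cast Nat.pow_log_le_self 2 (by omega)
  exact mul_le_mul h (Log2_mono h) (Log2_pos _).le (by positivity)

section Prob

variable {E : Type*} [MeasurableSpace E] {𝔭 : Measure E} [IsProbabilityMeasure 𝔭]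
  {f : E → ℝ} {A : Set E}

theorem measurable_Sn (hf : Measurable f) (n : ℕ) : Measurable (Sn 𝔭 f n) := by
  unfold Sn; fun_prop

theorem Sn_zero_of_null (hA : MeasurableSet A)
    (hfA : ∀ x, x ∉ A → f x = 0) (hq : 𝔭.real A = 0) :
    ∀ᵐ ω ∂(Pinf 𝔭), ∀ n, Sn 𝔭 f n ω = 0 := by
  have hq' : 𝔭 A = 0 := by
    rwa [measureReal_eq_zero_iff] at hq
  have hae : ∀ᵐ x ∂𝔭, f x = 0 := by
    have : ∀ᵐ x ∂𝔭, x ∉ A := measure_eq_zero_iff_ae_notMem.1 hq'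
    filter_upwards [this] with x hx using hfA x hx
  have hInteg : ∫ x, f x ∂𝔭 = 0 := by
    rw [integral_congr_ae hae]; simp
  have hall : ∀ i : ℕ, ∀ᵐ ω ∂(Pinf 𝔭), ω i ∉ A := by
    intro i
    have h1 : ∀ᵐ x ∂((Pinf 𝔭).map (fun ω : ℕ → E => ω i)), x ∉ A := by
      rw [Measure.infinitePi_map_eval]
      exact measure_eq_zero_iff_ae_notMem.1 hq'
    exact ae_of_ae_map (measurable_pi_apply i).aemeasurable h1
  filter_upwards [ae_all_iff.2 hall] with ω hω n
  simp only [Sn, hInteg]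
  exact Finset.sum_eq_zero fun i _ => by rw [hfA _ (hω i), sub_zero]

theorem lil (hf : Measurable f) (hf1 : ∀ x, |f x| ≤ 1) (hA : MeasurableSet A)
    (hfA : ∀ x, x ∉ A → f x = 0) :
    ∀ᵐ ω ∂(Pinf 𝔭), ∀ᶠ n : ℕ in Filter.atTop,
      |Sn 𝔭 f n ω| ≤ 2 * Real.sqrt 2 * Real.sqrt (𝔭.real A) * Real.sqrt (n * Log2 n) := by
  set q := 𝔭.real A with hq
  have hq0 : 0 ≤ q := measureReal_nonneg
  rcases hq0.eq_or_lt with h0 | hqpos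
  · filter_upwards [Sn_zero_of_null hA hfA h0.symm] with ω hω
    refine Filter.Eventually.of_forall fun n => ?_
    rw [hω n, abs_zero]; positivity
  set c : ℝ := 2 * Real.sqrt 2 with hc
  have hc28 : 2.8 ≤ c := by
    have : (1.4 : ℝ) ≤ Real.sqrt 2 := Real.le_sqrt_of_sq_le (by norm_num)
    rw [hc]; linarith
  set B : ℕ → Set (ℕ → E) := fun j => {ω | ∃ n ≤ 2 ^ (j + 1),
    c * Real.sqrt q * Real.sqrt (2 ^ j * LL j) ≤ |Sn 𝔭 f n ω|} with hB
  -- eventually LL j ≤ q 2^j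
  have hev : ∀ᶠ j : ℕ in Filter.atTop, LL j ≤ q * 2 ^ j := by
    have ht : Filter.Tendsto (fun j : ℕ => (2 : ℝ) ^ j) Filter.atTop Filter.atTop :=
      tendsto_pow_atTop_atTop_of_one_lt (by norm_num)
    filter_upwards [ht.eventually_ge_atTop ((3 / q) ^ 2)] with j hj
    have h1 := Log2_le_rpow (τ := 1 / 2) (by norm_num) (one_le_pow₀ (by norm_num : (1:ℝ) ≤ 2) : (1 : ℝ) ≤ 2 ^ j)
    rw [← Real.sqrt_eq_rpow] at h1
    have h2 : 3 / q ≤ Real.sqrt (2 ^ j) := Real.le_sqrt_of_sq_le hj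
    rw [div_le_iff₀ hqpos] at h2
    have h3 : Real.sqrt ((2 : ℝ) ^ j) * Real.sqrt (2 ^ j) = 2 ^ j := Real.mul_self_sqrt (by positivity)
    have h4 := Real.sqrt_nonneg ((2 : ℝ) ^ j)
    norm_num at h1
    have : LL j ≤ 3 * Real.sqrt (2 ^ j) := h1
    nlinarith
  obtain ⟨J, hJ⟩ := Filter.eventually_atTop.1 hev
  have hPB : ∀ j, J ≤ j → Pinf 𝔭 (B j) ≤ ENNReal.ofReal (2 * Real.exp (-1.3 * LL j)) := by
    intro j hj
    have hLL : 0 < LL j := Log2_pos _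
    have h2j : (0 : ℝ) < 2 ^ j := by positivity
    set t := Real.sqrt (LL j) / (Real.sqrt q * Real.sqrt (2 ^ j)) with ht
    have hsq : 0 < Real.sqrt q := Real.sqrt_pos.2 hqpos
    have hs2 : 0 < Real.sqrt ((2 : ℝ) ^ j) := Real.sqrt_pos.2 h2j
    have ht1 : t ≤ 1 := by
      rw [ht, div_le_one (by positivity), ← Real.sqrt_mul hq0]
      exact Real.sqrt_le_sqrt (hJ j hj)
    have := max_two (𝔭 := 𝔭) hf hf1 hA hfA (by positivity : 0 ≤ t) ht1 (2 ^ (j + 1))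
      (c * Real.sqrt q * Real.sqrt (2 ^ j * LL j))
    refine this.trans ?_
    rw [show (2 : ℝ≥0∞) = ENNReal.ofReal 2 by simp, ← ENNReal.ofReal_mul (by norm_num)]
    refine ENNReal.ofReal_le_ofReal ?_
    have e1 : 3 / 4 * ((2 ^ (j + 1) : ℕ) : ℝ) * q * t ^ 2 = 1.5 * LL j := by
      rw [ht, div_pow, mul_pow, Real.sq_sqrt hLL.le, Real.sq_sqrt hq0, Real.sq_sqrt h2j.le]
      push_cast
      field_simp
      ring
    have e2 : t * (c * Real.sqrt q * Real.sqrt (2 ^ j * LL j)) = c * LL j := by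
      rw [ht, Real.sqrt_mul h2j.le]
      field_simp
      rw [Real.sq_sqrt hLL.le]
    rw [← hq, e1, e2]
    gcongr
    nlinarith
  have hsum : ∑' j, Pinf 𝔭 (B (j + J)) ≠ ⊤ := by
    have hs : Summable fun j : ℕ => 2 * Real.exp (-1.3 * LL (j + J)) :=
      ((summable_LL (c := 1.3) (by norm_num)).mul_left 2).comp_injective (add_left_injective J)
    refine ne_top_of_le_ne_top ?_ (ENNReal.tsum_le_tsum fun j => hPB (j + J) (by omega))
    rw [← ENNReal.ofReal_tsum_of_nonneg (fun j => by positivity) hs]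
    exact ENNReal.ofReal_ne_top
  filter_upwards [ae_eventually_notMem hsum] with ω hω
  obtain ⟨j0, hj0⟩ := Filter.eventually_atTop.1 hω
  refine Filter.eventually_atTop.2 ⟨2 ^ (j0 + J), fun n hn => ?_⟩
  have hn1 : 1 ≤ n := le_trans Nat.one_le_two_pow hn
  obtain ⟨j, hj, h1, h2, h3⟩ := block n hn1
  have hjj : j0 + J ≤ j := by rw [hj]; exact Nat.le_log_of_pow_le (by norm_num) hn
  have h4 := hj0 (j - J) (by omega)
  rw [show j - J + J = j by omega] at h4
  have h5 : |Sn 𝔭 f n ω| < c * Real.sqrt q * Real.sqrt (2 ^ j * LL j) := by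
    by_contra h
    exact h4 ⟨n, h2, not_lt.1 h⟩
  refine h5.le.trans ?_
  gcongr

end Prob

end BNM

namespace BNM

theorem exists_J {s : ℝ} (hs0 : 0 < s) (hs1 : s < 1 / 2) : ∃ C : ℝ, 0 ≤ C ∧ ∀ q : ℝ, 0 < q → q ≤ 1 →
    ∃ J : ℕ, (∀ j, J ≤ j → LL j ≤ 2 ^ j * q ^ (2 * s)) ∧ q * Real.sqrt (2 ^ J) ≤ C * q ^ s := by
  set τ : ℝ := (1 - 2 * s) / (1 - s) with hτ
  have h1s : 0 < 1 - s := by linarith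
  have hτ0 : 0 < τ := div_pos (by linarith) h1s
  have h1τ : 1 - τ = s / (1 - s) := by rw [hτ]; field_simp; ring
  have h1τ0 : 0 < 1 - τ := by rw [h1τ]; positivity
  set C : ℝ := 1 + 1 / τ with hC
  have hC1 : 1 ≤ C := by
    have : 0 < 1 / τ := by positivity
    rw [hC]; linarith
  refine ⟨Real.sqrt (2 * C ^ (1 / (1 - τ))), Real.sqrt_nonneg _, fun q hq0 hq1 => ?_⟩
  have hqs : 1 ≤ q ^ (-(2 * s)) := Real.one_le_rpow_of_pos_of_le_one_of_nonpos hq0 hq1 (by linarith)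
  have hX : 1 ≤ C * q ^ (-(2 * s)) := one_le_mul_of_one_le_of_one_le hC1 hqs
  set R : ℝ := (C * q ^ (-(2 * s))) ^ (1 / (1 - τ)) with hR
  have hR1 : 1 ≤ R := Real.one_le_rpow hX (by positivity)
  obtain ⟨n, hn1, hn2⟩ := exists_nat_pow_near hR1 (by norm_num : (1 : ℝ) < 2)
  refine ⟨n + 1, fun j hj => ?_, ?_⟩
  · have hRj : R ≤ 2 ^ j := hn2.le.trans (pow_le_pow_right₀ (by norm_num) hj)
    have h2j : (1 : ℝ) ≤ 2 ^ j := one_le_pow₀ (by norm_num)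
    have h2 : C * q ^ (-(2 * s)) ≤ ((2 : ℝ) ^ j) ^ (1 - τ) := by
      calc C * q ^ (-(2 * s)) = R ^ (1 - τ) := by
            rw [hR, ← Real.rpow_mul (by linarith), one_div, inv_mul_cancel₀ h1τ0.ne', Real.rpow_one]
        _ ≤ _ := Real.rpow_le_rpow (by linarith) hRj h1τ0.le
    have h3 : ((2 : ℝ) ^ j) ^ (1 - τ) * ((2 : ℝ) ^ j) ^ τ = 2 ^ j := by
      rw [← Real.rpow_add (by positivity)]; simp
    have h4 := Log2_le_rpow hτ0 h2j
    have h5 : q ^ (-(2 * s)) * q ^ (2 * s) = 1 := by rw [← Real.rpow_add hq0]; simp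
    have h6 : 0 < q ^ (2 * s) := Real.rpow_pos_of_pos hq0 _
    have h7 : 0 < ((2 : ℝ) ^ j) ^ τ := by positivity
    calc LL j ≤ C * ((2 : ℝ) ^ j) ^ τ := h4
      _ = (C * q ^ (-(2 * s))) * ((2 : ℝ) ^ j) ^ τ * q ^ (2 * s) := by
          rw [show (C * q ^ (-(2 * s))) * ((2 : ℝ) ^ j) ^ τ * q ^ (2 * s) =
            C * ((2 : ℝ) ^ j) ^ τ * (q ^ (-(2 * s)) * q ^ (2 * s)) by ring, h5, mul_one]
      _ ≤ ((2 : ℝ) ^ j) ^ (1 - τ) * ((2 : ℝ) ^ j) ^ τ * q ^ (2 * s) := by gcongr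
      _ = _ := by rw [h3]
  · have e : R = C ^ (1 / (1 - τ)) * (q ^ (-(1 - s))) ^ 2 := by
      rw [hR, Real.mul_rpow (by linarith) (by positivity), ← Real.rpow_mul hq0.le,
        ← Real.rpow_natCast, ← Real.rpow_mul hq0.le, h1τ]
      congr 2
      push_cast
      field_simp
    have h8 : (2 : ℝ) ^ (n + 1) ≤ 2 * C ^ (1 / (1 - τ)) * (q ^ (-(1 - s))) ^ 2 := by
      rw [pow_succ, mul_assoc, ← e]; linarith
    calc q * Real.sqrt (2 ^ (n + 1)) ≤ q * Real.sqrt (2 * C ^ (1 / (1 - τ)) * (q ^ (-(1 - s))) ^ 2) := by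
          gcongr
      _ = Real.sqrt (2 * C ^ (1 / (1 - τ))) * (q ^ (1 : ℝ) * q ^ (-(1 - s))) := by
          rw [Real.sqrt_mul (by positivity), Real.sqrt_sq (by positivity), Real.rpow_one]; ring
      _ = _ := by rw [← Real.rpow_add hq0]; congr 2; ring

theorem sum_inv_sqrt (N : ℕ) : ∑ i ∈ Finset.range N, 1 / Real.sqrt (i + 1) ≤ 2 * Real.sqrt N := by
  induction N with
  | zero => simp
  | succ N ih =>
    rw [Finset.sum_range_succ]
    push_cast
    have h0 : (0 : ℝ) ≤ N := Nat.cast_nonneg N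
    have h1 : Real.sqrt N ^ 2 = N := Real.sq_sqrt h0
    have h2 : Real.sqrt (N + 1) ^ 2 = N + 1 := Real.sq_sqrt (by positivity)
    have h3 : 0 < Real.sqrt ((N : ℝ) + 1) := Real.sqrt_pos.2 (by positivity)
    have h4 := Real.sqrt_nonneg (N : ℝ)
    have h5 : 1 / Real.sqrt ((N : ℝ) + 1) ≤ 2 * Real.sqrt (N + 1) - 2 * Real.sqrt N := by
      rw [div_le_iff₀ h3]
      nlinarith [sq_nonneg (Real.sqrt ((N : ℝ) + 1) - Real.sqrt N)]
    linarith

section Prob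

variable {E : Type*} [MeasurableSpace E] {𝔭 : Measure E} [IsProbabilityMeasure 𝔭] {B : Set E}

theorem early_int (hB : MeasurableSet B) (N : ℕ) :
    ∫⁻ ω, ∑ i ∈ Finset.range N, ENNReal.ofReal
      (|B.indicator (1 : E → ℝ) (ω i) - ∫ x, B.indicator (1 : E → ℝ) x ∂𝔭| * (1 / Real.sqrt (i + 1)))
      ∂(Pinf 𝔭) ≤ ENNReal.ofReal (4 * (𝔭.real B * Real.sqrt N)) := by
  have hI : Measurable (B.indicator (1 : E → ℝ)) := measurable_one.indicator hB
  have hm : ∫ x, B.indicator (1 : E → ℝ) x ∂𝔭 = 𝔭.real B := integral_indicator_one hB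
  rw [hm]
  set q := 𝔭.real B with hq
  have hq0 : 0 ≤ q := measureReal_nonneg
  rw [lintegral_finsetSum _ fun i _ => by fun_prop]
  have h1 : ∀ i : ℕ, ∫⁻ ω : ℕ → E, ENNReal.ofReal (|B.indicator (1 : E → ℝ) (ω i) - q| *
      (1 / Real.sqrt (i + 1))) ∂(Pinf 𝔭) ≤ ENNReal.ofReal (2 * q * (1 / Real.sqrt (i + 1))) := by
    intro i
    have e1 : ∫⁻ ω : ℕ → E, ENNReal.ofReal |B.indicator (1 : E → ℝ) (ω i) - q| ∂(Pinf 𝔭) ≤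
        ENNReal.ofReal (2 * q) := by
      have := lintegral_map (μ := Pinf 𝔭) (g := fun ω : ℕ → E => ω i)
        (f := fun x => ENNReal.ofReal |B.indicator (1 : E → ℝ) x - q|) (by fun_prop)
        (measurable_pi_apply i)
      rw [← this, Measure.infinitePi_map_eval]
      calc _ ≤ ∫⁻ x, (B.indicator (1 : E → ℝ≥0∞) x + ENNReal.ofReal q) ∂𝔭 := by
            refine lintegral_mono fun x => ?_
            by_cases hx : x ∈ B
            · simp only [Set.indicator_of_mem hx, Pi.one_apply]
              rw [← ENNReal.ofReal_one, ← ENNReal.ofReal_add (by norm_num) hq0]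
              refine ENNReal.ofReal_le_ofReal ?_
              rw [abs_le]; constructor <;> linarith
            · simp only [Set.indicator_of_notMem hx]
              rw [zero_add, zero_sub, abs_neg, abs_of_nonneg hq0]
        _ = _ := by
            rw [lintegral_add_right _ measurable_const, lintegral_indicator_one hB, lintegral_const,
              measure_univ, mul_one, two_mul, ENNReal.ofReal_add hq0 hq0, hq, ofReal_measureReal]
    have h0 : 0 ≤ 1 / Real.sqrt ((i : ℝ) + 1) := by positivity
    simp_rw [ENNReal.ofReal_mul' h0]
    rw [lintegral_mul_const _ (by fun_prop)]
    gcongr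
  refine (Finset.sum_le_sum fun i _ => h1 i).trans ?_
  rw [← ENNReal.ofReal_sum_of_nonneg fun i _ => by positivity, ← Finset.mul_sum]
  refine ENNReal.ofReal_le_ofReal ?_
  have := sum_inv_sqrt N
  nlinarith

theorem dom_aux {s : ℝ} (hs0 : 0 < s) (hs1 : s < 1 / 2) (C' : ℝ) (hC0 : 0 ≤ C')
    (hB : MeasurableSet B) (hq : 0 < 𝔭.real B) (J : ℕ)
    (hJ : ∀ j, J ≤ j → LL j ≤ 2 ^ j * 𝔭.real B ^ (2 * s))
    (hJ2 : 𝔭.real B * Real.sqrt (2 ^ J) ≤ C' * 𝔭.real B ^ s) :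
    ∫⁻ ω, ⨆ n : ℕ, ENNReal.ofReal (|Sn 𝔭 (B.indicator 1) n ω| / Real.sqrt (n * Log2 n)) ∂(Pinf 𝔭)
      ≤ (ENNReal.ofReal (4 * C' + 7 / 2) + ∑' i : ℕ, ENNReal.ofReal (Real.exp (-i)) *
          ∑' j : ℕ, ENNReal.ofReal (2 * Real.exp (-2 * LL j))) * ENNReal.ofReal (𝔭.real B ^ s) := by
  set f : E → ℝ := B.indicator 1 with hf
  have hfm : Measurable f := measurable_one.indicator hB
  have hf1 : ∀ x, |f x| ≤ 1 := by
    intro x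
    by_cases hx : x ∈ B
    · simp [hf, hx]
    · simp [hf, hx]
  have hfB : ∀ x, x ∉ B → f x = 0 := fun x hx => Set.indicator_of_notMem hx _
  set q := 𝔭.real B with hqdef
  have hqs : 0 < q ^ s := Real.rpow_pos_of_pos hq _
  have hq1 : q ≤ 1 := measureReal_le_one
  set Ev : ℕ → Set (ℕ → E) := fun i => {ω | ∃ j, J ≤ j ∧ ∃ n ≤ 2 ^ (j + 1),
    (7 / 2 + i) * q ^ s * Real.sqrt (2 ^ j * LL j) ≤ |Sn 𝔭 f n ω|} with hEv
  have hEvm : ∀ i, MeasurableSet (Ev i) := by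
    intro i
    have : Ev i = ⋃ j, ⋃ (_ : J ≤ j), ⋃ n, ⋃ (_ : n ≤ 2 ^ (j + 1)),
      {ω | (7 / 2 + i) * q ^ s * Real.sqrt (2 ^ j * LL j) ≤ |Sn 𝔭 f n ω|} := by
      ext ω; simp [hEv]
    rw [this]
    refine MeasurableSet.iUnion fun j => MeasurableSet.iUnion fun _ => MeasurableSet.iUnion fun n =>
      MeasurableSet.iUnion fun _ => ?_
    exact measurableSet_le measurable_const (measurable_Sn hfm n).norm
  have hEvP : ∀ i, Pinf 𝔭 (Ev i) ≤ ENNReal.ofReal (Real.exp (-i)) *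
      ∑' j : ℕ, ENNReal.ofReal (2 * Real.exp (-2 * LL j)) := by
    intro i
    have hsub : Ev i ⊆ ⋃ j, {ω | J ≤ j ∧ ∃ n ≤ 2 ^ (j + 1),
      (7 / 2 + i) * q ^ s * Real.sqrt (2 ^ j * LL j) ≤ |Sn 𝔭 f n ω|} := by
      rintro ω ⟨j, h⟩
      exact Set.mem_iUnion.2 ⟨j, h⟩
    refine (measure_mono hsub).trans ((measure_iUnion_le _).trans ?_)
    rw [← ENNReal.tsum_mul_left]
    refine ENNReal.tsum_le_tsum fun j => ?_
    by_cases hj : J ≤ j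
    swap
    · simp [hj]
    simp only [hj, true_and]
    have hLL1 : 1 ≤ LL j := one_le_Log2 _
    have hLL : 0 < LL j := Log2_pos _
    have h2j : (0 : ℝ) < 2 ^ j := by positivity
    have hs2 : 0 < Real.sqrt ((2 : ℝ) ^ j) := Real.sqrt_pos.2 h2j
    set t := Real.sqrt (LL j) / (q ^ s * Real.sqrt (2 ^ j)) with ht
    have hqq : q ^ (2 * s) = (q ^ s) ^ 2 := by
      rw [← Real.rpow_natCast, ← Real.rpow_mul hq.le]; congr 1; push_cast; ring
    have ht1 : t ≤ 1 := by
      rw [ht, div_le_one (by positivity), Real.sqrt_le_left (by positivity), mul_pow,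
        Real.sq_sqrt h2j.le, ← hqq, mul_comm]
      exact hJ j hj
    refine (max_two (𝔭 := 𝔭) hfm hf1 hB hfB (by positivity : 0 ≤ t) ht1 (2 ^ (j + 1))
      ((7 / 2 + i) * q ^ s * Real.sqrt (2 ^ j * LL j))).trans ?_
    rw [show (2 : ℝ≥0∞) = ENNReal.ofReal 2 by simp, ← ENNReal.ofReal_mul (by norm_num),
      ← ENNReal.ofReal_mul (by positivity)]
    refine ENNReal.ofReal_le_ofReal ?_
    have e1 : 3 / 4 * ((2 ^ (j + 1) : ℕ) : ℝ) * q * t ^ 2 ≤ 1.5 * LL j := by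
      have hqle : q ≤ (q ^ s) ^ 2 := by
        rw [← hqq]
        calc q = q ^ (1 : ℝ) := (Real.rpow_one q).symm
          _ ≤ _ := Real.rpow_le_rpow_of_exponent_ge hq hq1 (by linarith)
      rw [ht, div_pow, mul_pow, Real.sq_sqrt hLL.le, Real.sq_sqrt h2j.le]
      push_cast
      rw [show 3 / 4 * 2 ^ (j + 1) * q * (LL j / ((q ^ s) ^ 2 * 2 ^ j)) =
        1.5 * LL j * (q / (q ^ s) ^ 2) by field_simp; ring]
      have : q / (q ^ s) ^ 2 ≤ 1 := by rw [div_le_one (by positivity)]; exact hqle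
      nlinarith
    have e2 : t * ((7 / 2 + i) * q ^ s * Real.sqrt (2 ^ j * LL j)) = (7 / 2 + i) * LL j := by
      rw [ht, Real.sqrt_mul h2j.le]
      field_simp
      rw [Real.sq_sqrt hLL.le]
    have h0 : Real.exp (-(i : ℝ)) * (2 * Real.exp (-2 * LL j)) = 2 * Real.exp (-i + -2 * LL j) := by
      rw [Real.exp_add]; ring
    rw [e2, h0]
    gcongr
    have hi : (0 : ℝ) ≤ i := Nat.cast_nonneg i
    nlinarith
  set m := ∫ x, f x ∂𝔭 with hm
  set Ear : (ℕ → E) → ℝ≥0∞ := fun ω => ∑ i ∈ Finset.range (2 ^ J), ENNReal.ofReal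
      (|f (ω i) - m| * (1 / Real.sqrt (i + 1))) with hEar
  have hpt : ∀ ω, ⨆ n : ℕ, ENNReal.ofReal (|Sn 𝔭 f n ω| / Real.sqrt (n * Log2 n)) ≤
      Ear ω + ENNReal.ofReal (q ^ s) * (ENNReal.ofReal (7 / 2) + ∑' i, (Ev i).indicator 1 ω) := by
    intro ω
    refine iSup_le fun n => ?_
    rcases Nat.eq_zero_or_pos n with hn0 | hn0
    · simp [hn0]
    have hnR : (0 : ℝ) < n := by exact_mod_cast hn0
    by_cases hnJ : n < 2 ^ J
    · refine le_trans ?_ le_self_add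
      rw [hEar]
      simp only
      rw [← ENNReal.ofReal_sum_of_nonneg fun i _ => by positivity]
      refine ENNReal.ofReal_le_ofReal ?_
      have hsn : 0 < Real.sqrt n := Real.sqrt_pos.2 hnR
      calc |Sn 𝔭 f n ω| / Real.sqrt (n * Log2 n) ≤ |Sn 𝔭 f n ω| / Real.sqrt n := by
            gcongr
            exact le_mul_of_one_le_right hnR.le (one_le_Log2 _)
        _ ≤ (∑ i ∈ Finset.range n, |f (ω i) - m|) / Real.sqrt n := by
            gcongr
            exact Finset.abs_sum_le_sum_abs _ _
        _ = ∑ i ∈ Finset.range n, |f (ω i) - m| * (1 / Real.sqrt n) := by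
            rw [div_eq_mul_one_div, Finset.sum_mul]
        _ ≤ ∑ i ∈ Finset.range n, |f (ω i) - m| * (1 / Real.sqrt (i + 1)) := by
            refine Finset.sum_le_sum fun i hi => ?_
            gcongr
            have : i + 1 ≤ n := by simp at hi; omega
            exact_mod_cast this
        _ ≤ _ := Finset.sum_le_sum_of_subset_of_nonneg
            (Finset.range_subset_range.2 hnJ.le) fun i _ _ => by positivity
    · push Not at hnJ
      refine le_trans ?_ le_add_self
      obtain ⟨j, hj, h1, h2, h3⟩ := block n hn0
      have hJj : J ≤ j := by rw [hj]; exact Nat.le_log_of_pow_le (by norm_num) hnJ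
      have hLn := Log2_pos (n : ℝ)
      have hsq : 0 < Real.sqrt (n * Log2 n) := Real.sqrt_pos.2 (by positivity)
      set v := |Sn 𝔭 f n ω| / Real.sqrt (n * Log2 n) / q ^ s with hv
      have hv0 : 0 ≤ v := by positivity
      have e : |Sn 𝔭 f n ω| / Real.sqrt (n * Log2 n) = q ^ s * v := by rw [hv]; field_simp
      have e' : |Sn 𝔭 f n ω| = v * q ^ s * Real.sqrt (n * Log2 n) := by rw [hv]; field_simp
      rw [e, ENNReal.ofReal_mul hqs.le]
      gcongr
      by_cases hv7 : v < 7 / 2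
      · exact (ENNReal.ofReal_le_ofReal hv7.le).trans le_self_add
      push Not at hv7
      set N := ⌊v - 7 / 2⌋₊ with hN
      have hmem : ∀ i ∈ Finset.range (N + 1), (Ev i).indicator (1 : (ℕ → E) → ℝ≥0∞) ω = 1 := by
        intro i hi
        have hiN : i ≤ N := by simp at hi; omega
        have hiv : (i : ℝ) ≤ v - 7 / 2 := (Nat.le_floor_iff (by linarith)).1 hiN
        refine Set.indicator_of_mem (s := Ev i) ?_ _
        refine ⟨j, hJj, n, h2, ?_⟩
        rw [e']
        have : 7 / 2 + (i : ℝ) ≤ v := by linarith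
        gcongr
      calc ENNReal.ofReal v ≤ ENNReal.ofReal (7 / 2 + (N + 1)) := by
            refine ENNReal.ofReal_le_ofReal ?_
            have := Nat.lt_floor_add_one (v - 7 / 2)
            rw [← hN] at this; linarith
        _ = ENNReal.ofReal (7 / 2) + ∑ i ∈ Finset.range (N + 1), (Ev i).indicator 1 ω := by
            rw [Finset.sum_congr rfl hmem, ENNReal.ofReal_add (by norm_num) (by positivity)]
            simp
            norm_cast
        _ ≤ _ := by gcongr; exact ENNReal.sum_le_tsum _
  have hind : ∀ i, Measurable ((Ev i).indicator (1 : (ℕ → E) → ℝ≥0∞)) :=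
    fun i => measurable_one.indicator (hEvm i)
  have hts : Measurable fun ω => ∑' i, (Ev i).indicator (1 : (ℕ → E) → ℝ≥0∞) ω :=
    Measurable.tsum hind
  have hts2 : Measurable fun ω => ENNReal.ofReal (7 / 2) +
      ∑' i, (Ev i).indicator (1 : (ℕ → E) → ℝ≥0∞) ω := measurable_const.add hts
  have hts3 : Measurable fun ω => ENNReal.ofReal (q ^ s) * (ENNReal.ofReal (7 / 2) +
      ∑' i, (Ev i).indicator (1 : (ℕ → E) → ℝ≥0∞) ω) := hts2.const_mul _
  calc _ ≤ ∫⁻ ω, (Ear ω + ENNReal.ofReal (q ^ s) * (ENNReal.ofReal (7 / 2) +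
        ∑' i, (Ev i).indicator 1 ω)) ∂(Pinf 𝔭) := lintegral_mono hpt
    _ = ∫⁻ ω, Ear ω ∂(Pinf 𝔭) + ENNReal.ofReal (q ^ s) * (ENNReal.ofReal (7 / 2) +
        ∑' i, Pinf 𝔭 (Ev i)) := by
        rw [lintegral_add_right _ hts3, lintegral_const_mul _ hts2, lintegral_add_right _ hts,
          lintegral_tsum fun i => (hind i).aemeasurable]
        simp_rw [lintegral_indicator_one (hEvm _)]
        simp
    _ ≤ ENNReal.ofReal (4 * C' * q ^ s) + ENNReal.ofReal (q ^ s) * (ENNReal.ofReal (7 / 2) +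
        ∑' i : ℕ, ENNReal.ofReal (Real.exp (-i)) *
          ∑' j : ℕ, ENNReal.ofReal (2 * Real.exp (-2 * LL j))) := by
        gcongr with i
        · refine (early_int hB (2 ^ J)).trans (ENNReal.ofReal_le_ofReal ?_)
          push_cast
          linarith
        · exact hEvP i
    _ = _ := by
        rw [ENNReal.ofReal_mul (by positivity), ENNReal.ofReal_add (by positivity) (by norm_num)]
        ring

variable (E) in
theorem dom {s : ℝ} (hs0 : 0 < s) (hs1 : s < 1 / 2) : ∃ C : ℝ≥0∞, C ≠ ⊤ ∧
    ∀ (𝔭 : Measure E) [IsProbabilityMeasure 𝔭] (B : Set E), MeasurableSet B →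
    ∫⁻ ω, ⨆ n : ℕ, ENNReal.ofReal (|Sn 𝔭 (B.indicator 1) n ω| / Real.sqrt (n * Log2 n)) ∂(Pinf 𝔭)
      ≤ C * 𝔭 B ^ s := by
  obtain ⟨C', hC0, hC⟩ := exists_J hs0 hs1
  refine ⟨ENNReal.ofReal (4 * C' + 7 / 2) + ∑' i : ℕ, ENNReal.ofReal (Real.exp (-i)) *
          ∑' j : ℕ, ENNReal.ofReal (2 * Real.exp (-2 * LL j)), ?_, ?_⟩
  · refine ENNReal.add_ne_top.2 ⟨ENNReal.ofReal_ne_top, ?_⟩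
    rw [ENNReal.tsum_mul_right]
    refine ENNReal.mul_ne_top ?_ ?_
    · rw [← ENNReal.ofReal_tsum_of_nonneg (fun i => by positivity) Real.summable_exp_neg_nat]
      exact ENNReal.ofReal_ne_top
    · rw [← ENNReal.ofReal_tsum_of_nonneg (fun i => by positivity)
        ((summable_LL (c := 2) (by norm_num)).mul_left 2)]
      exact ENNReal.ofReal_ne_top
  · intro 𝔭 _ B hB
    have hq0 : 0 ≤ 𝔭.real B := measureReal_nonneg
    have e : 𝔭 B ^ s = ENNReal.ofReal (𝔭.real B ^ s) := by
      rw [← ofReal_measureReal (μ := 𝔭) (s := B), ENNReal.ofReal_rpow_of_nonneg hq0 hs0.le]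
    rw [e]
    rcases hq0.eq_or_lt with h0 | hpos
    · have := Sn_zero_of_null (𝔭 := 𝔭) (f := B.indicator 1) hB
        (fun x hx => Set.indicator_of_notMem hx _) h0.symm
      rw [lintegral_congr_ae (g := fun _ => 0)]
      · simp
      · filter_upwards [this] with ω hω
        simp [hω]
    · obtain ⟨J, h1, h2⟩ := hC _ hpos measureReal_le_one
      exact dom_aux hs0 hs1 C' hC0 hB hpos J h1 h2

end Prob

end BNM

namespace BNM

section PD
variable {d : ℕ}

theorem empOf_apply (n : ℕ) (v : Fin n → (Fin d → ℝ)) {B : Set (Fin d → ℝ)} (hB : MeasurableSet B) :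
    empOf n v B = (n : ℝ≥0∞)⁻¹ * ∑ i, B.indicator 1 (v i) := by
  simp [empOf, Measure.dirac_apply' _ hB]

instance empOf_finite (n : ℕ) (v : Fin n → (Fin d → ℝ)) : IsFiniteMeasure (empOf n v) := by
  constructor
  rw [empOf_apply _ _ MeasurableSet.univ]
  rcases n with _ | n
  · simp
  · refine ENNReal.mul_lt_top (by simp) ?_
    simp

theorem empOf_prob (n : ℕ) (hn : n ≠ 0) (v : Fin n → (Fin d → ℝ)) : IsProbabilityMeasure (empOf n v) := by
  constructor
  rw [empOf_apply _ _ MeasurableSet.univ]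
  simp
  exact ENNReal.inv_mul_cancel (by simpa using hn) (by simp)

theorem measurable_empOf (n : ℕ) : Measurable (empOf (d := d) n) := by
  refine Measure.measurable_of_measurable_coe _ fun B hB => ?_
  simp_rw [empOf_apply n _ hB]
  refine Measurable.const_mul (Finset.measurable_sum _ fun i _ => ?_) _
  exact (measurable_one.indicator hB).comp (measurable_pi_apply i)

theorem empOf_real (n : ℕ) (v : Fin n → (Fin d → ℝ)) {B : Set (Fin d → ℝ)} (hB : MeasurableSet B) :
    (empOf n v).real B = (∑ i, B.indicator (1 : (Fin d → ℝ) → ℝ) (v i)) / n := by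
  rw [measureReal_def, empOf_apply _ _ hB, ENNReal.toReal_mul, ENNReal.toReal_sum]
  · simp only [ENNReal.toReal_inv, ENNReal.toReal_natCast]
    rw [div_eq_inv_mul]
    congr 1
    refine Finset.sum_congr rfl fun i _ => ?_
    by_cases h : v i ∈ B <;> simp [h]
  · intro i _
    by_cases h : v i ∈ B <;> simp [h]

theorem emp_Sn (𝔭 : Measure (Fin d → ℝ)) [IsProbabilityMeasure 𝔭] (n : ℕ) (hn : n ≠ 0)
    (ω : ℕ → (Fin d → ℝ)) {B : Set (Fin d → ℝ)} (hB : MeasurableSet B) :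
    (empOf n (pre n ω)).real B - 𝔭.real B = Sn 𝔭 (B.indicator 1) n ω / n := by
  have hn' : (n : ℝ) ≠ 0 := by exact_mod_cast hn
  rw [empOf_real _ _ hB, Sn, Finset.sum_sub_distrib, integral_indicator_one hB]
  simp only [Finset.sum_const, Finset.card_range, nsmul_eq_mul]
  rw [sub_div, mul_div_cancel_left₀ _ hn', ← Fin.sum_univ_eq_sum_range (fun i => B.indicator (1 : (Fin d → ℝ) → ℝ) (ω i))]
  rfl

/-- the normalising rate -/
def rt (n : ℕ) : ℝ := Real.sqrt (n / Log2 n)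

theorem rt_nonneg (n : ℕ) : 0 ≤ rt n := Real.sqrt_nonneg _

theorem rt_mdiff (𝔭 : Measure (Fin d → ℝ)) [IsProbabilityMeasure 𝔭] (n : ℕ)
    (ω : ℕ → (Fin d → ℝ)) {B : Set (Fin d → ℝ)} (hB : MeasurableSet B) :
    ENNReal.ofReal (rt n) * mdiff 𝔭 (empOf n (pre n ω)) B =
      ENNReal.ofReal (|Sn 𝔭 (B.indicator 1) n ω| / Real.sqrt (n * Log2 n)) := by
  rcases eq_or_ne n 0 with rfl | hn
  · simp [rt]
  · rw [mdiff_eq, emp_Sn 𝔭 n hn ω hB, ← ENNReal.ofReal_mul (rt_nonneg n)]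
    congr 1
    have hn' : (0 : ℝ) < n := by exact_mod_cast Nat.pos_of_ne_zero hn
    have hL := Log2_pos (n : ℝ)
    rw [rt, Real.sqrt_div hn'.le, Real.sqrt_mul hn'.le, abs_div, abs_of_pos hn']
    have h1 := Real.mul_self_sqrt hn'.le
    have h2 : 0 < Real.sqrt n := Real.sqrt_pos.2 hn'
    have h3 : 0 < Real.sqrt (Log2 n) := Real.sqrt_pos.2 hL
    field_simp
    rw [Real.sq_sqrt hn'.le]
    ring

theorem lil_Del (𝔭 : Measure (Fin d → ℝ)) [IsProbabilityMeasure 𝔭] (l k : ℕ) :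
    ∀ᵐ ω ∂(Pinf 𝔭), ∀ᶠ n : ℕ in Filter.atTop, ENNReal.ofReal (rt n) * Del l k 𝔭 (empOf n (pre n ω)) ≤
      ENNReal.ofReal (2 * Real.sqrt 2 * Real.sqrt (𝔭.real (sh d k))) := by
  classical
  let c : Finset (Lab d) → Lab d → ℝ := fun T i => if i ∈ T then 1 else -1
  let f : Finset (Lab d) → (Fin d → ℝ) → ℝ :=
    fun T x => ∑ i ∈ cells d l k, c T i * (cell l i).indicator 1 x
  have hf : ∀ T x, f T x = if lab l x ∈ cells d l k then c T (lab l x) else 0 := by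
    intro T x
    have : ∀ i, c T i * (cell l i).indicator (1 : (Fin d → ℝ) → ℝ) x = if lab l x = i then c T i else 0 := by
      intro i
      by_cases h : lab l x = i
      · have : x ∈ cell l i := h
        simp [h, this]
      · have : x ∉ cell l i := h
        simp [h, this]
    simp only [f, this, Finset.sum_ite_eq]
  have hfm : ∀ T, Measurable (f T) := fun T => Finset.measurable_sum _ fun i _ =>
    (measurable_one.indicator (measurableSet_cell l i)).const_mul _
  have hc1 : ∀ T i, |c T i| ≤ 1 := by
    intro T i; simp only [c]; split_ifs <;> simp
  have hf1 : ∀ T x, |f T x| ≤ 1 := by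
    intro T x; rw [hf]; split_ifs
    · exact hc1 _ _
    · simp
  have hfA : ∀ T, ∀ x ∉ sh d k, f T x = 0 := by
    intro T x hx
    rw [hf, if_neg]
    intro h
    exact hx (cell_subset_sh l k _ h rfl)
  have hSn : ∀ T n ω, Sn 𝔭 (f T) n ω =
      ∑ i ∈ cells d l k, c T i * Sn 𝔭 ((cell l i).indicator 1) n ω := by
    intro T n ω
    have hI : ∫ x, f T x ∂𝔭 = ∑ i ∈ cells d l k, c T i * ∫ x, (cell l i).indicator (1 : (Fin d → ℝ) → ℝ) x ∂𝔭 := by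
      simp only [f]
      rw [integral_finsetSum]
      · simp_rw [integral_const_mul]
      · intro i _
        exact ((integrable_const (1 : ℝ)).indicator (measurableSet_cell l i)).const_mul _
    simp only [Sn, hI, Finset.mul_sum, f]
    rw [Finset.sum_comm]
    refine Finset.sum_congr rfl fun j _ => ?_
    rw [← Finset.sum_sub_distrib]
    refine Finset.sum_congr rfl fun i _ => ?_
    ring
  have hall : ∀ᵐ ω ∂(Pinf 𝔭), ∀ T : Finset (Lab d), ∀ᶠ n : ℕ in Filter.atTop,
      |Sn 𝔭 (f T) n ω| ≤ 2 * Real.sqrt 2 * Real.sqrt (𝔭.real (sh d k)) * Real.sqrt (n * Log2 n) :=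
    ae_all_iff.2 fun T => lil (hfm T) (hf1 T) (measurableSet_sh k) (hfA T)
  filter_upwards [hall] with ω hω
  have h2 : ∀ᶠ n : ℕ in Filter.atTop, ∀ T ∈ (cells d l k).powerset, 
      |Sn 𝔭 (f T) n ω| ≤ 2 * Real.sqrt 2 * Real.sqrt (𝔭.real (sh d k)) * Real.sqrt (n * Log2 n) :=
    (Filter.eventually_all_finset _).2 fun T _ => hω T
  filter_upwards [h2, Filter.eventually_gt_atTop 0] with n hn hn0
  rw [Del, Finset.mul_sum]
  simp_rw [rt_mdiff 𝔭 n ω (measurableSet_cell l _)]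
  rw [← ENNReal.ofReal_sum_of_nonneg fun i _ => by positivity]
  refine ENNReal.ofReal_le_ofReal ?_
  rw [← Finset.sum_div]
  have hsq : 0 < Real.sqrt (n * Log2 n) := Real.sqrt_pos.2 (by
    have := Log2_pos (n : ℝ)
    positivity)
  rw [div_le_iff₀ hsq]
  let T := (cells d l k).filter fun i => 0 ≤ Sn 𝔭 ((cell l i).indicator 1) n ω
  refine le_trans ?_ (hn T (by simp [T]))
  refine le_trans (le_of_eq ?_) (le_abs_self _)
  rw [hSn]
  refine Finset.sum_congr rfl fun i hi => ?_
  simp only [c, T, Finset.mem_filter, hi, true_and]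
  split_ifs with h
  · rw [abs_of_nonneg h, one_mul]
  · rw [abs_of_neg (not_le.1 h)]; ring

end PD
end BNM

namespace BNM

section PD
variable {d : ℕ}

/-- the moment -/
def Mom (p δ : ℝ) (𝔭 : Measure (Fin d → ℝ)) : ℝ≥0∞ := ∫⁻ x, ENNReal.ofReal (eucNorm x ^ (2 * p + δ)) ∂𝔭

theorem measurable_Mom (p δ : ℝ) : Measurable (Mom (d := d) p δ) := by
  refine Measure.measurable_lintegral ?_
  exact (measurable_eucNorm.pow_const _).ennreal_ofReal

theorem sh_le (p δ : ℝ) (hq : 0 < 2 * p + δ) (𝔭 : Measure (Fin d → ℝ)) (k : ℕ) :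
    𝔭 (sh d (k + 1)) ≤ ENNReal.ofReal (2 ^ (-((2 * p + δ) * k))) * Mom p δ 𝔭 := by
  have h1 : ∀ x ∈ sh d (k + 1), ENNReal.ofReal (2 ^ ((2 * p + δ) * k)) ≤ ENNReal.ofReal (eucNorm x ^ (2 * p + δ)) := by
    intro x hx
    refine ENNReal.ofReal_le_ofReal ?_
    have := (shell_lt x k hx).le
    rw [mul_comm, Real.rpow_mul (by norm_num), Real.rpow_natCast]
    gcongr
  have h2 : ENNReal.ofReal (2 ^ ((2 * p + δ) * k)) * 𝔭 (sh d (k + 1)) ≤ Mom p δ 𝔭 := by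
    rw [← setLIntegral_const]
    exact (setLIntegral_mono' (measurableSet_sh _) h1).trans (setLIntegral_le_lintegral _ _)
  calc 𝔭 (sh d (k + 1)) = ENNReal.ofReal (2 ^ (-((2 * p + δ) * k))) *
        (ENNReal.ofReal (2 ^ ((2 * p + δ) * k)) * 𝔭 (sh d (k + 1))) := by
        rw [← mul_assoc, ← ENNReal.ofReal_mul (by positivity), ← Real.rpow_add (by norm_num)]
        simp
    _ ≤ _ := by gcongr

theorem tsum_geom_rpow (a : ℝ) (ha : 0 < a) :
    ∑' k : ℕ, ENNReal.ofReal (2 ^ (-(a * k))) = ENNReal.ofReal (1 / (1 - 2 ^ (-a))) := by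
  have h1 : (2 : ℝ) ^ (-a) < 1 := Real.rpow_lt_one_of_one_lt_of_neg (by norm_num) (by linarith)
  have e : ∀ k : ℕ, (2 : ℝ) ^ (-(a * k)) = (2 ^ (-a)) ^ k := by
    intro k
    rw [← Real.rpow_natCast, ← Real.rpow_mul (by norm_num)]; ring_nf
  simp_rw [e]
  rw [← ENNReal.ofReal_tsum_of_nonneg (fun i => by positivity) (summable_geometric_of_lt_one (by positivity) h1),
    tsum_geometric_of_lt_one (by positivity) h1, one_div]

/-- sum over shells -/
theorem shell_sum (p δ s : ℝ) (hp : 0 ≤ p) (hq : 0 < 2 * p + δ) (hs : 0 < s) (h : p < (2 * p + δ) * s)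
    (𝔭 : Measure (Fin d → ℝ)) [IsProbabilityMeasure 𝔭] :
    ∑' k, ENNReal.ofReal (wt p k) * 𝔭 (sh d k) ^ s ≤
      1 + ENNReal.ofReal (2 ^ p / (1 - 2 ^ (-((2 * p + δ) * s - p)))) * Mom p δ 𝔭 ^ s := by
  rw [tsum_eq_zero_add' ENNReal.summable]
  gcongr
  · have : 𝔭 (sh d 0) ^ s ≤ 1 := ENNReal.rpow_le_one prob_le_one hs.le
    simpa [wt] using this
  · have h2 : ∀ k : ℕ, ENNReal.ofReal (wt p (k + 1)) * 𝔭 (sh d (k + 1)) ^ s ≤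
        ENNReal.ofReal (2 ^ (-(((2 * p + δ) * s - p) * k))) * (ENNReal.ofReal (2 ^ p) * Mom p δ 𝔭 ^ s) := by
      intro k
      calc _ ≤ ENNReal.ofReal (wt p (k + 1)) * (ENNReal.ofReal (2 ^ (-((2 * p + δ) * k))) * Mom p δ 𝔭) ^ s := by
            gcongr
            exact sh_le p δ hq 𝔭 k
        _ = _ := by
            rw [ENNReal.mul_rpow_of_nonneg _ _ hs.le, ENNReal.ofReal_rpow_of_nonneg (by positivity) hs.le,
              ← mul_assoc, ← mul_assoc, ← ENNReal.ofReal_mul (wt_pos _ _).le,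
              ← ENNReal.ofReal_mul (by positivity), wt, ← Real.rpow_mul (by norm_num),
              ← Real.rpow_add (by norm_num), ← Real.rpow_add (by norm_num)]
            congr 3
            push_cast
            ring
    refine (ENNReal.tsum_le_tsum h2).trans ?_
    have h1 : (2 : ℝ) ^ (-((2 * p + δ) * s - p)) < 1 :=
      Real.rpow_lt_one_of_one_lt_of_neg (by norm_num) (by linarith)
    rw [ENNReal.tsum_mul_right, tsum_geom_rpow _ (by linarith), ← mul_assoc,
      ← ENNReal.ofReal_mul (by
        apply div_nonneg zero_le_one; linarith)]
    refine le_of_eq ?_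
    congr 2
    ring

theorem cells_pow (l k : ℕ) {s : ℝ} (hs0 : 0 < s) (hs1 : s < 1) (𝔭 : Measure (Fin d → ℝ)) :
    ∑ i ∈ cells d l k, 𝔭 (cell l i) ^ s ≤ ENNReal.ofReal ((3 * 2 ^ l) ^ (d * (1 - s))) * 𝔭 (sh d k) ^ s := by
  have h := ENNReal.rpow_sum_le_const_mul_sum_rpow (cells d l k) (fun i => 𝔭 (cell l i) ^ s)
    (p := 1 / s) (by rw [le_div_iff₀ hs0]; linarith)
  simp_rw [← ENNReal.rpow_mul] at h
  have e : s * (1 / s) = 1 := by field_simp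
  simp only [e, ENNReal.rpow_one] at h
  have h2 := h.trans (mul_le_mul_right (sum_cells l k 𝔭) _)
  have h3 := ENNReal.rpow_le_rpow h2 hs0.le
  rw [← ENNReal.rpow_mul, one_div, inv_mul_cancel₀ hs0.ne', ENNReal.rpow_one,
    ENNReal.mul_rpow_of_nonneg _ _ hs0.le, ← ENNReal.rpow_mul] at h3
  refine h3.trans ?_
  gcongr
  have e2 : (s⁻¹ - 1) * s = 1 - s := by field_simp
  rw [e2, Real.rpow_mul (by positivity), ← ENNReal.ofReal_rpow_of_nonneg (by positivity) (by linarith)]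
  have : ((cells d l k).card : ℝ≥0∞) ≤ ENNReal.ofReal ((3 * 2 ^ l) ^ (d : ℝ)) := by
    rw [Real.rpow_natCast, ← ENNReal.ofReal_natCast]
    refine ENNReal.ofReal_le_ofReal ?_
    exact_mod_cast card_cells d l k
  exact ENNReal.rpow_le_rpow this (by linarith)

/-- dominating function -/
def Gd (p : ℝ) (𝔭 : Measure (Fin d → ℝ)) (l k : ℕ) (ω : ℕ → (Fin d → ℝ)) : ℝ≥0∞ :=
  ENNReal.ofReal (coef p d l * wt p k) * ∑ i ∈ cells d l k,
    ⨆ n : ℕ, ENNReal.ofReal (|Sn 𝔭 ((cell l i).indicator 1) n ω| / Real.sqrt (n * Log2 n))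

theorem Gd_bound (p : ℝ) (𝔭 : Measure (Fin d → ℝ)) [IsProbabilityMeasure 𝔭] (l k n : ℕ) (ω : ℕ → (Fin d → ℝ)) :
    ENNReal.ofReal (coef p d l * wt p k) * (ENNReal.ofReal (rt n) * Del l k 𝔭 (empOf n (pre n ω))) ≤ Gd p 𝔭 l k ω := by
  rw [Gd, Del, Finset.mul_sum]
  simp_rw [rt_mdiff 𝔭 n ω (measurableSet_cell l _)]
  gcongr with i hi
  exact le_iSup (fun n : ℕ => ENNReal.ofReal (|Sn 𝔭 ((cell l i).indicator 1) n ω| / Real.sqrt (n * Log2 n))) n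

theorem coef_sum (p s : ℝ) (h : d * (1 - s) < p) :
    ∑' l, ENNReal.ofReal (coef p d l) * ENNReal.ofReal ((3 * 2 ^ l) ^ (d * (1 - s))) ≠ ⊤ := by
  rw [tsum_eq_zero_add' ENNReal.summable]
  refine ENNReal.add_ne_top.2 ⟨ENNReal.mul_ne_top ENNReal.ofReal_ne_top ENNReal.ofReal_ne_top, ?_⟩
  have e : ∀ l : ℕ, ENNReal.ofReal (coef p d (l + 1)) * ENNReal.ofReal ((3 * 2 ^ (l + 1)) ^ (d * (1 - s)))
      = ENNReal.ofReal (2 ^ (-((p - d * (1 - s)) * l))) * ENNReal.ofReal (d ^ (p / 2) * 6 ^ (d * (1 - s))) := by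
    intro l
    rw [← ENNReal.ofReal_mul (coef_nonneg _ _ _), ← ENNReal.ofReal_mul (by positivity)]
    congr 1
    have : (3 * 2 ^ (l + 1) : ℝ) = 6 * 2 ^ (l : ℝ) := by rw [Real.rpow_natCast]; ring
    rw [this, Real.mul_rpow (by norm_num) (by positivity), ← Real.rpow_mul (by norm_num)]
    simp only [coef, Dr]
    have : (-((p - d * (1 - s)) * l)) = -(p * l) + l * (d * (1 - s)) := by ring
    rw [this, Real.rpow_add (by norm_num)]
    ring
  simp_rw [e]
  rw [ENNReal.tsum_mul_right, tsum_geom_rpow _ (by linarith)]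
  exact ENNReal.mul_ne_top ENNReal.ofReal_ne_top ENNReal.ofReal_ne_top

variable (d) in
theorem Gd_int (p δ s : ℝ) (hp : 0 ≤ p) (hδ : 0 < δ) (hs0 : 0 < s) (hs1 : s < 1 / 2)
    (h : d * (1 - s) < p) (h' : p < (2 * p + δ) * s) : ∃ C : ℝ≥0∞, C ≠ ⊤ ∧
    ∀ (𝔭 : Measure (Fin d → ℝ)) [IsProbabilityMeasure 𝔭],
      ∫⁻ ω, ∑' l, ∑' k, Gd p 𝔭 l k ω ∂(Pinf 𝔭) ≤ C * (1 + Mom p δ 𝔭 ^ s) := by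
  obtain ⟨C, hC, hdom⟩ := dom (Fin d → ℝ) hs0 hs1
  set K := ∑' l, ENNReal.ofReal (coef p d l) * ENNReal.ofReal ((3 * 2 ^ l) ^ (d * (1 - s))) with hK
  set C2 := ENNReal.ofReal (2 ^ p / (1 - 2 ^ (-((2 * p + δ) * s - p)))) with hC2
  refine ⟨C * K * (1 + C2), ENNReal.mul_ne_top (ENNReal.mul_ne_top hC (coef_sum p s h))
    (ENNReal.add_ne_top.2 ⟨ENNReal.one_ne_top, ENNReal.ofReal_ne_top⟩), fun 𝔭 _ => ?_⟩
  have hm0 : ∀ (l : ℕ) (i : Lab d), Measurable fun ω : ℕ → Fin d → ℝ =>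
      ⨆ n : ℕ, ENNReal.ofReal (|Sn 𝔭 ((cell l i).indicator 1) n ω| / Real.sqrt (n * Log2 n)) := by
    intro l i
    refine Measurable.iSup fun n => ?_
    have := measurable_Sn (𝔭 := 𝔭) (f := (cell l i).indicator 1) (measurable_one.indicator (measurableSet_cell l i)) n
    have h2 : Measurable fun ω => |Sn 𝔭 ((cell l i).indicator 1) n ω| := by
      simpa [Real.norm_eq_abs] using this.norm
    exact (h2.div_const _).ennreal_ofReal
  have hm : ∀ l k, Measurable (Gd p 𝔭 l k) := fun l k => Measurable.const_mul (Finset.measurable_sum _ fun i _ => hm0 l i) _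
  rw [lintegral_tsum fun l => (Measurable.tsum fun k => hm l k).aemeasurable]
  have h1 : ∀ l k, ∫⁻ ω, Gd p 𝔭 l k ω ∂(Pinf 𝔭) ≤ 
      (ENNReal.ofReal (coef p d l) * ENNReal.ofReal ((3 * 2 ^ l) ^ (d * (1 - s)))) * C * (ENNReal.ofReal (wt p k) * 𝔭 (sh d k) ^ s) := by
    intro l k
    unfold Gd
    rw [lintegral_const_mul _ (Finset.measurable_sum _ fun i _ => hm0 l i),
      lintegral_finsetSum _ fun i _ => hm0 l i, ENNReal.ofReal_mul (coef_nonneg _ _ _)]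
    calc _ ≤ ENNReal.ofReal (coef p d l) * ENNReal.ofReal (wt p k) * ∑ i ∈ cells d l k, C * 𝔭 (cell l i) ^ s := by
          gcongr with i hi
          exact hdom 𝔭 _ (measurableSet_cell l i)
      _ ≤ ENNReal.ofReal (coef p d l) * ENNReal.ofReal (wt p k) * (C * (ENNReal.ofReal ((3 * 2 ^ l) ^ (d * (1 - s))) * 𝔭 (sh d k) ^ s)) := by
          rw [← Finset.mul_sum]
          gcongr
          exact cells_pow l k hs0 (by linarith) 𝔭
      _ = _ := by ring
  calc _ = ∑' l, ∑' k, ∫⁻ ω, Gd p 𝔭 l k ω ∂(Pinf 𝔭) := by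
        congr 1; ext l
        exact lintegral_tsum fun k => (hm l k).aemeasurable
    _ ≤ ∑' l, ∑' k, (ENNReal.ofReal (coef p d l) * ENNReal.ofReal ((3 * 2 ^ l) ^ (d * (1 - s)))) * C * (ENNReal.ofReal (wt p k) * 𝔭 (sh d k) ^ s) :=
        ENNReal.tsum_le_tsum fun l => ENNReal.tsum_le_tsum fun k => h1 l k
    _ = K * C * ∑' k, ENNReal.ofReal (wt p k) * 𝔭 (sh d k) ^ s := by
        simp_rw [ENNReal.tsum_mul_left, ENNReal.tsum_mul_right]
        rfl
    _ ≤ K * C * (1 + C2 * Mom p δ 𝔭 ^ s) := by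
        gcongr
        exact shell_sum p δ s hp (by linarith) hs0 h' 𝔭
    _ ≤ K * C * ((1 + C2) * (1 + Mom p δ 𝔭 ^ s)) := by
        gcongr
        calc 1 + C2 * Mom p δ 𝔭 ^ s ≤ 1 + C2 * Mom p δ 𝔭 ^ s + (C2 + Mom p δ 𝔭 ^ s) := le_self_add
          _ = _ := by ring
    _ = _ := by ring

end PD
end BNM

namespace BNM

section PD
variable {d : ℕ}

/-- normalised functional -/
def Xn (p : ℝ) (n : ℕ) (𝔭 : Measure (Fin d → ℝ)) (ω : ℕ → (Fin d → ℝ)) : ℝ≥0∞ :=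
  ENNReal.ofReal (rt n) * Phi p 𝔭 (empOf n (pre n ω))

/-- `Y^p` -/
def Zp (p δ : ℝ) (d : ℕ) (𝔭 : Measure (Fin d → ℝ)) : ℝ :=
  Real.sqrt 2 * Kpd p d / (1 - 2 ^ (-(p - (d : ℝ) / 2)))
    * (1 + 2 ^ p / (1 - 2 ^ (-δ / 2)) * ((Mom p δ 𝔭).toReal) ^ ((1 : ℝ) / 2))

theorem Xn_tsum (p : ℝ) (n : ℕ) (𝔭 : Measure (Fin d → ℝ)) (ω : ℕ → (Fin d → ℝ)) :
    Xn p n 𝔭 ω = ∑' z : ℕ × ℕ, ENNReal.ofReal (coef p d z.1 * wt p z.2) *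
      (ENNReal.ofReal (rt n) * Del z.1 z.2 𝔭 (empOf n (pre n ω))) := by
  rw [ENNReal.tsum_prod (f := fun l k => ENNReal.ofReal (coef p d l * wt p k) *
      (ENNReal.ofReal (rt n) * Del l k 𝔭 (empOf n (pre n ω)))), Xn, Phi, ← ENNReal.tsum_mul_left]
  congr 1; ext l
  rw [← ENNReal.tsum_mul_left]
  congr 1; ext k
  ring

theorem Xn_le_Gd (p : ℝ) (n : ℕ) (𝔭 : Measure (Fin d → ℝ)) [IsProbabilityMeasure 𝔭] (ω : ℕ → (Fin d → ℝ)) :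
    Xn p n 𝔭 ω ≤ ∑' l, ∑' k, Gd p 𝔭 l k ω := by
  rw [Xn_tsum, ← ENNReal.tsum_prod]
  exact ENNReal.tsum_le_tsum fun z => Gd_bound p 𝔭 z.1 z.2 n ω

theorem coef_tsum (p : ℝ) (hp : 1 ≤ p) (hd : 1 ≤ d) :
    ∑' l, ENNReal.ofReal (coef p d l) ≤ ENNReal.ofReal (d ^ (p / 2) * (2 ^ p / 2 + 1 / (1 - 2 ^ (-p)))) := by
  have h1 : (2 : ℝ) ^ (-p) < 1 := Real.rpow_lt_one_of_one_lt_of_neg (by norm_num) (by linarith)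
  have hd' : (1 : ℝ) ≤ d := by exact_mod_cast hd
  have h2 : (1 : ℝ) ≤ (d : ℝ) ^ (p / 2) := Real.one_le_rpow hd' (by linarith)
  have h3 : 0 ≤ 1 / (1 - (2 : ℝ) ^ (-p)) := div_nonneg zero_le_one (by linarith)
  rw [tsum_eq_zero_add' ENNReal.summable]
  simp only [coef, Dr]
  simp_rw [ENNReal.ofReal_mul (show (0 : ℝ) ≤ (d : ℝ) ^ (p / 2) by positivity)]
  rw [ENNReal.tsum_mul_left, tsum_geom_rpow p (by linarith), ← ENNReal.ofReal_mul (by positivity),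
    ← ENNReal.ofReal_mul (by positivity), ← ENNReal.ofReal_add (by positivity) (mul_nonneg (by positivity) h3)]
  refine ENNReal.ofReal_le_ofReal ?_
  rw [mul_add, Real.rpow_sub_one (by norm_num)]
  have : (0 : ℝ) ≤ 2 ^ p / 2 := by positivity
  nlinarith

theorem const_le (p : ℝ) (hp : 1 ≤ p) (hpd : (d : ℝ) / 2 < p) :
    (d : ℝ) ^ (p / 2) * (2 ^ p / 2 + 1 / (1 - 2 ^ (-p))) * (2 * Real.sqrt 2) ≤
      Real.sqrt 2 * Kpd p d / (1 - 2 ^ (-(p - (d : ℝ) / 2))) := by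
  have h1 : (2 : ℝ) ^ (-(p - (d : ℝ) / 2)) < 1 :=
    Real.rpow_lt_one_of_one_lt_of_neg (by norm_num) (by linarith)
  have h0 : (0 : ℝ) < (2 : ℝ) ^ (-(p - (d : ℝ) / 2)) := by positivity
  set a : ℝ := 2 ^ p with ha
  have ha2 : 2 ≤ a := by
    rw [ha]; simpa using Real.rpow_le_rpow_of_exponent_le (x := 2) (by norm_num) hp
  have e : (2 : ℝ) ^ (-p) = 1 / a := by rw [Real.rpow_neg (by norm_num), ha, one_div]
  have e2 : (2 : ℝ) ^ (2 * p) = a ^ 2 := by rw [ha, mul_comm, Real.rpow_mul (by norm_num)]; norm_cast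
  have ha1 : 0 < a - 1 := by linarith
  have hK : (d : ℝ) ^ (p / 2) * (a / 2 + 1 / (1 - 2 ^ (-p))) * (2 * Real.sqrt 2) ≤ Real.sqrt 2 * Kpd p d := by
    rw [Kpd, ← ha, e2, e]
    have : (a / 2 + 1 / (1 - 1 / a)) * 2 ≤ a ^ 2 * (a + 1) / (a - 1) ^ 2 := by
      rw [le_div_iff₀ (by positivity)]
      have : 1 / (1 - 1 / a) = a / (a - 1) := by field_simp
      rw [this]
      have : (a / 2 + a / (a - 1)) * 2 * (a - 1) ^ 2 = a * (a - 1) * (a + 1) := by field_simp; ring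
      rw [this]
      nlinarith
    calc _ = (d : ℝ) ^ (p / 2) * Real.sqrt 2 * ((a / 2 + 1 / (1 - 1 / a)) * 2) := by ring
      _ ≤ (d : ℝ) ^ (p / 2) * Real.sqrt 2 * (a ^ 2 * (a + 1) / (a - 1) ^ 2) := by gcongr
      _ = _ := by ring
  refine hK.trans ?_
  have hK0 : 0 ≤ Real.sqrt 2 * Kpd p d := by unfold Kpd; positivity
  rw [le_div_iff₀ (by linarith)]
  nlinarith

theorem Zp_bound (p δ : ℝ) (hp : 1 ≤ p) (hpd : (d : ℝ) / 2 < p) (hδ : 0 < δ) (hd : 1 ≤ d)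
    (𝔭 : Measure (Fin d → ℝ)) [IsProbabilityMeasure 𝔭] (hM : Mom p δ 𝔭 ≠ ⊤) :
    ∑' z : ℕ × ℕ, ENNReal.ofReal (coef p d z.1 * wt p z.2) *
      ENNReal.ofReal (2 * Real.sqrt 2 * Real.sqrt (𝔭.real (sh d z.2))) ≤ ENNReal.ofReal (Zp p δ d 𝔭) := by
  have h1 : (2 : ℝ) ^ (-p) < 1 := Real.rpow_lt_one_of_one_lt_of_neg (by norm_num) (by linarith)
  have h2 : (2 : ℝ) ^ (-δ / 2) < 1 := Real.rpow_lt_one_of_one_lt_of_neg (by norm_num) (by linarith)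
  have h3 : 0 ≤ 1 / (1 - (2 : ℝ) ^ (-p)) := div_nonneg zero_le_one (by linarith)
  have h4 : 0 ≤ 2 ^ p / (1 - (2 : ℝ) ^ (-δ / 2)) := div_nonneg (by positivity) (by linarith)
  have e : ∀ l k, ENNReal.ofReal (coef p d l * wt p k) *
      ENNReal.ofReal (2 * Real.sqrt 2 * Real.sqrt (𝔭.real (sh d k))) =
      ENNReal.ofReal (coef p d l) * ENNReal.ofReal (2 * Real.sqrt 2) * (ENNReal.ofReal (wt p k) * 𝔭 (sh d k) ^ (1 / 2 : ℝ)) := by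
    intro l k
    rw [ENNReal.ofReal_mul (coef_nonneg _ _ _), ENNReal.ofReal_mul (by positivity),
      Real.sqrt_eq_rpow (𝔭.real _), ← ENNReal.ofReal_rpow_of_nonneg measureReal_nonneg (by norm_num), ofReal_measureReal]
    ring
  rw [ENNReal.tsum_prod (f := fun l k => ENNReal.ofReal (coef p d l * wt p k) *
      ENNReal.ofReal (2 * Real.sqrt 2 * Real.sqrt (𝔭.real (sh d k))))]
  simp_rw [e]
  simp_rw [ENNReal.tsum_mul_left, ENNReal.tsum_mul_right]
  have hs := shell_sum p δ (1 / 2) (by linarith) (by linarith) (by norm_num) (by linarith) 𝔭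
  have e3 : -((2 * p + δ) * (1 / 2) - p) = -δ / 2 := by ring
  rw [e3] at hs
  calc _ ≤ ENNReal.ofReal (d ^ (p / 2) * (2 ^ p / 2 + 1 / (1 - 2 ^ (-p)))) * ENNReal.ofReal (2 * Real.sqrt 2) *
        (1 + ENNReal.ofReal (2 ^ p / (1 - 2 ^ (-δ / 2))) * Mom p δ 𝔭 ^ (1 / 2 : ℝ)) := by
        gcongr
        exact coef_tsum p hp hd
    _ = ENNReal.ofReal (d ^ (p / 2) * (2 ^ p / 2 + 1 / (1 - 2 ^ (-p))) * (2 * Real.sqrt 2) *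
        (1 + 2 ^ p / (1 - 2 ^ (-δ / 2)) * ((Mom p δ 𝔭).toReal) ^ ((1 : ℝ) / 2))) := by
        have e4 : Mom p δ 𝔭 ^ (1 / 2 : ℝ) = ENNReal.ofReal ((Mom p δ 𝔭).toReal ^ ((1 : ℝ) / 2)) := by
          rw [← ENNReal.ofReal_rpow_of_nonneg ENNReal.toReal_nonneg (by norm_num), ENNReal.ofReal_toReal hM]
        rw [e4, ← ENNReal.ofReal_mul h4, ← ENNReal.ofReal_one, ← ENNReal.ofReal_add zero_le_one (by positivity),
          ← ENNReal.ofReal_mul (by positivity), ← ENNReal.ofReal_mul (by positivity)]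
    _ ≤ _ := by
        refine ENNReal.ofReal_le_ofReal ?_
        rw [Zp]
        gcongr
        exact const_le p hp hpd

theorem Xn_limsup (p δ : ℝ) (hp : 1 ≤ p) (hpd : (d : ℝ) / 2 < p) (hδ : 0 < δ) (hd : 1 ≤ d)
    (𝔭 : Measure (Fin d → ℝ)) [IsProbabilityMeasure 𝔭] (hM : Mom p δ 𝔭 ≠ ⊤)
    (hG : ∫⁻ ω, ∑' l, ∑' k, Gd p 𝔭 l k ω ∂(Pinf 𝔭) ≠ ⊤) (hGm : AEMeasurable (fun ω => ∑' l, ∑' k, Gd p 𝔭 l k ω) (Pinf 𝔭)) :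
    ∀ᵐ ω ∂(Pinf 𝔭), Filter.limsup (fun n => Xn p n 𝔭 ω) Filter.atTop ≤ ENNReal.ofReal (Zp p δ d 𝔭) := by
  have hfin := ae_lt_top' hGm hG
  have hl : ∀ᵐ ω ∂(Pinf 𝔭), ∀ l k, ∀ᶠ n : ℕ in Filter.atTop, ENNReal.ofReal (rt n) * Del l k 𝔭 (empOf n (pre n ω)) ≤
      ENNReal.ofReal (2 * Real.sqrt 2 * Real.sqrt (𝔭.real (sh d k))) :=
    ae_all_iff.2 fun l => ae_all_iff.2 fun k => lil_Del 𝔭 l k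
  filter_upwards [hfin, hl] with ω h1 h2
  simp_rw [Xn_tsum, ← lintegral_count]
  refine (limsup_lintegral_le (fun z : ℕ × ℕ => Gd p 𝔭 z.1 z.2 ω) (fun n => Measurable.of_discrete)
    (fun n => Filter.Eventually.of_forall fun z => Gd_bound p 𝔭 z.1 z.2 n ω) ?_).trans ?_
  · rw [lintegral_count, ENNReal.tsum_prod (f := fun l k => Gd p 𝔭 l k ω)]
    exact h1.ne
  · rw [lintegral_count]
    refine le_trans (ENNReal.tsum_le_tsum fun z => ?_) (Zp_bound p δ hp hpd hδ hd 𝔭 hM)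
    refine Filter.limsup_le_of_le (by isBoundedDefault) ?_
    filter_upwards [h2 z.1 z.2] with n hn
    gcongr

end PD
end BNM

namespace BNM

section PE

theorem mart {Ω : Type*} {m0 : MeasurableSpace Ω} {ρ : Measure Ω} [IsProbabilityMeasure ρ]
    (ℱ : Filtration ℕ m0) (hsup : ⨆ n, ℱ n = m0) (X J : ℕ → Ω → ℝ≥0∞) (hX : ∀ n, Measurable (X n))
    (hJ : ∀ n, Measurable[ℱ n] (J n)) (hInteg : ∫⁻ ω, ⨆ n, X n ω ∂ρ ≠ ⊤)
    (h : ∀ n A, MeasurableSet[ℱ n] A → ∫⁻ ω in A, J n ω ∂ρ ≤ ∫⁻ ω in A, X n ω ∂ρ) :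
    ∀ᵐ ω ∂ρ, Filter.limsup (fun n => J n ω) Filter.atTop ≤ Filter.limsup (fun n => X n ω) Filter.atTop := by
  let U : ℕ → Ω → ℝ≥0∞ := fun N ω => ⨆ i, X (i + N) ω
  have hUm : ∀ N, Measurable (U N) := fun N => Measurable.iSup fun i => hX _
  have hUle : ∀ N ω, U N ω ≤ ⨆ n, X n ω := fun N ω => iSup_le fun i => le_iSup (fun n => X n ω) (i + N)
  have hUint : ∀ N, ∫⁻ ω, U N ω ∂ρ ≠ ⊤ := fun N =>
    ne_top_of_le_ne_top hInteg (lintegral_mono (hUle N))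
  have hUfin : ∀ N, ∀ᵐ ω ∂ρ, U N ω < ⊤ := fun N => ae_lt_top (hUm N) (hUint N)
  let u : ℕ → Ω → ℝ := fun N ω => (U N ω).toReal
  have hu : ∀ N, Integrable (u N) ρ := fun N => integrable_toReal_of_lintegral_ne_top (hUm N).aemeasurable (hUint N)
  have hconv : ∀ᵐ ω ∂ρ, ∀ N, Filter.Tendsto (fun n => (ρ[u N | ℱ n]) ω) Filter.atTop (nhds (u N ω)) := by
    refine ae_all_iff.2 fun N => (hu N).tendsto_ae_condExp ?_
    rw [hsup]
    exact (hUm N).ennreal_toReal.stronglyMeasurable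
  have hle : ∀ᵐ ω ∂ρ, ∀ N n, N ≤ n → J n ω ≤ ENNReal.ofReal ((ρ[u N | ℱ n]) ω) := by
    refine ae_all_iff.2 fun N => ae_all_iff.2 fun n => ?_
    by_cases hNn : N ≤ n
    swap
    · exact Filter.Eventually.of_forall fun ω h => absurd h hNn
    simp only [hNn, true_imp_iff]
    refine ae_le_of_ae_le_trim (hm := ℱ.le n) ?_
    have hcm : Measurable[ℱ n] fun ω => ENNReal.ofReal ((ρ[u N | ℱ n]) ω) :=
      ENNReal.measurable_ofReal.comp stronglyMeasurable_condExp.measurable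
    refine ae_le_of_forall_setLIntegral_le_of_sigmaFinite (hJ n) fun A hA _ => ?_
    have hA' : MeasurableSet A := ℱ.le n _ hA
    rw [restrict_trim (ℱ.le n) ρ hA, lintegral_trim (ℱ.le n) (hJ n), lintegral_trim (ℱ.le n) hcm]
    refine (h n A hA).trans ?_
    have hc0 : 0 ≤ᵐ[ρ] ρ[u N | ℱ n] := condExp_nonneg (Filter.Eventually.of_forall fun ω => ENNReal.toReal_nonneg)
    calc ∫⁻ ω in A, X n ω ∂ρ ≤ ∫⁻ ω in A, U N ω ∂ρ := by
          refine lintegral_mono fun ω => ?_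
          have := le_iSup (fun i => X (i + N) ω) (n - N)
          simpa [Nat.sub_add_cancel hNn] using this
      _ = ∫⁻ ω in A, ENNReal.ofReal (u N ω) ∂ρ := by
          refine lintegral_congr_ae (ae_restrict_of_ae ?_)
          filter_upwards [hUfin N] with ω hω
          exact (ENNReal.ofReal_toReal hω.ne).symm
      _ = ENNReal.ofReal (∫ ω in A, u N ω ∂ρ) :=
          (ofReal_integral_eq_lintegral_ofReal (hu N).integrableOn (Filter.Eventually.of_forall fun ω => ENNReal.toReal_nonneg)).symm
      _ = ENNReal.ofReal (∫ ω in A, (ρ[u N | ℱ n]) ω ∂ρ) := by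
          rw [setIntegral_condExp (ℱ.le n) (hu N) hA]
      _ = _ := ofReal_integral_eq_lintegral_ofReal integrable_condExp.integrableOn (ae_restrict_of_ae hc0)
  filter_upwards [hconv, hle, ae_all_iff.2 hUfin] with ω h1 h2 h3
  rw [Filter.limsup_eq_iInf_iSup_of_nat' (u := fun n => X n ω)]
  refine le_iInf fun N => ?_
  have h4 : Filter.Tendsto (fun n => ENNReal.ofReal ((ρ[u N | ℱ n]) ω)) Filter.atTop (nhds (U N ω)) := by
    have := ENNReal.tendsto_ofReal (h1 N)
    rwa [ENNReal.ofReal_toReal (h3 N).ne] at this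
  change _ ≤ U N ω
  rw [← h4.limsup_eq]
  refine Filter.limsup_le_limsup ?_
  filter_upwards [Filter.eventually_ge_atTop N] with n hn
  exact h2 N n hn

theorem Filt_sup (E : Type*) [MeasurableSpace E] :
    ⨆ n, Filt E n = (inferInstance : MeasurableSpace (ℕ → E)) := by
  refine le_antisymm (iSup_le fun n => (Filt E).le n) ?_
  refine iSup_le fun i => ?_
  refine le_trans ?_ (le_iSup (fun n => (Filt E n : MeasurableSpace _)) (i + 1))
  change _ ≤ MeasurableSpace.comap (pre (i + 1)) _
  have : (fun ω : ℕ → E => ω i) = (fun v : Fin (i + 1) → E => v ⟨i, by omega⟩) ∘ pre (i + 1) := rfl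
  rw [this, ← MeasurableSpace.comap_comp]
  exact MeasurableSpace.comap_mono (Measurable.comap_le (by fun_prop))

variable {d : ℕ}

/-- normalisation to a probability measure -/
def Nm (𝔭 : Measure (Fin d → ℝ)) : Measure (Fin d → ℝ) :=
  open Classical in if 𝔭 Set.univ = 1 then 𝔭 else Measure.dirac 0

theorem Nm_eq (𝔭 : Measure (Fin d → ℝ)) [IsProbabilityMeasure 𝔭] : Nm 𝔭 = 𝔭 := by simp [Nm]

instance Nm_prob (𝔭 : Measure (Fin d → ℝ)) : IsProbabilityMeasure (Nm 𝔭) := by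
  unfold Nm
  split_ifs with h
  · exact ⟨h⟩
  · infer_instance

theorem measurable_Nm : Measurable (Nm (d := d)) := by
  unfold Nm
  refine Measurable.ite ?_ measurable_id measurable_const
  exact Measure.measurable_coe MeasurableSet.univ (measurableSet_singleton 1)

def Nk (d : ℕ) : Kernel (Measure (Fin d → ℝ)) (Fin d → ℝ) := ⟨Nm, measurable_Nm⟩

instance : IsMarkovKernel (Nk d) := ⟨fun 𝔭 => Nm_prob 𝔭⟩

/-- infinite product of a kernel -/
def prodK {T E : Type*} [MeasurableSpace T] [MeasurableSpace E] (κ : Kernel T E) [IsMarkovKernel κ] :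
    Kernel T (ℕ → E) where
  toFun t := Measure.infinitePi fun _ : ℕ => κ t
  measurable' := by
    refine Measurable.measure_of_isPiSystem_of_isProbabilityMeasure generateFrom_squareCylinders.symm
      (isPiSystem_squareCylinders (fun _ => MeasurableSpace.isPiSystem_measurableSet) (by simp)) ?_
    rintro _ ⟨s, t, ht, rfl⟩
    have ht' : ∀ i, MeasurableSet (t i) := fun i => ht i (Set.mem_univ i)
    simp_rw [Measure.infinitePi_pi _ (fun i _ => ht' i)]
    exact Finset.measurable_prod _ fun i _ => Kernel.measurable_coe κ (ht' i)

theorem prodK_apply {T E : Type*} [MeasurableSpace T] [MeasurableSpace E] (κ : Kernel T E) [IsMarkovKernel κ] (t : T) :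
    prodK κ t = Measure.infinitePi fun _ : ℕ => κ t := rfl

instance {T E : Type*} [MeasurableSpace T] [MeasurableSpace E] (κ : Kernel T E) [IsMarkovKernel κ] :
    IsMarkovKernel (prodK κ) := ⟨fun t => by rw [prodK_apply]; infer_instance⟩

theorem iid_eq (iid : Measure (Fin d → ℝ) → Measure (ℕ → (Fin d → ℝ)))
    (hiid : ∀ 𝔭 : Measure (Fin d → ℝ), IsProbabilityMeasure 𝔭 →
      IsProbabilityMeasure (iid 𝔭) ∧
        ∀ (n : ℕ) (A : Fin n → Set (Fin d → ℝ)), (∀ i, MeasurableSet (A i)) →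
          iid 𝔭 {ω | ∀ i : Fin n, ω (i : ℕ) ∈ A i} = ∏ i, 𝔭 (A i))
    (𝔭 : Measure (Fin d → ℝ)) [IsProbabilityMeasure 𝔭] : iid 𝔭 = Pinf 𝔭 := by
  classical
  refine Measure.eq_infinitePi _ fun s t ht => ?_
  obtain ⟨n, hn⟩ : ∃ n, s ⊆ Finset.range n := ⟨s.sup id + 1, fun i hi => by
    simp only [Finset.mem_range]; exact Nat.lt_succ_of_le (Finset.le_sup (f := id) hi)⟩
  have h := (hiid 𝔭 inferInstance).2 n (fun i => if (i : ℕ) ∈ s then t i else Set.univ) (by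
    intro i; split_ifs
    · exact ht _
    · exact MeasurableSet.univ)
  have e : {ω : ℕ → Fin d → ℝ | ∀ i : Fin n, ω (i : ℕ) ∈ if (i : ℕ) ∈ s then t i else Set.univ} = Set.pi s t := by
    ext ω
    simp only [Set.mem_ofPred_eq, Set.mem_pi, Finset.mem_coe]
    constructor
    · intro h i hi
      have := h ⟨i, by simpa using hn hi⟩
      simpa [hi] using this
    · intro h i
      split_ifs with hi
      · exact h _ hi
      · trivial
  rw [e] at h
  rw [h, Fin.prod_univ_eq_prod_range (fun i => 𝔭 (if i ∈ s then t i else Set.univ)) n,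
    ← Finset.prod_subset hn]
  · exact Finset.prod_congr rfl fun i hi => by simp [hi]
  · intro i _ hi
    simp [hi]

theorem joint (iid : Measure (Fin d → ℝ) → Measure (ℕ → (Fin d → ℝ)))
    (hiid : ∀ 𝔭 : Measure (Fin d → ℝ), IsProbabilityMeasure 𝔭 → iid 𝔭 = Pinf 𝔭)
    (ρ : Measure (ℕ → (Fin d → ℝ))) [IsProbabilityMeasure ρ]
    (ptilde : (ℕ → (Fin d → ℝ)) → Measure (Fin d → ℝ)) (hptilde_meas : Measurable ptilde)
    (hptilde_prob : ∀ᵐ ω ∂ρ, IsProbabilityMeasure (ptilde ω))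
    (hdirect : ∀ C : Set (ℕ → (Fin d → ℝ)), MeasurableSet C →
      ∀ B : Set (Measure (Fin d → ℝ)), MeasurableSet B →
        ρ (C ∩ ptilde ⁻¹' B) = ∫⁻ ω in ptilde ⁻¹' B, iid (ptilde ω) C ∂ρ) :
    ρ.map (fun ω => (ptilde ω, ω)) = (ρ.map ptilde) ⊗ₘ (prodK (Nk d)) := by
  have hm : Measurable fun ω => (ptilde ω, ω) := hptilde_meas.prodMk measurable_id
  have := Measure.isProbabilityMeasure_map hm.aemeasurable (μ := ρ)
  have := Measure.isProbabilityMeasure_map hptilde_meas.aemeasurable (μ := ρ)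
  refine Measure.ext_prod fun {B C} hB hC => ?_
  rw [Measure.map_apply hm (hB.prod hC), Measure.compProd_apply_prod hB hC,
    setLIntegral_map hB (Kernel.measurable_coe _ hC) hptilde_meas]
  have : (fun ω => (ptilde ω, ω)) ⁻¹' (B ×ˢ C) = C ∩ ptilde ⁻¹' B := by
    ext ω; simp [and_comm]
  rw [this, hdirect C hC B hB]
  refine lintegral_congr_ae (ae_restrict_of_ae ?_)
  filter_upwards [hptilde_prob] with ω hω
  rw [hiid _ hω, prodK_apply]
  have : Nk d (ptilde ω) = ptilde ω := Nm_eq _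
  simp_rw [this]

end PE
end BNM

namespace BNM

section PF

theorem ofReal_integral_le {X : Type*} [MeasurableSpace X] (μ : Measure X) (f : X → ℝ) (hf : ∀ x, 0 ≤ f x) :
    ENNReal.ofReal (∫ x, f x ∂μ) ≤ ∫⁻ x, ENNReal.ofReal (f x) ∂μ := by
  by_cases h : Integrable f μ
  · exact (ofReal_integral_eq_lintegral_ofReal h (Filter.Eventually.of_forall hf)).le
  · rw [integral_undef h]; simp

theorem wassW_nonneg {X : Type*} [MeasurableSpace X] (c : X → X → ℝ) (hc : ∀ x y, 0 ≤ c x y) (p : ℝ)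
    (μ ν : Measure X) : 0 ≤ wassW c p μ ν := by
  refine Real.sInf_nonneg ?_
  rintro r ⟨γ, -, -, rfl⟩
  exact Real.rpow_nonneg (integral_nonneg fun z => Real.rpow_nonneg (hc _ _) _) _

theorem wassW_le {X : Type*} [MeasurableSpace X] (c : X → X → ℝ) (hc : ∀ x y, 0 ≤ c x y) (p : ℝ) (hp : 1 ≤ p)
    (μ ν : Measure X) (γ : Measure (X × X)) (h1 : γ.map Prod.fst = μ) (h2 : γ.map Prod.snd = ν) :
    ENNReal.ofReal (wassW c p μ ν ^ p) ≤ ∫⁻ z, ENNReal.ofReal (c z.1 z.2 ^ p) ∂γ := by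
  have hi : 0 ≤ ∫ z, c z.1 z.2 ^ p ∂γ := integral_nonneg fun z => Real.rpow_nonneg (hc _ _) _
  refine le_trans (ENNReal.ofReal_le_ofReal ?_)
    (ofReal_integral_le γ (fun z => c z.1 z.2 ^ p) fun z => Real.rpow_nonneg (hc _ _) _)
  have h3 : wassW c p μ ν ≤ (∫ z, c z.1 z.2 ^ p ∂γ) ^ (1 / p) := by
    refine csInf_le ⟨0, ?_⟩ ⟨γ, h1, h2, rfl⟩
    rintro r ⟨γ, -, -, rfl⟩
    exact Real.rpow_nonneg (integral_nonneg fun z => Real.rpow_nonneg (hc _ _) _) _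
  calc wassW c p μ ν ^ p ≤ ((∫ z, c z.1 z.2 ^ p ∂γ) ^ (1 / p)) ^ p :=
        Real.rpow_le_rpow (wassW_nonneg c hc p μ ν) h3 (by linarith)
    _ = _ := by
        rw [← Real.rpow_mul hi, one_div, inv_mul_cancel₀ (by linarith), Real.rpow_one]

variable {d : ℕ}

theorem empOf_cW (p : ℝ) (n : ℕ) (hn : n ≠ 0) (v : Fin n → (Fin d → ℝ)) : ∫⁻ y, cW p y ∂(empOf n v) ≠ ⊤ := by
  rw [empOf, lintegral_smul_measure, lintegral_finsetSum_measure]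
  simp_rw [lintegral_dirac' _ (measurable_cW p)]
  refine ENNReal.mul_ne_top (by simpa using hn) ?_
  refine (ENNReal.sum_lt_top.2 fun i _ => ?_).ne
  exact ENNReal.ofReal_lt_top

theorem Dl_tendsto (p : ℝ) (hp : 1 ≤ p) : Filter.Tendsto (fun L => Dl p d L) Filter.atTop (nhds 0) := by
  have h1 : (2 : ℝ) ^ (-p) < 1 := Real.rpow_lt_one_of_one_lt_of_neg (by norm_num) (by linarith)
  have h := (tendsto_pow_atTop_nhds_zero_of_lt_one (by positivity) h1).const_mul ((d : ℝ) ^ (p / 2))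
  have h2 := ENNReal.tendsto_ofReal h
  simp only [mul_zero, ENNReal.ofReal_zero] at h2
  refine h2.congr fun L => ?_
  rw [Dl, Dr, ← Real.rpow_natCast, ← Real.rpow_mul (by norm_num), neg_mul]

theorem le_of_Dl {p : ℝ} (hp : 1 ≤ p) {a b c : ℝ≥0∞} (hc : c ≠ ⊤) (h : ∀ L, a ≤ b + Dl p d L * c) : a ≤ b := by
  have h1 : Filter.Tendsto (fun L => b + Dl p d L * c) Filter.atTop (nhds (b + 0 * c)) :=
    tendsto_const_nhds.add (ENNReal.Tendsto.mul_const (Dl_tendsto p hp) (Or.inr hc))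
  rw [zero_mul, add_zero] at h1
  exact ge_of_tendsto' h1 h

theorem wass_Phi (p : ℝ) (hp : 1 ≤ p) (𝔭 e : Measure (Fin d → ℝ)) [IsProbabilityMeasure 𝔭] [IsProbabilityMeasure e]
    (he : ∫⁻ y, cW p y ∂e ≠ ⊤) : ENNReal.ofReal (wassW eucDist p 𝔭 e ^ p) ≤ Phi p 𝔭 e := by
  refine le_of_Dl (d := d) hp he fun L => ?_
  obtain ⟨γ, h1, h2, h3⟩ := concrete_coupling (T := Unit) p hp L (Kernel.const _ 𝔭) (Kernel.const _ e)
  exact (wassW_le eucDist eucDist_nonneg p hp 𝔭 e (γ ()) (h1 ()) (h2 ())).trans (h3 ())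

/-- part (i) deterministic bound -/
theorem post_bound (p : ℝ) (hp : 1 ≤ p) (n : ℕ) (hn : n ≠ 0) (v : Fin n → (Fin d → ℝ))
    (Q : Measure (Measure (Fin d → ℝ))) (hQ : ∀ᵐ 𝔭 ∂Q, IsProbabilityMeasure 𝔭) [IsProbabilityMeasure Q] :
    ENNReal.ofReal (wassW (fun μ ν => wassW eucDist p μ ν) p Q (Measure.dirac (empOf n v)) ^ p) ≤
      ∫⁻ 𝔭, Phi p 𝔭 (empOf n v) ∂Q := by
  have := empOf_prob n hn v
  have hm : Measurable fun 𝔭 : Measure (Fin d → ℝ) => (𝔭, empOf n v) := measurable_id.prodMk measurable_const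
  refine (wassW_le _ (fun μ ν => wassW_nonneg _ eucDist_nonneg p μ ν) p hp Q _ (Q.map fun 𝔭 => (𝔭, empOf n v)) ?_ ?_).trans ?_
  · rw [Measure.map_map measurable_fst hm]; exact Measure.map_id
  · rw [Measure.map_map measurable_snd hm]
    change Q.map (fun _ => empOf n v) = _
    rw [Measure.map_const]; simp
  · refine (lintegral_map_le _ _).trans (lintegral_mono_ae ?_)
    filter_upwards [hQ] with 𝔭 h𝔭
    exact wass_Phi p hp 𝔭 _ (empOf_cW p n hn v)

theorem empShift_apply (n m : ℕ) (ω : ℕ → (Fin d → ℝ)) {B : Set (Fin d → ℝ)} (hB : MeasurableSet B) :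
    empShift n m ω B = (m : ℝ≥0∞)⁻¹ * ∑ i ∈ Finset.range m, B.indicator 1 (ω (i + n)) := by
  simp [empShift, Measure.dirac_apply' _ hB]

theorem measurable_empShift (n m : ℕ) : Measurable (empShift (d := d) n m) := by
  refine Measure.measurable_of_measurable_coe _ fun B hB => ?_
  simp_rw [empShift_apply n m _ hB]
  refine Measurable.const_mul (Finset.measurable_sum _ fun i _ => ?_) _
  exact (measurable_one.indicator hB).comp (measurable_pi_apply _)

theorem empShift_prob (n m : ℕ) (hm : 1 ≤ m) (ω : ℕ → (Fin d → ℝ)) : empShift n m ω Set.univ = 1 := by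
  rw [empShift_apply _ _ _ MeasurableSet.univ]
  simp
  exact ENNReal.inv_mul_cancel (by simp; omega) (by simp)

theorem wass_emp (p : ℝ) (hp : 1 ≤ p) (n m : ℕ) (x y : ℕ → (Fin d → ℝ)) :
    ENNReal.ofReal (wassW eucDist p (empShift n m x) (empShift n m y) ^ p) ≤
      (m : ℝ≥0∞)⁻¹ * ∑ i ∈ Finset.range m, cost p (x (i + n), y (i + n)) := by
  refine (wassW_le eucDist eucDist_nonneg p hp _ _
    ((m : ℝ≥0∞)⁻¹ • ∑ i ∈ Finset.range m, Measure.dirac (x (i + n), y (i + n))) ?_ ?_).trans ?_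
  · ext B hB
    rw [Measure.map_apply measurable_fst hB, empShift_apply _ _ _ hB]
    simp [Measure.dirac_apply' _ (measurable_fst hB)]
    rfl
  · ext B hB
    rw [Measure.map_apply measurable_snd hB, empShift_apply _ _ _ hB]
    simp [Measure.dirac_apply' _ (measurable_snd hB)]
    rfl
  · rw [lintegral_smul_measure, lintegral_finsetSum_measure]
    change (m : ℝ≥0∞)⁻¹ • ∑ i ∈ Finset.range m, ∫⁻ z, cost p z ∂_ ≤ _
    simp_rw [lintegral_dirac' _ (measurable_cost p)]
    rfl

theorem prodK_map {T E F : Type*} [MeasurableSpace T] [MeasurableSpace E] [MeasurableSpace F]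
    (κ : Kernel T E) [IsMarkovKernel κ] (η : Kernel T F) [IsMarkovKernel η] (f : E → F) (hf : Measurable f) (t : T)
    (h : (κ t).map f = η t) : (prodK κ t).map (fun x i => f (x i)) = prodK η t := by
  rw [prodK_apply, prodK_apply, Measure.infinitePi_map_pi (f := fun _ => f) _ (fun _ => hf)]
  simp_rw [h]

/-- part (ii) deterministic bound -/
theorem pred_bound (p : ℝ) (hp : 1 ≤ p) (n m : ℕ) (hn : n ≠ 0) (hm : 1 ≤ m) (v : Fin n → (Fin d → ℝ))
    (Q : Measure (Measure (Fin d → ℝ))) (hQ : ∀ᵐ 𝔭 ∂Q, IsProbabilityMeasure 𝔭) [IsProbabilityMeasure Q] :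
    ENNReal.ofReal (wassW (fun μ ν => wassW eucDist p μ ν) p ((Q.bind (prodK (Nk d))).map (empShift n m))
      ((Measure.infinitePi fun _ : ℕ => Nm (empOf n v)).map (empShift n m)) ^ p) ≤
      ∫⁻ 𝔭, Phi p 𝔭 (empOf n v) ∂Q := by
  have := empOf_prob n hn v
  set e := empOf n v with he
  refine le_of_Dl (d := d) hp (empOf_cW p n hn v) fun L => ?_
  obtain ⟨γ, h1, h2, h3⟩ := concrete_coupling (T := Measure (Fin d → ℝ)) p hp L (Nk d) (Kernel.const _ e)
  have : IsMarkovKernel γ := ⟨fun t => by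
    have := h1 t
    constructor
    rw [← Set.preimage_univ (f := Prod.fst), ← Measure.map_apply measurable_fst MeasurableSet.univ, h1 t]
    simp⟩
  let G : (ℕ → (Fin d → ℝ) × (Fin d → ℝ)) → Measure (Fin d → ℝ) × Measure (Fin d → ℝ) :=
    fun z => (empShift n m fun i => (z i).1, empShift n m fun i => (z i).2)
  have hG1 : Measurable fun z : ℕ → (Fin d → ℝ) × (Fin d → ℝ) => fun i => (z i).1 := by fun_prop
  have hG2 : Measurable fun z : ℕ → (Fin d → ℝ) × (Fin d → ℝ) => fun i => (z i).2 := by fun_prop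
  have hG : Measurable G := ((measurable_empShift n m).comp hG1).prodMk ((measurable_empShift n m).comp hG2)
  refine (wassW_le _ (fun μ ν => wassW_nonneg _ eucDist_nonneg p μ ν) p hp _ _ ((Q.bind (prodK γ)).map G) ?_ ?_).trans ?_
  · rw [Measure.map_map measurable_fst hG]
    change (Q.bind (prodK γ)).map (empShift n m ∘ fun z i => (z i).1) = _
    rw [← Measure.map_map (measurable_empShift n m) hG1]
    congr 1
    rw [Measure.map_comp _ _ hG1]
    congr 1
    ext1 t
    rw [Kernel.map_apply _ hG1]
    exact prodK_map γ (Nk d) Prod.fst measurable_fst t (h1 t)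
  · rw [Measure.map_map measurable_snd hG]
    change (Q.bind (prodK γ)).map (empShift n m ∘ fun z i => (z i).2) = _
    rw [← Measure.map_map (measurable_empShift n m) hG2]
    congr 1
    rw [Measure.map_comp _ _ hG2]
    have : (prodK γ).map (fun z i => (z i).2) = Kernel.const _ (Measure.infinitePi fun _ : ℕ => Nm e) := by
      ext1 t
      rw [Kernel.map_apply _ hG2, prodK_map γ (Kernel.const _ e) Prod.snd measurable_snd t (h2 t), prodK_apply]
      simp only [Kernel.const_apply, Nm_eq]
    rw [this, Measure.const_comp]
    simp
  · refine (lintegral_map_le _ _).trans ?_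
    have hpt : ∀ z : ℕ → (Fin d → ℝ) × (Fin d → ℝ), ENNReal.ofReal (wassW eucDist p (G z).1 (G z).2 ^ p) ≤
        (m : ℝ≥0∞)⁻¹ * ∑ i ∈ Finset.range m, cost p (z (i + n)) := fun z =>
      wass_emp p hp n m (fun i => (z i).1) (fun i => (z i).2)
    refine (lintegral_mono hpt).trans ?_
    have hcm : ∀ i : ℕ, Measurable fun z : ℕ → (Fin d → ℝ) × (Fin d → ℝ) => cost p (z (i + n)) := fun i =>
      (measurable_cost p).comp (measurable_pi_apply _)
    have hsm : Measurable fun z : ℕ → (Fin d → ℝ) × (Fin d → ℝ) => ∑ i ∈ Finset.range m, cost p (z (i + n)) :=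
      Finset.measurable_sum _ fun i _ => hcm i
    rw [Measure.lintegral_bind (Kernel.aemeasurable _) (hsm.const_mul _).aemeasurable]
    calc _ ≤ ∫⁻ 𝔭, (Phi p 𝔭 e + Dl p d L * ∫⁻ y, cW p y ∂e) ∂Q := by
          refine lintegral_mono_ae ?_
          filter_upwards [hQ] with 𝔭 h𝔭
          rw [lintegral_const_mul _ hsm, lintegral_finsetSum _ fun i _ => hcm i]
          have hi : ∀ i, ∫⁻ z, cost p (z (i + n)) ∂(prodK γ 𝔭) ≤ Phi p 𝔭 e + Dl p d L * ∫⁻ y, cW p y ∂e := by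
            intro i
            have h4 := h3 𝔭
            have h5 : Nk d 𝔭 = 𝔭 := Nm_eq 𝔭
            rw [h5, Kernel.const_apply] at h4
            refine le_trans (le_of_eq ?_) h4
            rw [prodK_apply, ← Measure.infinitePi_map_eval (fun _ : ℕ => γ 𝔭) (i + n), lintegral_map (measurable_cost p) (measurable_pi_apply _)]
            simp_rw [Measure.infinitePi_map_eval]
          calc _ ≤ (m : ℝ≥0∞)⁻¹ * ∑ i ∈ Finset.range m, (Phi p 𝔭 e + Dl p d L * ∫⁻ y, cW p y ∂e) := by
                gcongr with i _
                exact hi i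
            _ = _ := by
                rw [Finset.sum_const, Finset.card_range, nsmul_eq_mul, ← mul_assoc,
                  ENNReal.inv_mul_cancel (by simp; omega) (by simp), one_mul]
      _ = _ := by
          rw [lintegral_add_right _ measurable_const]
          simp
          rfl

end PF
end BNM

namespace BNM

section PG
variable {d : ℕ}

theorem measurable_Gd (p : ℝ) (𝔭 : Measure (Fin d → ℝ)) [IsProbabilityMeasure 𝔭] (l k : ℕ) :
    Measurable (Gd p 𝔭 l k) := by
  have hm0 : ∀ (l : ℕ) (i : Lab d), Measurable fun ω : ℕ → Fin d → ℝ =>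
      ⨆ n : ℕ, ENNReal.ofReal (|Sn 𝔭 ((cell l i).indicator 1) n ω| / Real.sqrt (n * Log2 n)) := by
    intro l i
    refine Measurable.iSup fun n => ?_
    have := measurable_Sn (𝔭 := 𝔭) (f := (cell l i).indicator 1) (measurable_one.indicator (measurableSet_cell l i)) n
    have h2 : Measurable fun ω => |Sn 𝔭 ((cell l i).indicator 1) n ω| := by
      simpa [Real.norm_eq_abs] using this.norm
    exact (h2.div_const _).ennreal_ofReal
  exact Measurable.const_mul (Finset.measurable_sum _ fun i _ => hm0 l i) _

theorem measurable_Xn {T : Type*} [MeasurableSpace T] (p : ℝ) (n : ℕ) {f : T → Measure (Fin d → ℝ)}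
    {g : T → (ℕ → Fin d → ℝ)} (hf : Measurable f) (hg : Measurable g) :
    Measurable fun t => Xn p n (f t) (g t) :=
  (measurable_Phi p hf ((measurable_empOf n).comp ((measurable_pre n).comp hg))).const_mul _

theorem measurable_Zp (p δ : ℝ) : Measurable (Zp p δ d) := by
  unfold Zp
  exact ((((measurable_Mom p δ).ennreal_toReal.pow_const _).const_mul _).const_add _).const_mul _

theorem measurableSet_prob : MeasurableSet {𝔭 : Measure (Fin d → ℝ) | IsProbabilityMeasure 𝔭} := by
  have : {𝔭 : Measure (Fin d → ℝ) | IsProbabilityMeasure 𝔭} = (fun 𝔭 : Measure (Fin d → ℝ) => 𝔭 Set.univ) ⁻¹' {1} := by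
    ext 𝔭
    exact isProbabilityMeasure_iff
  rw [this]
  exact Measure.measurable_coe MeasurableSet.univ (measurableSet_singleton 1)

theorem transfer (p δ s : ℝ) (hp : 1 ≤ p) (hpd : (d : ℝ) / 2 < p) (hδ : 0 < δ) (hd : 1 ≤ d)
    (hs0 : 0 < s) (hs1 : s < 1 / 2) (h : d * (1 - s) < p) (h' : p < (2 * p + δ) * s)
    (ρ : Measure (ℕ → (Fin d → ℝ))) [IsProbabilityMeasure ρ]
    (ptilde : (ℕ → (Fin d → ℝ)) → Measure (Fin d → ℝ)) (hptilde_meas : Measurable ptilde)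
    (hptilde_prob : ∀ᵐ ω ∂ρ, IsProbabilityMeasure (ptilde ω))
    (hj : ρ.map (fun ω => (ptilde ω, ω)) = (ρ.map ptilde) ⊗ₘ (prodK (Nk d)))
    (hmom : ∫⁻ 𝔭, Mom p δ 𝔭 ^ s ∂(ρ.map ptilde) < ⊤) :
    (∀ᵐ ω ∂ρ, Filter.limsup (fun n => Xn p n (ptilde ω) ω) Filter.atTop ≤ ENNReal.ofReal (Zp p δ d (ptilde ω))) ∧
    ∫⁻ ω, ⨆ n, Xn p n (ptilde ω) ω ∂ρ ≠ ⊤ := by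
  have hm : Measurable fun ω => (ptilde ω, ω) := hptilde_meas.prodMk measurable_id
  have := Measure.isProbabilityMeasure_map hptilde_meas.aemeasurable (μ := ρ)
  obtain ⟨C, hC, hG⟩ := Gd_int d p δ s (by linarith) hδ hs0 hs1 h h'
  have hπ : ∀ᵐ 𝔭 ∂(ρ.map ptilde), IsProbabilityMeasure 𝔭 :=
    (ae_map_iff hptilde_meas.aemeasurable measurableSet_prob).2 hptilde_prob
  have hMm := (measurable_Mom (d := d) p δ).pow_const s
  have hM : ∀ᵐ 𝔭 ∂(ρ.map ptilde), Mom p δ 𝔭 ^ s < ⊤ := ae_lt_top hMm hmom.ne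
  have hX : ∀ n, Measurable fun z : Measure (Fin d → ℝ) × (ℕ → Fin d → ℝ) => Xn p n z.1 z.2 :=
    fun n => measurable_Xn p n measurable_fst measurable_snd
  have hk : ∀ 𝔭 : Measure (Fin d → ℝ), IsProbabilityMeasure 𝔭 → prodK (Nk d) 𝔭 = Pinf 𝔭 := by
    intro 𝔭 h𝔭
    rw [prodK_apply]
    have : Nk d 𝔭 = 𝔭 := Nm_eq 𝔭
    simp_rw [this]
  constructor
  · have hset : MeasurableSet {z : Measure (Fin d → ℝ) × (ℕ → Fin d → ℝ) |
        Filter.limsup (fun n => Xn p n z.1 z.2) Filter.atTop ≤ ENNReal.ofReal (Zp p δ d z.1)} :=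
      measurableSet_le (Measurable.limsup hX) ((measurable_Zp p δ).comp measurable_fst).ennreal_ofReal
    have h1 : ∀ᵐ z ∂(ρ.map (fun ω => (ptilde ω, ω))),
        Filter.limsup (fun n => Xn p n z.1 z.2) Filter.atTop ≤ ENNReal.ofReal (Zp p δ d z.1) := by
      rw [hj, Measure.ae_compProd_iff hset]
      filter_upwards [hπ, hM] with 𝔭 h1 h2
      rw [hk 𝔭 h1]
      have h3 : Mom p δ 𝔭 ≠ ⊤ := by
        intro h4
        rw [h4, ENNReal.top_rpow_of_pos hs0] at h2
        exact lt_irrefl _ h2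
      refine Xn_limsup p δ hp hpd hδ hd 𝔭 h3 ?_ ?_
      · exact ne_top_of_le_ne_top (ENNReal.mul_ne_top hC (ENNReal.add_ne_top.2 ⟨ENNReal.one_ne_top, h2.ne⟩)) (hG 𝔭)
      · exact (Measurable.tsum fun l => Measurable.tsum fun k => measurable_Gd p 𝔭 l k).aemeasurable
    exact ae_of_ae_map hm.aemeasurable h1
  · have hXs : Measurable fun z : Measure (Fin d → ℝ) × (ℕ → Fin d → ℝ) => ⨆ n, Xn p n z.1 z.2 :=
      Measurable.iSup hX
    have e : ∫⁻ ω, ⨆ n, Xn p n (ptilde ω) ω ∂ρ = ∫⁻ z, ⨆ n, Xn p n z.1 z.2 ∂(ρ.map (fun ω => (ptilde ω, ω))) :=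
      (lintegral_map hXs hm).symm
    rw [e, hj, Measure.lintegral_compProd hXs]
    refine ne_top_of_le_ne_top ?_ (lintegral_mono_ae (g := fun 𝔭 => C * (1 + Mom p δ 𝔭 ^ s)) ?_)
    · rw [lintegral_const_mul _ (hMm.const_add 1), lintegral_add_left measurable_const]
      refine ENNReal.mul_ne_top hC (ENNReal.add_ne_top.2 ⟨by simp, hmom.ne⟩)
    · filter_upwards [hπ] with 𝔭 h1
      rw [hk 𝔭 h1]
      refine le_trans (lintegral_mono fun ω => ?_) (hG 𝔭)
      exact iSup_le fun n => Xn_le_Gd p n 𝔭 ω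

/-- conversion -/
theorem convert_limsup (p : ℝ) (hp : 1 ≤ p) (W : ℕ → ℝ) (hW : ∀ n, 0 ≤ W n) (j : ℕ → ℝ≥0∞) (Z : ℝ)
    (hZ : 0 ≤ Z) (h : ∀ n, n ≠ 0 → ENNReal.ofReal (W n ^ p) ≤ j n)
    (hj : Filter.limsup (fun n => ENNReal.ofReal (rt n) * j n) Filter.atTop ≤ ENNReal.ofReal Z) :
    Filter.limsup (fun n : ℕ => ENNReal.ofReal (((n : ℝ) / Log2 n) ^ (1 / (2 * p)) * W n)) Filter.atTop ≤
      ENNReal.ofReal (Z ^ (1 / p)) := by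
  have hp0 : 0 < p := by linarith
  have h1 : ∀ᶠ n : ℕ in Filter.atTop, ENNReal.ofReal (((n : ℝ) / Log2 n) ^ (1 / (2 * p)) * W n) ≤
      (ENNReal.ofReal (rt n) * j n) ^ (1 / p) := by
    filter_upwards [Filter.eventually_ge_atTop 1] with n hn
    have hb : 0 ≤ (n : ℝ) / Log2 n := by
      have : 0 < Log2 n := Log2_pos n
      positivity
    have h2 : ENNReal.ofReal (((n : ℝ) / Log2 n) ^ (1 / (2 * p)) * W n) =
        (ENNReal.ofReal (rt n) * ENNReal.ofReal (W n ^ p)) ^ (1 / p) := by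
      rw [← ENNReal.ofReal_mul (rt_nonneg n), ENNReal.ofReal_rpow_of_nonneg
        (mul_nonneg (rt_nonneg n) (Real.rpow_nonneg (hW n) _)) (by positivity),
        Real.mul_rpow (rt_nonneg n) (Real.rpow_nonneg (hW n) _), ← Real.rpow_mul (hW n),
        mul_one_div_cancel hp0.ne', Real.rpow_one, rt, Real.sqrt_eq_rpow, ← Real.rpow_mul hb]
      congr 3
      field_simp
    rw [h2]
    exact ENNReal.rpow_le_rpow (mul_le_mul_right (h n (by omega)) _) (by positivity)
  refine (Filter.limsup_le_limsup h1).trans ?_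
  have h3 := (ENNReal.orderIsoRpow (1 / p) (by positivity)).limsup_apply (f := Filter.atTop) (u := fun n => ENNReal.ofReal (rt n) * j n)
  simp only [ENNReal.orderIsoRpow_apply] at h3
  rw [← h3, ← ENNReal.ofReal_rpow_of_nonneg hZ (by positivity)]
  exact ENNReal.rpow_le_rpow hj (by positivity)

theorem Zp_nonneg (p δ : ℝ) (hp : 1 ≤ p) (hpd : (d : ℝ) / 2 < p) (hδ : 0 < δ) (𝔭 : Measure (Fin d → ℝ)) :
    0 ≤ Zp p δ d 𝔭 := by
  have h1 : (2 : ℝ) ^ (-(p - (d : ℝ) / 2)) < 1 :=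
    Real.rpow_lt_one_of_one_lt_of_neg (by norm_num) (by linarith)
  have h2 : (2 : ℝ) ^ (-δ / 2) < 1 := Real.rpow_lt_one_of_one_lt_of_neg (by norm_num) (by linarith)
  have h4 : 0 ≤ 2 ^ p / (1 - (2 : ℝ) ^ (-δ / 2)) := div_nonneg (by positivity) (by linarith)
  have h5 : 0 ≤ Kpd p d := by unfold Kpd; positivity
  unfold Zp
  refine mul_nonneg (div_nonneg (by positivity) (by linarith)) (by positivity)

end PG
end BNM

namespace BNM

section PH

theorem compProd_of {Ω A B : Type*} [MeasurableSpace Ω] [MeasurableSpace A] [MeasurableSpace B]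
    (ρ : Measure Ω) [IsProbabilityMeasure ρ] (f : Ω → A) (g : Ω → B) (hf : Measurable f) (hg : Measurable g)
    (κ : Kernel A B) [IsMarkovKernel κ]
    (h : ∀ s : Set A, MeasurableSet s → ∀ t : Set B, MeasurableSet t →
      ρ {ω | f ω ∈ s ∧ g ω ∈ t} = ∫⁻ ω in {ω | f ω ∈ s}, κ (f ω) t ∂ρ) :
    ρ.map (fun ω => (f ω, g ω)) = (ρ.map f) ⊗ₘ κ := by
  have hm := hf.prodMk hg
  have := Measure.isProbabilityMeasure_map hm.aemeasurable (μ := ρ)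
  have := Measure.isProbabilityMeasure_map hf.aemeasurable (μ := ρ)
  refine Measure.ext_prod fun {s t} hs ht => ?_
  rw [Measure.map_apply hm (hs.prod ht), Measure.compProd_apply_prod hs ht,
    setLIntegral_map hs (Kernel.measurable_coe κ ht) hf]
  exact h s hs t ht

theorem compProd_lint {Ω A B : Type*} [MeasurableSpace Ω] [MeasurableSpace A] [MeasurableSpace B]
    (ρ : Measure Ω) [IsProbabilityMeasure ρ] (f : Ω → A) (g : Ω → B) (hf : Measurable f) (hg : Measurable g)
    (κ : Kernel A B) [IsMarkovKernel κ] (h : ρ.map (fun ω => (f ω, g ω)) = (ρ.map f) ⊗ₘ κ)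
    (F : A × B → ℝ≥0∞) (hF : Measurable F) (s : Set A) (hs : MeasurableSet s) :
    ∫⁻ ω in f ⁻¹' s, F (f ω, g ω) ∂ρ = ∫⁻ ω in f ⁻¹' s, ∫⁻ b, F (f ω, b) ∂(κ (f ω)) ∂ρ := by
  have hm := hf.prodMk hg
  have := Measure.isProbabilityMeasure_map hf.aemeasurable (μ := ρ)
  have h1 := Measure.setLIntegral_compProd (μ := ρ.map f) (κ := κ) hF hs MeasurableSet.univ
  rw [← h, setLIntegral_map (hs.prod MeasurableSet.univ) hF hm] at h1
  simp only [Measure.restrict_univ] at h1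
  rw [setLIntegral_map hs (Measurable.lintegral_kernel_prod_right' hF) hf] at h1
  rw [← h1]
  congr 2
  ext ω; simp

variable {d : ℕ}

theorem post_limsup (p : ℝ) (ρ : Measure (ℕ → (Fin d → ℝ))) [IsProbabilityMeasure ρ]
    (ptilde : (ℕ → (Fin d → ℝ)) → Measure (Fin d → ℝ)) (hptilde_meas : Measurable ptilde)
    (postK : (n : ℕ) → Kernel (Fin n → (Fin d → ℝ)) (Measure (Fin d → ℝ))) [∀ n, IsMarkovKernel (postK n)]
    (hpost : ∀ n, ρ.map (fun ω => (pre n ω, ptilde ω)) = (ρ.map (pre n)) ⊗ₘ (postK n))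
    (hInteg : ∫⁻ ω, ⨆ n, Xn p n (ptilde ω) ω ∂ρ ≠ ⊤) :
    ∀ᵐ ω ∂ρ, Filter.limsup (fun n => ENNReal.ofReal (rt n) *
        ∫⁻ 𝔭, Phi p 𝔭 (empOf n (pre n ω)) ∂(postK n (pre n ω))) Filter.atTop ≤
      Filter.limsup (fun n => Xn p n (ptilde ω) ω) Filter.atTop := by
  have hF : ∀ n, Measurable fun z : (Fin n → (Fin d → ℝ)) × Measure (Fin d → ℝ) => Phi p z.2 (empOf n z.1) := fun n =>
    measurable_Phi p measurable_snd ((measurable_empOf n).comp measurable_fst)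
  have hJ : ∀ n, Measurable fun v : Fin n → (Fin d → ℝ) => ENNReal.ofReal (rt n) * ∫⁻ 𝔭, Phi p 𝔭 (empOf n v) ∂(postK n v) := fun n =>
    (Measurable.lintegral_kernel_prod_right' (κ := postK n) (hF n)).const_mul _
  refine mart (Filt (Fin d → ℝ)) (Filt_sup _) (fun n ω => Xn p n (ptilde ω) ω) _
    (fun n => measurable_Xn p n hptilde_meas measurable_id) (fun n => (hJ n).comp (comap_measurable _)) hInteg ?_
  rintro n _ ⟨s, hs, rfl⟩
  have h := compProd_lint ρ (pre n) ptilde (measurable_pre n) hptilde_meas (postK n) (hpost n)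
    (fun z => ENNReal.ofReal (rt n) * Phi p z.2 (empOf n z.1)) ((hF n).const_mul _) s hs
  refine le_of_eq ?_
  refine Eq.trans ?_ h.symm
  refine lintegral_congr fun ω => ?_
  rw [lintegral_const_mul]
  exact (hF n).comp (measurable_prodMk_left (x := pre n ω))

theorem post_prob (ρ : Measure (ℕ → (Fin d → ℝ))) [IsProbabilityMeasure ρ]
    (ptilde : (ℕ → (Fin d → ℝ)) → Measure (Fin d → ℝ)) (hptilde_meas : Measurable ptilde)
    (hptilde_prob : ∀ᵐ ω ∂ρ, IsProbabilityMeasure (ptilde ω)) (n : ℕ)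
    (postK : Kernel (Fin n → (Fin d → ℝ)) (Measure (Fin d → ℝ))) [IsMarkovKernel postK]
    (hpost : ρ.map (fun ω => (pre n ω, ptilde ω)) = (ρ.map (pre n)) ⊗ₘ postK) :
    ∀ᵐ v ∂(ρ.map (pre n)), ∀ᵐ 𝔭 ∂(postK v), IsProbabilityMeasure 𝔭 := by
  have hm := (measurable_pre (E := Fin d → ℝ) n).prodMk hptilde_meas
  have := Measure.isProbabilityMeasure_map (measurable_pre (E := Fin d → ℝ) n).aemeasurable (μ := ρ)
  refine Measure.ae_ae_of_ae_compProd (p := fun z => IsProbabilityMeasure z.2) ?_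
  rw [← hpost]
  exact (ae_map_iff hm.aemeasurable (measurable_snd measurableSet_prob)).2 hptilde_prob

def shift {E : Type*} (n : ℕ) (ω : ℕ → E) : ℕ → E := fun j => ω (j + n)

theorem measurable_shift {E : Type*} [MeasurableSpace E] (n : ℕ) : Measurable (shift (E := E) n) := by
  unfold shift; fun_prop

theorem map_shift {E : Type*} [MeasurableSpace E] (n : ℕ) (𝔭 : Measure E) [IsProbabilityMeasure 𝔭] :
    (Pinf 𝔭).map (shift n) = Pinf 𝔭 :=
  Measure.map_infinitePi_infinitePi_of_inj (P := fun _ : ℕ => 𝔭) (f := fun j => j + n) (add_left_injective n)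

theorem indep_shift {E : Type*} [MeasurableSpace E] (n : ℕ) (𝔭 : Measure E) [IsProbabilityMeasure 𝔭] :
    IndepFun (pre n) (shift n) (Pinf 𝔭) := by
  have h := (iIndepFun_infinitePi (P := fun _ : ℕ => 𝔭) (X := fun _ (x : E) => x) (fun _ => measurable_id))
  have h2 := indep_iSup_of_disjoint (fun i => (measurable_pi_apply (X := fun _ : ℕ => E) i).comap_le) h (S := {i | i < n}) (T := {i | n ≤ i})
    (Set.disjoint_left.2 fun i hi hj => by
      have h1 : i < n := hi
      have h2 : n ≤ i := hj
      omega)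
  have h3 := indep_of_indep_of_le_left h2 (m₃ := MeasurableSpace.comap (pre n) inferInstance) ?_
  · refine indep_of_indep_of_le_right h3 ?_
    refine Measurable.comap_le (@measurable_pi_lambda _ _ _ (_) _ _ fun j => ?_)
    refine Measurable.mono (comap_measurable _) ?_ le_rfl
    exact le_iSup₂_of_le (f := fun i (_ : i ∈ {i | n ≤ i}) => MeasurableSpace.comap (fun ω : ℕ → E => ω i) inferInstance) (j + n)
      (show n ≤ j + n by omega) le_rfl
  · refine Measurable.comap_le (@measurable_pi_lambda _ _ _ (_) _ _ fun j => ?_)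
    refine Measurable.mono (comap_measurable _) ?_ le_rfl
    exact le_iSup₂_of_le (f := fun i (_ : i ∈ {i | i < n}) => MeasurableSpace.comap (fun ω : ℕ → E => ω i) inferInstance) (j : ℕ) j.2 le_rfl

theorem shift_compProd (ρ : Measure (ℕ → (Fin d → ℝ))) [IsProbabilityMeasure ρ]
    (ptilde : (ℕ → (Fin d → ℝ)) → Measure (Fin d → ℝ)) (hptilde_meas : Measurable ptilde)
    (hj : ρ.map (fun ω => (ptilde ω, ω)) = (ρ.map ptilde) ⊗ₘ (prodK (Nk d))) (n : ℕ)
    (postK : Kernel (Fin n → (Fin d → ℝ)) (Measure (Fin d → ℝ))) [IsMarkovKernel postK]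
    (hpost : ρ.map (fun ω => (pre n ω, ptilde ω)) = (ρ.map (pre n)) ⊗ₘ postK) :
    ρ.map (fun ω => (pre n ω, shift n ω)) = (ρ.map (pre n)) ⊗ₘ (prodK (Nk d) ∘ₖ postK) := by
  refine compProd_of ρ (pre n) (shift n) (measurable_pre n) (measurable_shift n) _ fun s hs t ht => ?_
  have hK := Kernel.measurable_coe (prodK (Nk d)) ht
  have h1 := compProd_lint ρ (pre n) ptilde (measurable_pre n) hptilde_meas postK hpost
    (fun z => prodK (Nk d) z.2 t) (hK.comp measurable_snd) s hs
  simp_rw [Kernel.comp_apply' _ _ _ ht]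
  refine Eq.trans ?_ h1
  have hm : Measurable fun ω => (ptilde ω, ω) := hptilde_meas.prodMk measurable_id
  have := Measure.isProbabilityMeasure_map hptilde_meas.aemeasurable (μ := ρ)
  have hs' := measurable_pre (E := Fin d → ℝ) n hs
  have ht' := measurable_shift (E := Fin d → ℝ) n ht
  have e1 : ρ {ω | pre n ω ∈ s ∧ shift n ω ∈ t} = ∫⁻ 𝔭, prodK (Nk d) 𝔭 (pre n ⁻¹' s ∩ shift n ⁻¹' t) ∂(ρ.map ptilde) := by
    have := Measure.compProd_apply_prod (μ := ρ.map ptilde) (κ := prodK (Nk d)) MeasurableSet.univ (hs'.inter ht')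
    rw [← hj, Measure.map_apply hm (MeasurableSet.univ.prod (hs'.inter ht')), Measure.restrict_univ] at this
    rw [← this]
    congr 1
    ext ω; simp
  have e2 : ∫⁻ ω in pre n ⁻¹' s, prodK (Nk d) (ptilde ω) t ∂ρ =
      ∫⁻ 𝔭, prodK (Nk d) 𝔭 t * prodK (Nk d) 𝔭 (pre n ⁻¹' s) ∂(ρ.map ptilde) := by
    have hK1 : Measurable fun z : Measure (Fin d → ℝ) × (ℕ → Fin d → ℝ) => prodK (Nk d) z.1 t := hK.comp measurable_fst
    have := Measure.setLIntegral_compProd (μ := ρ.map ptilde) (κ := prodK (Nk d)) (f := fun z => prodK (Nk d) z.1 t)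
      hK1 MeasurableSet.univ hs'
    rw [← hj, setLIntegral_map (MeasurableSet.univ.prod hs') hK1 hm, Measure.restrict_univ] at this
    simp only [setLIntegral_const] at this
    rw [← this]
    congr 2
    ext ω; simp
  rw [e1, e2]
  refine lintegral_congr fun 𝔭 => ?_
  rw [prodK_apply, (indep_shift n (Nk d 𝔭)).measure_inter_preimage_eq_mul _ _ hs ht,
    ← Measure.map_apply (measurable_shift n) ht, map_shift, mul_comm]

end PH
end BNM

namespace BNM

section PI

variable {E : Type*} [MeasurableSpace E] [MeasurableSpace.CountablyGenerated E]

def gset (E : Type*) [MeasurableSpace E] [MeasurableSpace.CountablyGenerated E] (F : Finset ℕ) : Set E :=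
  ⋂ i ∈ F, MeasurableSpace.natGeneratingSequence E i

theorem measurableSet_gset (F : Finset ℕ) : MeasurableSet (gset E F) :=
  Finset.measurableSet_biInter F fun i _ => MeasurableSpace.measurableSet_natGeneratingSequence i

theorem gset_pi : IsPiSystem (Set.range (gset E)) := by
  classical
  rintro _ ⟨F, rfl⟩ _ ⟨G, rfl⟩ -
  refine ⟨F ∪ G, ?_⟩
  ext x
  simp only [gset, Set.mem_iInter, Finset.mem_union, Set.mem_inter_iff]
  exact ⟨fun h => ⟨fun i hi => h i (Or.inl hi), fun i hi => h i (Or.inr hi)⟩,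
    fun h i hi => hi.elim (h.1 i) (h.2 i)⟩

theorem gset_gen : (inferInstance : MeasurableSpace E) = MeasurableSpace.generateFrom (Set.range (gset E)) := by
  refine le_antisymm ?_ (MeasurableSpace.generateFrom_le ?_)
  · refine (MeasurableSpace.generateFrom_natGeneratingSequence E).ge.trans ?_
    refine MeasurableSpace.generateFrom_le ?_
    rintro _ ⟨i, rfl⟩
    refine MeasurableSpace.measurableSet_generateFrom ⟨{i}, ?_⟩
    simp [gset]
  · rintro _ ⟨F, rfl⟩
    exact measurableSet_gset F

def theta (μ : Measure E) : Finset ℕ → ℝ≥0∞ := fun F => μ (gset E F)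

theorem measurable_theta : Measurable (theta (E := E)) :=
  measurable_pi_lambda _ fun F => Measure.measurable_coe (measurableSet_gset F)

theorem theta_trace (B : Set (Measure E)) (hB : MeasurableSet B) : ∃ B' : Set (Finset ℕ → ℝ≥0∞), MeasurableSet B' ∧
    ∀ μ : Measure E, IsProbabilityMeasure μ → (μ ∈ B ↔ theta μ ∈ B') := by
  let P := {μ : Measure E // IsProbabilityMeasure μ}
  let f : P → (Finset ℕ → ℝ≥0∞) := fun μ => theta μ.1
  have : ∀ a : P, IsProbabilityMeasure a.1 := fun a => a.2
  have h : @Measurable P (Measure E) (MeasurableSpace.comap f inferInstance) _ (fun a => a.1) := by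
    letI : MeasurableSpace P := MeasurableSpace.comap f inferInstance
    refine Measurable.measure_of_isPiSystem_of_isProbabilityMeasure gset_gen gset_pi ?_
    rintro _ ⟨F, rfl⟩
    exact (measurable_pi_apply F).comp (comap_measurable f)
  obtain ⟨B', hB', he⟩ := h hB
  refine ⟨B', hB', fun μ hμ => ?_⟩
  have : (⟨μ, hμ⟩ : P) ∈ f ⁻¹' B' ↔ (⟨μ, hμ⟩ : P) ∈ (fun a : P => a.1) ⁻¹' B := by rw [he]
  exact this.symm

theorem kernel_ae_eq {A : Type*} [MeasurableSpace A] (μ : Measure A) [IsProbabilityMeasure μ]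
    (κ η : Kernel A (Measure E)) [IsMarkovKernel κ] [IsMarkovKernel η] (h : μ ⊗ₘ κ = μ ⊗ₘ η)
    (h1 : ∀ᵐ a ∂μ, ∀ᵐ 𝔭 ∂(κ a), IsProbabilityMeasure 𝔭) (h2 : ∀ᵐ a ∂μ, ∀ᵐ 𝔭 ∂(η a), IsProbabilityMeasure 𝔭) :
    ∀ᵐ a ∂μ, κ a = η a := by
  have h3 : μ ⊗ₘ (κ.map theta) = μ ⊗ₘ (η.map theta) := by
    rw [Measure.compProd_map measurable_theta, Measure.compProd_map measurable_theta, h]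
  have := Kernel.IsMarkovKernel.map κ (measurable_theta (E := E))
  have := Kernel.IsMarkovKernel.map η (measurable_theta (E := E))
  have h4 := Kernel.ae_eq_of_compProd_eq h3
  filter_upwards [h1, h2, h4] with a k1 k2 k4
  ext B hB
  obtain ⟨B', hB', he⟩ := theta_trace B hB
  have e : ∀ ν : Measure (Measure E), (∀ᵐ 𝔭 ∂ν, IsProbabilityMeasure 𝔭) → ν B = ν.map theta B' := by
    intro ν hν
    rw [Measure.map_apply measurable_theta hB']
    refine measure_congr ?_
    filter_upwards [hν] with 𝔭 h𝔭
    exact propext (he 𝔭 h𝔭)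
  rw [e _ k1, e _ k2, ← Kernel.map_apply _ measurable_theta, ← Kernel.map_apply _ measurable_theta, k4]

variable {d : ℕ}

theorem empShift_shift (n m : ℕ) (ω : ℕ → (Fin d → ℝ)) : empShift n m ω = empShift 0 m (shift n ω) := by
  simp [empShift, shift]

theorem pred_eq (ρ : Measure (ℕ → (Fin d → ℝ))) [IsProbabilityMeasure ρ]
    (ptilde : (ℕ → (Fin d → ℝ)) → Measure (Fin d → ℝ)) (hptilde_meas : Measurable ptilde)
    (hj : ρ.map (fun ω => (ptilde ω, ω)) = (ρ.map ptilde) ⊗ₘ (prodK (Nk d))) (n m : ℕ) (hm : 1 ≤ m)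
    (postK : Kernel (Fin n → (Fin d → ℝ)) (Measure (Fin d → ℝ))) [IsMarkovKernel postK]
    (hpost : ρ.map (fun ω => (pre n ω, ptilde ω)) = (ρ.map (pre n)) ⊗ₘ postK)
    (qK : Kernel (Fin n → (Fin d → ℝ)) (Measure (Fin d → ℝ))) [IsMarkovKernel qK]
    (hq : ρ.map (fun ω => (pre n ω, empShift n m ω)) = (ρ.map (pre n)) ⊗ₘ qK) :
    ∀ᵐ ω ∂ρ, qK (pre n ω) = ((postK (pre n ω)).bind (prodK (Nk d))).map (empShift n m) := by
  have hpm := measurable_pre (E := Fin d → ℝ) n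
  have := Measure.isProbabilityMeasure_map hpm.aemeasurable (μ := ρ)
  have hsm := measurable_shift (E := Fin d → ℝ) n
  have hs := shift_compProd ρ ptilde hptilde_meas hj n postK hpost
  have he0 := measurable_empShift (d := d) 0 m
  have hen := measurable_empShift (d := d) n m
  have e : (ρ.map (pre n)) ⊗ₘ qK = (ρ.map (pre n)) ⊗ₘ ((prodK (Nk d) ∘ₖ postK).map (empShift 0 m)) := by
    rw [Measure.compProd_map he0, ← hs, ← hq, Measure.map_map (by fun_prop) (hpm.prodMk hsm)]
    simp_rw [empShift_shift n m]
    rfl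
  have := Kernel.IsMarkovKernel.map (prodK (Nk d) ∘ₖ postK) he0
  have h := kernel_ae_eq (ρ.map (pre n)) qK _ e ?_ ?_
  · filter_upwards [ae_of_ae_map hpm.aemeasurable h] with ω hω
    rw [hω, Kernel.map_apply _ he0, Kernel.comp_apply]
    have e2 : empShift (d := d) n m = empShift 0 m ∘ shift n := funext fun ω => empShift_shift n m ω
    rw [e2, ← Measure.map_map he0 hsm, Measure.map_comp _ _ hsm]
    congr 2
    ext1 t
    rw [Kernel.map_apply _ hsm, prodK_apply, map_shift]
  · refine Measure.ae_ae_of_ae_compProd (p := fun z => IsProbabilityMeasure z.2) ?_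
    rw [← hq]
    refine (ae_map_iff (hpm.prodMk hen).aemeasurable (measurable_snd measurableSet_prob)).2 ?_
    exact Filter.Eventually.of_forall fun ω => ⟨empShift_prob n m hm ω⟩
  · refine Filter.Eventually.of_forall fun v => ?_
    rw [Kernel.map_apply _ he0]
    refine (ae_map_iff he0.aemeasurable measurableSet_prob).2 ?_
    exact Filter.Eventually.of_forall fun ω => ⟨empShift_prob 0 m hm ω⟩

end PI
end BNM

/-- Bayesian nonparametric merging on `ℝ^d`: with
`b_n = (n / Log₂ n)^{1/(2p)}` and `p̂_n = ẽ_n`, both the posterior and the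
predictive empirical approximations merge at rate `b_n` with limiting bound
`Y_p(p̃)`, `ρ`-almost surely. -/
theorem bayesian_nonparametric_merging
    (d : ℕ) (p δ : ℝ) (hp1 : 1 ≤ p) (hpd : (d : ℝ) / 2 < p) (hδ : 0 < δ)
    (r : ℝ) (hr2 : 2 < r) (hr3 : r < 3)
    (hrp : p / d > 2 - 3 / r) (hrδ : (2 * p + δ) * (3 / r - 1) > p)
    -- the product-measure map `𝔭 ↦ 𝔭^∞`
    (iid : Measure (Fin d → ℝ) → Measure (ℕ → (Fin d → ℝ)))
    (hiid : ∀ 𝔭 : Measure (Fin d → ℝ), IsProbabilityMeasure 𝔭 →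
      IsProbabilityMeasure (iid 𝔭) ∧
        ∀ (n : ℕ) (A : Fin n → Set (Fin d → ℝ)), (∀ i, MeasurableSet (A i)) →
          iid 𝔭 {ω | ∀ i : Fin n, ω (i : ℕ) ∈ A i} = ∏ i, 𝔭 (A i))
    -- an exchangeable law `ρ` on `(ℝ^d)^∞` with directing measure `p̃`
    (ρ : Measure (ℕ → (Fin d → ℝ))) [IsProbabilityMeasure ρ]
    (hexch : ∀ σ : Equiv.Perm ℕ, ρ.map (fun ω => ω ∘ σ) = ρ)
    (ptilde : (ℕ → (Fin d → ℝ)) → Measure (Fin d → ℝ)) (hptilde_meas : Measurable ptilde)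
    (hptilde_prob : ∀ᵐ ω ∂ρ, IsProbabilityMeasure (ptilde ω))
    (hdirect : ∀ C : Set (ℕ → (Fin d → ℝ)), MeasurableSet C →
      ∀ B : Set (Measure (Fin d → ℝ)), MeasurableSet B →
        ρ (C ∩ ptilde ⁻¹' B) = ∫⁻ ω in ptilde ⁻¹' B, iid (ptilde ω) C ∂ρ)
    -- the moment condition on the prior `π = ρ ∘ p̃⁻¹`
    (hmom : ∫⁻ 𝔭, (∫⁻ x, ENNReal.ofReal (eucNorm x ^ (2 * p + δ)) ∂𝔭) ^ (3 / r - 1)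
        ∂(ρ.map ptilde) < ⊤)
    -- the posterior distributions `π(ξ^{(n)})`
    (post : (n : ℕ) → (Fin n → (Fin d → ℝ)) → Measure (Measure (Fin d → ℝ)))
    (hpost_prob : ∀ n v, IsProbabilityMeasure (post n v))
    (hpost_meas : ∀ n, Measurable (post n))
    (hpost : ∀ (n : ℕ) (A : Set (Fin n → (Fin d → ℝ))), MeasurableSet A →
      ∀ B : Set (Measure (Fin d → ℝ)), MeasurableSet B →
        ρ {ω | (fun i : Fin n => ω (i : ℕ)) ∈ A ∧ ptilde ω ∈ B}
          = ∫⁻ ω in {ω | (fun i : Fin n => ω (i : ℕ)) ∈ A},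
              post n (fun i : Fin n => ω (i : ℕ)) B ∂ρ)
    -- the conditional distributions `q_m(ξ^{(n)})` of `ẽ_{n,m}` given `ξ^{(n)}`
    (qm : (m n : ℕ) → (Fin n → (Fin d → ℝ)) → Measure (Measure (Fin d → ℝ)))
    (hqm_prob : ∀ m n v, IsProbabilityMeasure (qm m n v))
    (hqm_meas : ∀ m n, Measurable (qm m n))
    (hqm : ∀ (m n : ℕ) (A : Set (Fin n → (Fin d → ℝ))), MeasurableSet A →
      ∀ B : Set (Measure (Fin d → ℝ)), MeasurableSet B →
        ρ {ω | (fun i : Fin n => ω (i : ℕ)) ∈ A ∧ empShift n m ω ∈ B}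
          = ∫⁻ ω in {ω | (fun i : Fin n => ω (i : ℕ)) ∈ A},
              qm m n (fun i : Fin n => ω (i : ℕ)) B ∂ρ) :
    -- (i) merging of posterior distributions
    (∀ᵐ ω ∂ρ, Filter.limsup (fun n : ℕ => ENNReal.ofReal
        (((n : ℝ) / Log2 n) ^ (1 / (2 * p))
          * wassW (fun μ ν => wassW eucDist p μ ν) p
            (post n (fun i : Fin n => ω (i : ℕ)))
            (Measure.dirac (empOf n (fun i : Fin n => ω (i : ℕ)))))) Filter.atTop
      ≤ ENNReal.ofReal (YpNP p δ d (ptilde ω))) ∧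
    -- (ii) merging of predictive distributions
    (∀ (m : ℕ), 1 ≤ m →
      ∀ᵐ ω ∂ρ, Filter.limsup (fun n : ℕ => ENNReal.ofReal
          (((n : ℝ) / Log2 n) ^ (1 / (2 * p))
            * wassW (fun μ ν => wassW eucDist p μ ν) p
              (qm m n (fun i : Fin n => ω (i : ℕ)))
              ((iid (empOf n (fun i : Fin n => ω (i : ℕ)))).map (empShift n m)))) Filter.atTop
        ≤ ENNReal.ofReal (YpNP p δ d (ptilde ω))) := by
  have hd : 1 ≤ d := by
    rcases Nat.eq_zero_or_pos d with h | h
    · exfalso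
      subst h
      have : 3 / r < 2 := by rw [div_lt_iff₀ (by linarith)]; linarith
      simp at hrp
      linarith
    · exact h
  have hs0 : 0 < 3 / r - 1 := by
    have : 1 < 3 / r := by rw [lt_div_iff₀ (by linarith)]; linarith
    linarith
  have hs1 : 3 / r - 1 < 1 / 2 := by
    have : 3 / r < 3 / 2 := by gcongr
    linarith
  have hd0 : (0 : ℝ) < d := by exact_mod_cast hd
  have h1 : d * (1 - (3 / r - 1)) < p := by
    have h2 := (lt_div_iff₀ hd0).1 hrp
    linarith
  have hiid' : ∀ 𝔭 : Measure (Fin d → ℝ), IsProbabilityMeasure 𝔭 → iid 𝔭 = BNM.Pinf 𝔭 := fun 𝔭 _ =>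
    BNM.iid_eq iid hiid 𝔭
  have hj := BNM.joint iid hiid' ρ ptilde hptilde_meas hptilde_prob hdirect
  obtain ⟨hlim, hInteg⟩ := BNM.transfer p δ (3 / r - 1) hp1 hpd hδ hd hs0 hs1 h1 hrδ ρ ptilde hptilde_meas
    hptilde_prob hj hmom
  let postK : (n : ℕ) → Kernel (Fin n → (Fin d → ℝ)) (Measure (Fin d → ℝ)) := fun n => ⟨post n, hpost_meas n⟩
  have hpK : ∀ n, IsMarkovKernel (postK n) := fun n => ⟨hpost_prob n⟩
  have hpc : ∀ n, ρ.map (fun ω => (BNM.pre n ω, ptilde ω)) = (ρ.map (BNM.pre n)) ⊗ₘ (postK n) := fun n =>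
    BNM.compProd_of ρ (BNM.pre n) ptilde (BNM.measurable_pre n) hptilde_meas (postK n) (hpost n)
  have hJ := BNM.post_limsup p ρ ptilde hptilde_meas postK hpc hInteg
  have hpp : ∀ᵐ ω ∂ρ, ∀ n, ∀ᵐ 𝔭 ∂(post n (BNM.pre n ω)), IsProbabilityMeasure 𝔭 := ae_all_iff.2 fun n =>
    ae_of_ae_map (BNM.measurable_pre n).aemeasurable
      (BNM.post_prob ρ ptilde hptilde_meas hptilde_prob n (postK n) (hpc n))
  have hwn : ∀ Q R : Measure (Measure (Fin d → ℝ)), 0 ≤ wassW (fun μ ν => wassW eucDist p μ ν) p Q R := fun Q R =>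
    BNM.wassW_nonneg _ (fun μ ν => BNM.wassW_nonneg _ BNM.eucDist_nonneg p μ ν) p Q R
  constructor
  · filter_upwards [hlim, hJ, hpp] with ω k1 k2 k3
    refine BNM.convert_limsup p hp1 _ (fun n => hwn _ _) _ (BNM.Zp p δ d (ptilde ω))
      (BNM.Zp_nonneg p δ hp1 hpd hδ _) (fun n hn => ?_) (k2.trans k1)
    have := hpost_prob n (BNM.pre n ω)
    exact BNM.post_bound p hp1 n hn (BNM.pre n ω) (post n (BNM.pre n ω)) (k3 n)
  · intro m hm
    have hq : ∀ᵐ ω ∂ρ, ∀ n, qm m n (BNM.pre n ω) =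
        ((post n (BNM.pre n ω)).bind (BNM.prodK (BNM.Nk d))).map (empShift n m) := by
      refine ae_all_iff.2 fun n => ?_
      let qK : Kernel (Fin n → (Fin d → ℝ)) (Measure (Fin d → ℝ)) := ⟨qm m n, hqm_meas m n⟩
      have hqK : IsMarkovKernel qK := ⟨hqm_prob m n⟩
      exact BNM.pred_eq ρ ptilde hptilde_meas hj n m hm (postK n) (hpc n) qK
        (BNM.compProd_of ρ (BNM.pre n) (empShift n m) (BNM.measurable_pre n) (BNM.measurable_empShift n m) qK (hqm m n))
    filter_upwards [hlim, hJ, hpp, hq] with ω k1 k2 k3 k4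
    refine BNM.convert_limsup p hp1 _ (fun n => hwn _ _) _ (BNM.Zp p δ d (ptilde ω))
      (BNM.Zp_nonneg p δ hp1 hpd hδ _) (fun n hn => ?_) (k2.trans k1)
    have := hpost_prob n (BNM.pre n ω)
    have h3 := BNM.pred_bound p hp1 n m hn hm (BNM.pre n ω) (post n (BNM.pre n ω)) (k3 n)
    have := BNM.empOf_prob n hn (BNM.pre n ω)
    rw [← k4 n] at h3
    simp_rw [BNM.Nm_eq] at h3
    have e := hiid' (empOf n (BNM.pre n ω)) this
    have e' : iid (empOf n (BNM.pre n ω)) = Measure.infinitePi fun _ : ℕ => empOf n (BNM.pre n ω) := e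
    rw [← e'] at h3
    exact h3

end
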